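/- arXiv:1109.6428 — 5 statements merged into one kernel-verified Lean document; each statement's English description precedes it below -/
import Mathlib

section
/- Let p be a prime, U an open subset of ℚ_p^d, and let (ℛ, N, s) be a regular system in U. Let Ψ̃ : ℝ₊ → ℝ₊ be a non-increasing function such that the sum Σ_{k=1}^∞ k^{d-s-1} Ψ̃(k)^{d-s} diverges. Then for almost every point x ∈ U the inequality dist(x, R) < Ψ̃(N(R)) has infinitely many solutions R ∈ ℛ. -/
/-!
Write `e = d - s > 0` and `Q = p²`. A Cauchy-type condensation
(`summable_of_summable_condensed`) turns the divergence hypothesis into the divergence of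
`∑ (Qᵏ Ψ(Qᵏ))ᵉ`, and it survives replacing `Ψ(Qᵏ)` by `γ k = min (Ψ(Qᵏ)) (Q⁻ᵏ / 4)`
(`not_summable_truncated`). Put `a k = (Qᵏ γ k)ᵉ`.

Fix a ball `B ⊆ U`. For all large `k` the regular system at scale `T = Qᵏ` gives a set `E k ⊆ B`,
the union of the `γ k`-neighbourhoods of the resonant sets cut down to their disjoint balls, with
`μ(E k) ≥ K₁ K₂ μ(B) a k`. For `k < l`, counting the balls of level `l` that meet a piece of level
`k` by means of the upper bound of the regular system gives
`μ(E k ∩ E l) ≤ C μ(B) (a k + q^(l-k)) a l` with `q = Q^(-e) < 1`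
(`Level.measure_approx_inter_le`). Since `∑ a k = ∞`, the Chung–Erdős inequality shows that
`limsup E k` fills a proportion `κ > 0` of `B`, where `κ` does not depend on `B`
(`measure_limsup_lower_bound`, `exists_proportion`). Points of `limsup E k` have infinitely many
solutions, because the heights `N` used at level `k` are at least `lam (Qᵏ) → ∞` and at most `Qᵏ`,
and `Ψ` is non-increasing.

Hence the exceptional set of `U` has relative measure at most `1 - κ` in every ball of `U`. Haar
measure on `ℚ_p^d` is doubling (`isUnifLocDoublingMeasure_padic`), so Lebesgue's density theorem
applies and the exceptional set is null.
-/

open MeasureTheory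

/-- `(R, N, s)` is a regular system of resonant sets in `U` (Definition 7.1):
there are `K₁, K₂, K₃ > 0` and `λ : ℝ₊ → ℝ₊` with `λ(T) → ∞` such that for every ball
`B ⊆ U` and all sufficiently large `T` one can find indices `j 1, …, j t` with
`λ(T) ≤ N (j i) ≤ T` and disjoint balls `B_i` of radius `T⁻¹` with `2B_i ⊆ B`,
`t ≥ K₁ μ(B) T^d`, such that for all `0 < γ < T⁻¹`,
`K₂ γ^{d-s} T^{-s} ≤ μ(B(R_{j i}, γ) ∩ B_i)` and
`μ(B(R_{j i}, γ) ∩ 2B_i) ≤ K₃ γ^{d-s} T^{-s}`. -/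
def IsRegularSystem {X : Type*} [MetricSpace X] [MeasurableSpace X] (μ : MeasureTheory.Measure X)
    {ι' : Type*} (R : ι' → Set X) (N : ι' → ℝ) (s : ℝ) (d : ℕ) (U : Set X) : Prop :=
  ∃ K₁ K₂ K₃ : ℝ, 0 < K₁ ∧ 0 < K₂ ∧ 0 < K₃ ∧
    ∃ lam : ℝ → ℝ, Filter.Tendsto lam Filter.atTop Filter.atTop ∧
      ∀ (z : X) (r : ℝ), 0 < r → Metric.closedBall z r ⊆ U →
        ∃ T₀ : ℝ, ∀ T : ℝ, T₀ ≤ T →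
          ∃ (t : ℕ) (idx : Fin t → ι') (ctr : Fin t → X),
            K₁ * (μ (Metric.closedBall z r)).toReal * T ^ d ≤ (t : ℝ) ∧
            (∀ i, lam T ≤ N (idx i) ∧ N (idx i) ≤ T) ∧
            (∀ i, Metric.closedBall (ctr i) (2 * T⁻¹) ⊆ Metric.closedBall z r) ∧
            (Pairwise fun i i' =>
              Disjoint (Metric.closedBall (ctr i) T⁻¹) (Metric.closedBall (ctr i') T⁻¹)) ∧
            ∀ i (γ : ℝ), 0 < γ → γ < T⁻¹ →
              ENNReal.ofReal (K₂ * γ ^ ((d : ℝ) - s) * T ^ (-s)) ≤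
                  μ (Metric.thickening γ (R (idx i)) ∩ Metric.closedBall (ctr i) T⁻¹) ∧
                μ (Metric.thickening γ (R (idx i)) ∩ Metric.closedBall (ctr i) (2 * T⁻¹)) ≤
                  ENNReal.ofReal (K₃ * γ ^ ((d : ℝ) - s) * T ^ (-s))

/-! ### Second-moment lower bound for a limsup set -/

/-- The Chung–Erdős inequality for a finite family of sets of finite measure. With `V` the union,
the integral of the square of `∑ 1_{E k} - t 1_V` is a quadratic polynomial in `t` that takes only
non-negative values, so its discriminant is at most zero. -/
theorem chung_erdos {X : Type*} [MeasurableSpace X] (μ : Measure X) (F : Finset ℕ)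
    (E : ℕ → Set X) (hE : ∀ k, MeasurableSet (E k)) (hfin : ∀ k, μ (E k) ≠ ⊤) :
    (∑ k ∈ F, μ.real (E k)) ^ 2 ≤
      μ.real (⋃ k ∈ F, E k) * ∑ k ∈ F, ∑ l ∈ F, μ.real (E k ∩ E l) := by
  classical
  set V : Set X := ⋃ k ∈ F, E k with hV
  have hVm : MeasurableSet V := Finset.measurableSet_biUnion _ fun k _ => hE k
  have hVfin : μ V ≠ ⊤ :=
    ((measure_biUnion_finset_le F E).trans_lt
      (ENNReal.sum_lt_top.2 fun k _ => (hfin k).lt_top)).ne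
  have hIntegrable : ∀ A : Set X, MeasurableSet A → μ A ≠ ⊤ →
      Integrable (A.indicator (1 : X → ℝ)) μ := fun A hA hA' =>
    (integrable_indicator_iff hA).2 (by
      simpa [Pi.one_def] using integrableOn_const (C := (1 : ℝ)) hA')
  have hIE := fun k => hIntegrable (E k) (hE k) (hfin k)
  have hIEE : ∀ k l, Integrable ((E k ∩ E l).indicator (1 : X → ℝ)) μ := fun k l =>
    hIntegrable _ ((hE k).inter (hE l)) (measure_ne_top_of_subset Set.inter_subset_left (hfin k))
  have hIV := hIntegrable V hVm hVfin
  have key : ∀ t : ℝ, 0 ≤ μ.real V * (t * t) + (-2 * ∑ k ∈ F, μ.real (E k)) * t +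
      ∑ k ∈ F, ∑ l ∈ F, μ.real (E k ∩ E l) := by
    intro t
    have hpt : ∀ x, (∑ k ∈ F, (E k).indicator (1 : X → ℝ) x - t * V.indicator (1 : X → ℝ) x) ^ 2 =
        (∑ k ∈ F, ∑ l ∈ F, (E k ∩ E l).indicator (1 : X → ℝ) x) -
          2 * t * (∑ k ∈ F, (E k).indicator (1 : X → ℝ) x) +
          t * t * V.indicator (1 : X → ℝ) x := by
      intro x
      have h1 : ∀ k l, (E k ∩ E l).indicator (1 : X → ℝ) x =
          (E k).indicator (1 : X → ℝ) x * (E l).indicator (1 : X → ℝ) x := fun k l => by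
        rw [Set.inter_indicator_one]; rfl
      simp_rw [h1, ← Finset.mul_sum, ← Finset.sum_mul]
      by_cases hx : x ∈ V
      · simp only [Set.indicator_of_mem hx, Pi.one_apply]; ring
      · have : ∀ k ∈ F, (E k).indicator (1 : X → ℝ) x = 0 := fun k hk =>
          Set.indicator_of_notMem (fun h => hx (Set.mem_biUnion hk h)) _
        rw [Finset.sum_eq_zero this]
        simp only [Set.indicator_of_notMem hx]; ring
    have h0 : 0 ≤ ∫ x, (∑ k ∈ F, (E k).indicator (1 : X → ℝ) x -
        t * V.indicator (1 : X → ℝ) x) ^ 2 ∂μ := integral_nonneg fun x => sq_nonneg _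
    simp_rw [hpt] at h0
    have i1 : Integrable (fun x => ∑ k ∈ F, ∑ l ∈ F, (E k ∩ E l).indicator (1 : X → ℝ) x) μ :=
      integrable_finsetSum _ fun k _ => integrable_finsetSum _ fun l _ => hIEE k l
    have i2 : Integrable (fun x => ∑ k ∈ F, (E k).indicator (1 : X → ℝ) x) μ :=
      integrable_finsetSum _ fun k _ => hIE k
    have i3 : Integrable (fun x => (∑ k ∈ F, ∑ l ∈ F, (E k ∩ E l).indicator (1 : X → ℝ) x) -
        2 * t * ∑ k ∈ F, (E k).indicator (1 : X → ℝ) x) μ := i1.sub (i2.const_mul _)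
    rw [integral_add i3 (hIV.const_mul _),
      integral_sub i1 (i2.const_mul _), integral_const_mul, integral_const_mul,
      integral_finsetSum _ (fun k _ => hIE k), integral_finsetSum _ (fun k _ =>
        integrable_finsetSum _ fun l _ => hIEE k l), integral_indicator_one hVm] at h0
    simp_rw [integral_indicator_one (hE _)] at h0
    have : ∀ k ∈ F, ∫ x, ∑ l ∈ F, (E k ∩ E l).indicator (1 : X → ℝ) x ∂μ =
        ∑ l ∈ F, μ.real (E k ∩ E l) := fun k _ => by
      rw [integral_finsetSum _ (fun l _ => hIEE k l)]
      simp_rw [integral_indicator_one ((hE k).inter (hE _))]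
    rw [Finset.sum_congr rfl this] at h0
    linarith
  have := discrim_le_zero key
  rw [discrim] at this
  nlinarith

theorem sum_geometric_filter_le (F : Finset ℕ) (q : ℝ) (hq0 : 0 ≤ q) (hq1 : q < 1) (l : ℕ) :
    ∑ k ∈ F, (if k ≤ l then q ^ (l - k) else 0) ≤ (1 - q)⁻¹ := by
  rw [← Finset.sum_filter]
  have hinj : Set.InjOn (fun k => l - k) (F.filter (· ≤ l) : Finset ℕ) := by
    intro a ha b hb h
    simp at ha hb h
    omega
  rw [← Finset.sum_image (f := fun j => q ^ j) hinj, ← tsum_geometric_of_lt_one hq0 hq1]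
  exact (summable_geometric_of_lt_one hq0 hq1).sum_le_tsum _ fun j _ => pow_nonneg hq0 j

/-- A quantitative divergence Borel–Cantelli lemma: if `μ(E k)` is at least of order `a k`, with
`∑ a k = ∞`, and the sets are quasi-independent up to a geometrically decaying error, then their
limsup set has measure at least a constant multiple of `m`. -/
theorem measure_limsup_lower_bound {X : Type*} [MeasurableSpace X] (μ : Measure X)
    (B : Set X) (hB : μ B ≠ ⊤) (E : ℕ → Set X) (hE : ∀ k, MeasurableSet (E k))
    (hEB : ∀ k, E k ⊆ B) (a : ℕ → ℝ) (ha : ∀ k, 0 ≤ a k) (hdiv : ¬ Summable a)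
    (c C q m : ℝ) (hc : 0 < c) (hC : 0 < C) (hq0 : 0 ≤ q) (hq1 : q < 1) (hm : 0 < m)
    (hlow : ∀ k, c * m * a k ≤ μ.real (E k))
    (hpair : ∀ k l, k ≤ l → μ.real (E k ∩ E l) ≤ C * m * ((a k + q ^ (l - k)) * a l)) :
    c ^ 2 / (C * (1 + 2 * (1 - q)⁻¹)) * m ≤ μ.real (⋂ n : ℕ, ⋃ k ∈ Set.Ici n, E k) := by
  have hfin : ∀ k, μ (E k) ≠ ⊤ := fun k => measure_ne_top_of_subset (hEB k) hB
  have hQ : 0 < (1 - q)⁻¹ := inv_pos.2 (by linarith)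
  set G : ℕ → Set X := fun n => ⋃ k ∈ Set.Ici n, E k with hG
  have hGB : ∀ n, G n ⊆ B := fun n => Set.iUnion₂_subset fun k _ => hEB k
  have hGm : ∀ n, MeasurableSet (G n) := fun n =>
    MeasurableSet.biUnion (Set.to_countable _) fun k _ => hE k
  have hGfin : ∀ n, μ (G n) ≠ ⊤ := fun n => measure_ne_top_of_subset (hGB n) hB
  have hanti : Antitone G := fun n n' h => Set.biUnion_subset_biUnion_left (Set.Ici_subset_Ici.2 h)
  have hlim := tendsto_measure_iInter_atTop (μ := μ) (fun n => (hGm n).nullMeasurableSet) hanti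
    ⟨0, hGfin 0⟩
  have hlim' : Filter.Tendsto (fun n => μ.real (G n)) Filter.atTop (nhds (μ.real (⋂ n, G n))) :=
    (ENNReal.tendsto_toReal
      (measure_ne_top_of_subset ((Set.iInter_subset _ 0).trans (hGB 0)) hB)).comp hlim
  refine ge_of_tendsto' hlim' fun n => ?_
  -- a finite block of indices beyond `n` on which the weights sum to at least one
  obtain ⟨M, hM⟩ : ∃ M, 1 ≤ ∑ k ∈ Finset.range M, a (k + n) := by
    by_contra! h
    exact hdiv ((summable_nat_add_iff n).1
      (summable_of_sum_range_le (fun k => ha _) fun M => (h M).le))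
  set F : Finset ℕ := (Finset.range M).map (addRightEmbedding n) with hF
  set S : ℝ := ∑ k ∈ F, a k with hS
  have hS1 : 1 ≤ S := by simpa [hS, hF] using hM
  have hsub : (⋃ k ∈ F, E k) ⊆ G n := by
    refine Set.iUnion₂_subset fun k hk => ?_
    obtain ⟨j, -, rfl⟩ := Finset.mem_map.1 hk
    exact Set.subset_biUnion_of_mem (u := E) (show j + n ∈ Set.Ici n from Nat.le_add_left _ _)
  refine le_trans ?_ (measureReal_mono hsub (hGfin n))
  have hCE := chung_erdos μ F E hE hfin
  have h1 : c * m * S ≤ ∑ k ∈ F, μ.real (E k) := by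
    rw [hS, Finset.mul_sum]; exact Finset.sum_le_sum fun k _ => hlow k
  set g : ℕ → ℕ → ℝ := fun k l => if k ≤ l then q ^ (l - k) else 0 with hg
  have hg0 : ∀ k l, 0 ≤ g k l := fun k l => by
    simp only [hg]; split_ifs <;> positivity
  have hpair' : ∀ k l, μ.real (E k ∩ E l) ≤
      C * m * (a k * a l + g k l * a l + g l k * a k) := by
    intro k l
    rcases le_total k l with h | h
    · refine (hpair k l h).trans ?_
      have h1 : g k l = q ^ (l - k) := if_pos h
      have h2 := mul_nonneg (hg0 l k) (ha k)
      gcongr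
      rw [h1]; linarith
    · rw [Set.inter_comm]
      refine (hpair l k h).trans ?_
      have h1 : g l k = q ^ (k - l) := if_pos h
      have h2 := mul_nonneg (hg0 k l) (ha l)
      gcongr
      rw [h1]; linarith
  have h2 : ∑ k ∈ F, ∑ l ∈ F, μ.real (E k ∩ E l) ≤ C * m * ((1 + 2 * (1 - q)⁻¹) * S ^ 2) := by
    have e1 : ∑ k ∈ F, ∑ l ∈ F, g k l * a l ≤ (1 - q)⁻¹ * S := by
      rw [Finset.sum_comm, hS, Finset.mul_sum]
      refine Finset.sum_le_sum fun l _ => ?_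
      rw [← Finset.sum_mul]
      exact mul_le_mul_of_nonneg_right (sum_geometric_filter_le F q hq0 hq1 l) (ha l)
    have e2 : ∑ k ∈ F, ∑ l ∈ F, g l k * a k ≤ (1 - q)⁻¹ * S := by
      rw [Finset.sum_comm]; exact e1
    have e3 : ∑ k ∈ F, ∑ l ∈ F, a k * a l = S ^ 2 := by
      rw [sq, hS, Finset.sum_mul_sum]
    calc _ ≤ ∑ k ∈ F, ∑ l ∈ F, C * m * (a k * a l + g k l * a l + g l k * a k) :=
          Finset.sum_le_sum fun k _ => Finset.sum_le_sum fun l _ => hpair' k l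
      _ = C * m * (S ^ 2 + ∑ k ∈ F, ∑ l ∈ F, g k l * a l + ∑ k ∈ F, ∑ l ∈ F, g l k * a k) := by
          simp_rw [← Finset.mul_sum, Finset.sum_add_distrib, e3]
      _ ≤ _ := by
          gcongr
          nlinarith [mul_nonneg hQ.le (show 0 ≤ S * (S - 1) by nlinarith)]
  have hV0 : 0 ≤ μ.real (⋃ k ∈ F, E k) := measureReal_nonneg
  have h3 : (c * m * S) ^ 2 ≤ μ.real (⋃ k ∈ F, E k) * (C * m * ((1 + 2 * (1 - q)⁻¹) * S ^ 2)) :=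
    (pow_le_pow_left₀ (by positivity) h1 2).trans
      (hCE.trans (mul_le_mul_of_nonneg_left h2 hV0))
  rw [div_mul_eq_mul_div, div_le_iff₀ (by positivity)]
  have hpos : 0 < m * S ^ 2 := by positivity
  refine le_of_mul_le_mul_right ?_ hpos
  nlinarith [h3]

/-! ### Measures of balls in `ℚ_p^d` -/

/-- A `p`-adic ball of radius `p ^ M` about zero is covered by `p ^ j` balls of radius
`p ^ (M - j)`: rescale to `ℤ_p` and truncate the `p`-adic expansion. -/
theorem exists_scaled_appr (p : ℕ) [Fact p.Prime] (M : ℤ) (j : ℕ) (x : ℚ_[p])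
    (hx : ‖x‖ ≤ (p : ℝ) ^ M) :
    ∃ f : Fin (p ^ j), ‖x - (p : ℚ_[p]) ^ (-M) * (f : ℕ)‖ ≤ (p : ℝ) ^ (M - j) := by
  have hp : (0 : ℝ) < p := by exact_mod_cast (Fact.out : p.Prime).pos
  have hpQ : (p : ℚ_[p]) ≠ 0 := by exact_mod_cast (Fact.out : p.Prime).ne_zero
  have hu : ‖(p : ℚ_[p]) ^ M * x‖ ≤ 1 := by
    rw [norm_mul, Padic.norm_p_zpow, zpow_neg]
    rw [inv_mul_le_iff₀ (zpow_pos hp _)]; simpa using hx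
  set u : ℤ_[p] := ⟨(p : ℚ_[p]) ^ M * x, hu⟩ with hudef
  refine ⟨⟨u.appr j, PadicInt.appr_lt u j⟩, ?_⟩
  have h := (PadicInt.norm_le_pow_iff_mem_span_pow _ j).2 (PadicInt.appr_spec j u)
  have h2 : x - (p : ℚ_[p]) ^ (-M) * (u.appr j : ℕ) =
      (p : ℚ_[p]) ^ (-M) * ((u - (u.appr j : ℤ_[p]) : ℤ_[p]) : ℚ_[p]) := by
    push_cast
    rw [mul_sub, hudef]
    simp only
    rw [← mul_assoc, ← zpow_add₀ hpQ]; simp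
  have h3 : ‖((u - (u.appr j : ℤ_[p]) : ℤ_[p]) : ℚ_[p])‖ ≤ (p : ℝ) ^ (-(j : ℤ)) := by
    rw [← PadicInt.norm_def]; exact h
  simp only
  rw [h2, norm_mul, Padic.norm_p_zpow, neg_neg, sub_eq_add_neg M, zpow_add₀ hp.ne']
  gcongr

/-- A ball of radius `p ^ M` in `ℚ_p^d` is covered by `p ^ (j d)` translates of a ball of radius
`p ^ (M - j)`. Both the lower bound for ball measures and the doubling property rest on this. -/
theorem measure_closedBall_zpow_le (p : ℕ) [Fact p.Prime] (d : ℕ)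
    [MeasurableSpace (Fin d → ℚ_[p])] [BorelSpace (Fin d → ℚ_[p])]
    (μ : Measure (Fin d → ℚ_[p])) [μ.IsAddHaarMeasure] (M : ℤ) (j : ℕ)
    (x y : Fin d → ℚ_[p]) :
    μ (Metric.closedBall x ((p : ℝ) ^ M)) ≤
      (p : ENNReal) ^ (j * d) * μ (Metric.closedBall y ((p : ℝ) ^ (M - j))) := by
  have hp : (0 : ℝ) < p := by exact_mod_cast (Fact.out : p.Prime).pos
  have hcov : Metric.closedBall x ((p : ℝ) ^ M) ⊆ ⋃ f : Fin d → Fin (p ^ j),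
      Metric.closedBall (x + fun i => (p : ℚ_[p]) ^ (-M) * ((f i : ℕ) : ℚ_[p]))
        ((p : ℝ) ^ (M - j)) := by
    intro w hw
    rw [Metric.mem_closedBall, dist_eq_norm, pi_norm_le_iff_of_nonneg (by positivity)] at hw
    choose f hf using fun i => exists_scaled_appr p M j _ (hw i)
    refine Set.mem_iUnion.2 ⟨f, ?_⟩
    rw [Metric.mem_closedBall, dist_eq_norm, pi_norm_le_iff_of_nonneg (by positivity)]
    intro i
    simpa [sub_sub] using hf i
  refine (measure_mono hcov).trans ((measure_iUnion_fintype_le _ _).trans ?_)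
  simp_rw [Measure.addHaar_closedBall_center μ _]
  simp [pow_mul]

theorem pow_neg_le_measureReal_closedBall (p : ℕ) [Fact p.Prime] (d : ℕ)
    [MeasurableSpace (Fin d → ℚ_[p])] [BorelSpace (Fin d → ℚ_[p])]
    (μ : Measure (Fin d → ℚ_[p])) [μ.IsAddHaarMeasure]
    (hμ : μ {x : Fin d → ℚ_[p] | ∀ i, ‖x i‖ ≤ 1} = 1) (j : ℕ) (x : Fin d → ℚ_[p]) :
    (((p : ℝ) ^ j) ^ d)⁻¹ ≤ μ.real (Metric.closedBall x ((p : ℝ) ^ j)⁻¹) := by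
  have hp : (0 : ℝ) < p := by exact_mod_cast (Fact.out : p.Prime).pos
  have h := measure_closedBall_zpow_le p d μ 0 j 0 x
  have h1 : Metric.closedBall (0 : Fin d → ℚ_[p]) ((p : ℝ) ^ (0 : ℤ)) =
      {x : Fin d → ℚ_[p] | ∀ i, ‖x i‖ ≤ 1} := by
    ext w
    simp [pi_norm_le_iff_of_nonneg]
  rw [h1, hμ, zero_sub, zpow_neg, zpow_natCast] at h
  have hfin : μ (Metric.closedBall x ((p : ℝ) ^ j)⁻¹) ≠ ⊤ := measure_closedBall_lt_top.ne
  have h2 := ENNReal.toReal_mono (ENNReal.mul_ne_top (by finiteness) hfin) h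
  rw [ENNReal.toReal_mul] at h2
  simp only [ENNReal.toReal_one, ENNReal.toReal_pow, ENNReal.toReal_natCast] at h2
  rw [inv_le_iff_one_le_mul₀ (by positivity), mul_comm, ← pow_mul]
  exact h2

theorem isUnifLocDoublingMeasure_padic (p : ℕ) [Fact p.Prime] (d : ℕ)
    [MeasurableSpace (Fin d → ℚ_[p])] [BorelSpace (Fin d → ℚ_[p])]
    (μ : Measure (Fin d → ℚ_[p])) [μ.IsAddHaarMeasure] : IsUnifLocDoublingMeasure μ := by
  refine ⟨⟨(p : NNReal) ^ (2 * d), ?_⟩⟩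
  filter_upwards [self_mem_nhdsWithin] with ε hε x
  have hp1 : (1 : ℝ) < p := by exact_mod_cast (Fact.out : p.Prime).one_lt
  have hp2 : (2 : ℝ) ≤ p := by exact_mod_cast (Fact.out : p.Prime).two_le
  obtain ⟨k, hk1, hk2⟩ := exists_mem_Ico_zpow (Set.mem_Ioi.1 hε) hp1
  have hpk : (0 : ℝ) < (p : ℝ) ^ k := by positivity
  calc μ (Metric.closedBall x (2 * ε)) ≤ μ (Metric.closedBall x ((p : ℝ) ^ (k + 2))) := by
        refine measure_mono (Metric.closedBall_subset_closedBall ?_)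
        have : (p : ℝ) ^ (k + 2) = p * (p : ℝ) ^ (k + 1) := by
          rw [show k + 2 = 1 + (k + 1) by ring, zpow_add₀ (by positivity), zpow_one]
        rw [this]
        nlinarith [zpow_pos (show (0 : ℝ) < p by positivity) (k + 1)]
    _ ≤ (p : ENNReal) ^ (2 * d) * μ (Metric.closedBall x ((p : ℝ) ^ (k + 2 - (2 : ℕ)))) :=
        measure_closedBall_zpow_le p d μ (k + 2) 2 x x
    _ ≤ _ := by
        push_cast
        gcongr
        simpa using hk1

/-! ### Condensation of the divergent series -/

/-- Condensation along powers of `Q`. The terms `k ^ (e - 1) * Ψ k ^ e` need not be monotone when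
`e > 1`, so each block `[Q ^ k, Q ^ (k + 1))` is bounded directly, writing `n ^ (e - 1) = n ^ e / n`
and estimating numerator and denominator separately. -/
theorem summable_of_summable_condensed (Q : ℕ) (hQ : 2 ≤ Q) (e : ℝ) (he : 0 < e) (Ψ : ℝ → ℝ)
    (hpos : ∀ x : ℝ, 0 < x → 0 < Ψ x) (hdec : ∀ x y : ℝ, 0 < x → x ≤ y → Ψ y ≤ Ψ x)
    (h : Summable fun k : ℕ => ((Q : ℝ) ^ k * Ψ ((Q : ℝ) ^ k)) ^ e) :
    Summable fun k : ℕ => ((k : ℝ) + 1) ^ (e - 1) * Ψ ((k : ℝ) + 1) ^ e := by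
  have hQ0 : (0 : ℝ) < Q := by positivity
  set b : ℕ → ℝ := fun k => ((Q : ℝ) ^ k * Ψ ((Q : ℝ) ^ k)) ^ e with hb
  set g : ℕ → ℝ := fun n => (n : ℝ) ^ (e - 1) * Ψ n ^ e with hg
  have hb0 : ∀ k, 0 ≤ b k := fun k =>
    Real.rpow_nonneg (mul_nonneg (by positivity) (hpos _ (by positivity)).le) _
  have hg0 : ∀ n ≥ 1, 0 ≤ g n := fun n hn => by
    have : (0 : ℝ) < n := by exact_mod_cast hn
    exact mul_nonneg (by positivity) (Real.rpow_nonneg (hpos _ this).le _)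
  have hblock : ∀ k, ∑ n ∈ Finset.Ico (Q ^ k) (Q ^ (k + 1)), g n ≤ Q * (Q : ℝ) ^ e * b k := by
    intro k
    have hQk : (0 : ℝ) < (Q : ℝ) ^ k := by positivity
    have hΨk := hpos _ hQk
    have hterm : ∀ n ∈ Finset.Ico (Q ^ k) (Q ^ (k + 1)),
        g n ≤ ((Q : ℝ) ^ (k + 1)) ^ e / (Q : ℝ) ^ k * Ψ ((Q : ℝ) ^ k) ^ e := by
      intro n hn
      obtain ⟨h1, h2⟩ := Finset.mem_Ico.1 hn
      have h1' : (Q : ℝ) ^ k ≤ n := by exact_mod_cast h1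
      have h2' : (n : ℝ) ≤ (Q : ℝ) ^ (k + 1) := by exact_mod_cast h2.le
      have hn0 : (0 : ℝ) < n := hQk.trans_le h1'
      simp only [hg]
      rw [Real.rpow_sub_one hn0.ne']
      have := hdec _ _ hQk h1'
      have := (hpos _ hn0).le
      gcongr
    refine (Finset.sum_le_card_nsmul _ _ _ hterm).trans ?_
    rw [nsmul_eq_mul, Nat.card_Ico]
    have hc : ((Q ^ (k + 1) - Q ^ k : ℕ) : ℝ) ≤ (Q : ℝ) ^ (k + 1) := by
      exact_mod_cast Nat.sub_le _ _
    refine (mul_le_mul_of_nonneg_right hc (by positivity)).trans (le_of_eq ?_)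
    simp only [hb]
    rw [Real.mul_rpow hQk.le hΨk.le, pow_succ, Real.mul_rpow hQk.le hQ0.le]
    field_simp
  have hsum : ∀ K, ∑ n ∈ Finset.Ico 1 (Q ^ K), g n ≤
      Q * (Q : ℝ) ^ e * ∑ k ∈ Finset.range K, b k := by
    intro K
    induction K with
    | zero => simp
    | succ K ih =>
      rw [← Finset.sum_Ico_consecutive g (Nat.one_le_pow _ _ (by omega))
        (Nat.pow_le_pow_right (by omega) (Nat.le_succ K)), Finset.sum_range_succ, mul_add]
      exact add_le_add ih (hblock K)
  refine summable_of_sum_range_le (c := Q * (Q : ℝ) ^ e * ∑' k, b k) (fun k => ?_) fun n => ?_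
  · have := hg0 (k + 1) (by omega)
    simpa [hg] using this
  · have h1 : ∑ k ∈ Finset.range n, ((k : ℝ) + 1) ^ (e - 1) * Ψ ((k : ℝ) + 1) ^ e =
        ∑ k ∈ Finset.Ico 1 (n + 1), g k := by
      rw [Finset.sum_Ico_eq_sum_range]
      simp [hg, add_comm]
    rw [h1]
    calc _ ≤ ∑ k ∈ Finset.Ico 1 (Q ^ n), g k := by
          refine Finset.sum_le_sum_of_subset_of_nonneg
            (Finset.Ico_subset_Ico_right (Nat.lt_pow_self (by omega))) fun k hk _ => ?_
          exact hg0 k (Finset.mem_Ico.1 hk).1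
      _ ≤ _ := hsum n
      _ ≤ _ := by
          gcongr
          exact h.sum_le_tsum _ fun k _ => hb0 k

/-- The cap `1 / (4 Q ^ k)` on `Ψ` keeps the divergence: if the capped series converged, its terms
would eventually be smaller than `(1 / 4) ^ e`, so the cap would eventually be inactive. -/
theorem not_summable_truncated (Q : ℕ) (hQ : 2 ≤ Q) (e : ℝ) (he : 0 < e) (Ψ : ℝ → ℝ)
    (hpos : ∀ x : ℝ, 0 < x → 0 < Ψ x) (hdec : ∀ x y : ℝ, 0 < x → x ≤ y → Ψ y ≤ Ψ x)
    (h : ¬ Summable fun k : ℕ => ((k : ℝ) + 1) ^ (e - 1) * Ψ ((k : ℝ) + 1) ^ e) :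
    ¬ Summable fun k : ℕ =>
      ((Q : ℝ) ^ k * min (Ψ ((Q : ℝ) ^ k)) (((Q : ℝ) ^ k)⁻¹ / 4)) ^ e := by
  intro hs
  refine h (summable_of_summable_condensed Q hQ e he Ψ hpos hdec ?_)
  have hev := hs.tendsto_atTop_zero.eventually
    (gt_mem_nhds (show (0 : ℝ) < (1 / 4 : ℝ) ^ e by positivity))
  refine hs.congr_cofinite ?_
  rw [Nat.cofinite_eq_atTop]
  filter_upwards [hev] with k hk
  have hQk : (0 : ℝ) < (Q : ℝ) ^ k := by positivity
  rcases le_total (Ψ ((Q : ℝ) ^ k)) (((Q : ℝ) ^ k)⁻¹ / 4) with h1 | h1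
  · rw [min_eq_left h1]
  · rw [min_eq_right h1, ← mul_div_assoc, mul_inv_cancel₀ hQk.ne'] at hk
    exact absurd hk (lt_irrefl _)

/-! ### One level of a regular system, and the overlap of two levels -/

/-- The data that a regular system provides for a set `B` at a scale `T`: resonant sets
`R (idx i)` of height `N` between `lam T` and `T`, and disjoint balls of radius `T⁻¹`, with the
measure bounds expressed by real numbers. -/
structure Level {X : Type*} [MetricSpace X] [MeasurableSpace X] (μ : Measure X)
    {ι' : Type*} (R : ι' → Set X) (N : ι' → ℝ) (s : ℝ) (d : ℕ) (K₁ K₂ K₃ : ℝ) (lam : ℝ → ℝ)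
    (B : Set X) (T : ℝ) where
  t : ℕ
  idx : Fin t → ι'
  ctr : Fin t → X
  card_ge : K₁ * μ.real B * T ^ d ≤ t
  lam_le : ∀ i, lam T ≤ N (idx i)
  le_T : ∀ i, N (idx i) ≤ T
  subset : ∀ i, Metric.closedBall (ctr i) (2 * T⁻¹) ⊆ B
  disj : Pairwise fun i i' =>
    Disjoint (Metric.closedBall (ctr i) T⁻¹) (Metric.closedBall (ctr i') T⁻¹)
  lower : ∀ i (γ : ℝ), 0 < γ → γ < T⁻¹ → K₂ * γ ^ ((d : ℝ) - s) * T ^ (-s) ≤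
    μ.real (Metric.thickening γ (R (idx i)) ∩ Metric.closedBall (ctr i) T⁻¹)
  upper : ∀ i (γ : ℝ), 0 < γ → γ < T⁻¹ →
    μ.real (Metric.thickening γ (R (idx i)) ∩ Metric.closedBall (ctr i) (2 * T⁻¹)) ≤
      K₃ * γ ^ ((d : ℝ) - s) * T ^ (-s)

namespace Level

variable {X : Type*} [MetricSpace X] [MeasurableSpace X] {μ : Measure X}
  {ι' : Type*} {R : ι' → Set X} {N : ι' → ℝ} {s : ℝ} {d : ℕ} {K₁ K₂ K₃ : ℝ} {lam : ℝ → ℝ}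
  {B : Set X} {T T' : ℝ}

/-- The part of the `γ`-neighbourhood of the `i`-th resonant set lying in the `i`-th ball. -/
def piece (L : Level μ R N s d K₁ K₂ K₃ lam B T) (γ : ℝ) (i : Fin L.t) : Set X :=
  Metric.thickening γ (R (L.idx i)) ∩ Metric.closedBall (L.ctr i) T⁻¹

/-- The union of the pieces: points of `B` that are `γ`-close to a resonant set of the level. -/
def approx (L : Level μ R N s d K₁ K₂ K₃ lam B T) (γ : ℝ) : Set X := ⋃ i, L.piece γ i

theorem closedBall_subset (L : Level μ R N s d K₁ K₂ K₃ lam B T) (hT : 0 < T) (i : Fin L.t) :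
    Metric.closedBall (L.ctr i) T⁻¹ ⊆ B :=
  (Metric.closedBall_subset_closedBall (by have := inv_pos.2 hT; linarith)).trans (L.subset i)

theorem approx_subset (L : Level μ R N s d K₁ K₂ K₃ lam B T) (hT : 0 < T) (γ : ℝ) :
    L.approx γ ⊆ B :=
  Set.iUnion_subset fun i => Set.inter_subset_right.trans (L.closedBall_subset hT i)

theorem measurableSet_piece [BorelSpace X] (L : Level μ R N s d K₁ K₂ K₃ lam B T) (γ : ℝ)
    (i : Fin L.t) : MeasurableSet (L.piece γ i) :=
  Metric.isOpen_thickening.measurableSet.inter Metric.isClosed_closedBall.measurableSet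

theorem measurableSet_approx [BorelSpace X] (L : Level μ R N s d K₁ K₂ K₃ lam B T) (γ : ℝ) :
    MeasurableSet (L.approx γ) :=
  MeasurableSet.iUnion fun i => L.measurableSet_piece γ i

/-- A packing bound: disjoint balls of radius `T⁻¹` have measure at least `T⁻ᵈ` each, so those
contained in a set `A` number at most `μ(A) Tᵈ`. -/
theorem card_mul_le [BorelSpace X] (L : Level μ R N s d K₁ K₂ K₃ lam B T)
    (hv : ∀ x, (T ^ d)⁻¹ ≤ μ.real (Metric.closedBall x T⁻¹)) (J : Finset (Fin L.t)) (A : Set X)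
    (hA : μ A ≠ ⊤) (hJ : ∀ j ∈ J, Metric.closedBall (L.ctr j) T⁻¹ ⊆ A) :
    (J.card : ℝ) * (T ^ d)⁻¹ ≤ μ.real A := by
  calc (J.card : ℝ) * (T ^ d)⁻¹ = ∑ _j ∈ J, (T ^ d)⁻¹ := by simp
    _ ≤ ∑ j ∈ J, μ.real (Metric.closedBall (L.ctr j) T⁻¹) := Finset.sum_le_sum fun j _ => hv _
    _ = μ.real (⋃ j ∈ J, Metric.closedBall (L.ctr j) T⁻¹) :=
        (measureReal_biUnion_finset (fun i _ j _ hij => L.disj hij)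
          (fun j _ => Metric.isClosed_closedBall.measurableSet)
          (fun j hj => measure_ne_top_of_subset (hJ j hj) hA)).symm
    _ ≤ μ.real A := measureReal_mono (Set.iUnion₂_subset hJ) hA

theorem card_le [BorelSpace X] (L : Level μ R N s d K₁ K₂ K₃ lam B T) (hT : 0 < T)
    (hB : μ B ≠ ⊤) (hv : ∀ x, (T ^ d)⁻¹ ≤ μ.real (Metric.closedBall x T⁻¹)) :
    (L.t : ℝ) ≤ μ.real B * T ^ d := by
  have h := L.card_mul_le hv Finset.univ B hB (fun j _ => L.closedBall_subset hT j)
  rwa [Finset.card_fin, mul_inv_le_iff₀ (by positivity)] at h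

theorem measure_piece_le (L : Level μ R N s d K₁ K₂ K₃ lam B T) (hT : 0 < T)
    (hB : μ B ≠ ⊤) {γ : ℝ} (hγ : 0 < γ) (hγT : γ < T⁻¹) (i : Fin L.t) :
    μ.real (L.piece γ i) ≤ K₃ * γ ^ ((d : ℝ) - s) * T ^ (-s) :=
  (measureReal_mono (Set.inter_subset_inter_right _ (Metric.closedBall_subset_closedBall
    (by have := inv_pos.2 hT; linarith)))
    (measure_ne_top_of_subset (Set.inter_subset_right.trans (L.subset i)) hB)).trans
    (L.upper i γ hγ hγT)

theorem scale_identity (hT : 0 < T) {γ : ℝ} (hγ : 0 < γ) :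
    T ^ d * (γ ^ ((d : ℝ) - s) * T ^ (-s)) = (T * γ) ^ ((d : ℝ) - s) := by
  rw [Real.mul_rpow hT.le hγ.le, sub_eq_add_neg, Real.rpow_add hT, Real.rpow_natCast]
  ring

theorem le_measure_approx [BorelSpace X] (L : Level μ R N s d K₁ K₂ K₃ lam B T) (hT : 0 < T)
    (hB : μ B ≠ ⊤) (hK₂ : 0 < K₂) {γ : ℝ} (hγ : 0 < γ) (hγT : γ < T⁻¹) :
    K₁ * K₂ * μ.real B * (T * γ) ^ ((d : ℝ) - s) ≤ μ.real (L.approx γ) := by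
  have hdis : Pairwise (Function.onFun Disjoint (L.piece γ)) := fun i j hij =>
    (L.disj hij).mono Set.inter_subset_right Set.inter_subset_right
  rw [approx, measureReal_iUnion_fintype hdis (L.measurableSet_piece γ)
    (fun i => measure_ne_top_of_subset
      (Set.inter_subset_right.trans (L.closedBall_subset hT i)) hB)]
  calc K₁ * K₂ * μ.real B * (T * γ) ^ ((d : ℝ) - s)
      = (K₁ * μ.real B * T ^ d) * (K₂ * γ ^ ((d : ℝ) - s) * T ^ (-s)) := by
        rw [← scale_identity hT hγ]; ring
    _ ≤ L.t * (K₂ * γ ^ ((d : ℝ) - s) * T ^ (-s)) :=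
        mul_le_mul_of_nonneg_right L.card_ge (by positivity)
    _ = ∑ _i : Fin L.t, K₂ * γ ^ ((d : ℝ) - s) * T ^ (-s) := by simp
    _ ≤ _ := Finset.sum_le_sum fun i _ => L.lower i γ hγ hγT

theorem measure_approx_le [BorelSpace X] (L : Level μ R N s d K₁ K₂ K₃ lam B T) (hT : 0 < T)
    (hB : μ B ≠ ⊤) (hK₃ : 0 < K₃) (hv : ∀ x, (T ^ d)⁻¹ ≤ μ.real (Metric.closedBall x T⁻¹))
    {γ : ℝ} (hγ : 0 < γ) (hγT : γ < T⁻¹) :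
    μ.real (L.approx γ) ≤ K₃ * μ.real B * (T * γ) ^ ((d : ℝ) - s) := by
  calc μ.real (L.approx γ) ≤ ∑ i, μ.real (L.piece γ i) := measureReal_iUnion_fintype_le _
    _ ≤ ∑ _i : Fin L.t, K₃ * γ ^ ((d : ℝ) - s) * T ^ (-s) :=
        Finset.sum_le_sum fun i _ => L.measure_piece_le hT hB hγ hγT i
    _ = L.t * (K₃ * γ ^ ((d : ℝ) - s) * T ^ (-s)) := by simp
    _ ≤ (μ.real B * T ^ d) * (K₃ * γ ^ ((d : ℝ) - s) * T ^ (-s)) :=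
        mul_le_mul_of_nonneg_right (L.card_le hT hB hv) (by positivity)
    _ = _ := by rw [← scale_identity hT hγ]; ring

/-- The balls of the finer level that meet a piece of the coarser level lie in the
`(γ + 2/T')`-neighbourhood of the same resonant set, inside the doubled ball; the upper bound of
the regular system therefore limits their number. -/
theorem measure_piece_inter_le [BorelSpace X] (L : Level μ R N s d K₁ K₂ K₃ lam B T)
    (L' : Level μ R N s d K₁ K₂ K₃ lam B T') (hT : 0 < T) (hTT' : 4 * T ≤ T')
    (hB : μ B ≠ ⊤) (hK₃ : 0 < K₃)
    (hv' : ∀ x, (T' ^ d)⁻¹ ≤ μ.real (Metric.closedBall x T'⁻¹))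
    {γ γ' : ℝ} (hγ : 0 < γ) (hγT : γ ≤ T⁻¹ / 4) (hγ' : 0 < γ') (hγT' : γ' < T'⁻¹)
    (i : Fin L.t) :
    μ.real (L.piece γ i ∩ L'.approx γ') ≤
      K₃ * (γ + 2 * T'⁻¹) ^ ((d : ℝ) - s) * T ^ (-s) * (K₃ * (T' * γ') ^ ((d : ℝ) - s)) := by
  classical
  have hT' : 0 < T' := by linarith
  have hTi : 0 < T⁻¹ := inv_pos.2 hT
  have hTi' : 0 < T'⁻¹ := inv_pos.2 hT'
  have hinv : 4 * T'⁻¹ ≤ T⁻¹ := by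
    have := inv_anti₀ (by positivity) hTT'
    rw [mul_inv] at this
    linarith
  set J : Finset (Fin L'.t) :=
    Finset.univ.filter fun j => (L.piece γ i ∩ L'.piece γ' j).Nonempty with hJ
  have hsub : L.piece γ i ∩ L'.approx γ' ⊆ ⋃ j ∈ J, L'.piece γ' j := by
    rintro x ⟨hx, hx'⟩
    obtain ⟨j, hj⟩ := Set.mem_iUnion.1 hx'
    exact Set.mem_biUnion (by simpa [hJ] using ⟨x, hx, hj⟩) hj
  have hball : ∀ j ∈ J, Metric.closedBall (L'.ctr j) T'⁻¹ ⊆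
      Metric.thickening (γ + 2 * T'⁻¹) (R (L.idx i)) ∩
        Metric.closedBall (L.ctr i) (2 * T⁻¹) := by
    intro j hj y hy
    obtain ⟨x, ⟨hx1, hx2⟩, -, hx4⟩ : (L.piece γ i ∩ L'.piece γ' j).Nonempty := by
      simpa [hJ] using hj
    have hyx : dist y x ≤ 2 * T'⁻¹ := by
      have := dist_triangle_right y x (L'.ctr j)
      rw [Metric.mem_closedBall] at hy hx4
      linarith
    refine ⟨?_, ?_⟩
    · obtain ⟨w, hw, hxw⟩ := Metric.mem_thickening_iff.1 hx1
      refine Metric.mem_thickening_iff.2 ⟨w, hw, ?_⟩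
      linarith [dist_triangle y x w]
    · rw [Metric.mem_closedBall] at hx2 ⊢
      linarith [dist_triangle y x (L.ctr i)]
  have hcard := (L'.card_mul_le hv' J _
    (measure_ne_top_of_subset (Set.inter_subset_right.trans (L.subset i)) hB) hball).trans
    (L.upper i (γ + 2 * T'⁻¹) (by positivity) (by linarith))
  have hfin : μ (⋃ j ∈ J, L'.piece γ' j) ≠ ⊤ :=
    measure_ne_top_of_subset (Set.iUnion₂_subset fun j _ =>
      (Set.subset_iUnion (L'.piece γ') j).trans (L'.approx_subset hT' γ')) hB
  calc μ.real (L.piece γ i ∩ L'.approx γ') ≤ μ.real (⋃ j ∈ J, L'.piece γ' j) :=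
        measureReal_mono hsub hfin
    _ ≤ ∑ j ∈ J, μ.real (L'.piece γ' j) := measureReal_biUnion_finset_le _ _
    _ ≤ ∑ _j ∈ J, K₃ * γ' ^ ((d : ℝ) - s) * T' ^ (-s) :=
        Finset.sum_le_sum fun j _ => L'.measure_piece_le hT' hB hγ' hγT' j
    _ = (J.card * (T' ^ d)⁻¹) * (K₃ * (T' * γ') ^ ((d : ℝ) - s)) := by
        rw [← scale_identity hT' hγ', Finset.sum_const, nsmul_eq_mul]
        field_simp
    _ ≤ _ := mul_le_mul_of_nonneg_right hcard (by positivity)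

/-- Quasi-independence of two levels: summing `measure_piece_inter_le` over the pieces of the
coarser level and splitting `(x + 2 y) ^ e ≤ 4 ^ e (x ^ e + y ^ e)`. -/
theorem measure_approx_inter_le [BorelSpace X] (L : Level μ R N s d K₁ K₂ K₃ lam B T)
    (L' : Level μ R N s d K₁ K₂ K₃ lam B T') (hT : 0 < T) (hTT' : 4 * T ≤ T')
    (hB : μ B ≠ ⊤) (hK₃ : 0 < K₃) (hsd : s < d)
    (hv : ∀ x, (T ^ d)⁻¹ ≤ μ.real (Metric.closedBall x T⁻¹))
    (hv' : ∀ x, (T' ^ d)⁻¹ ≤ μ.real (Metric.closedBall x T'⁻¹))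
    {γ γ' : ℝ} (hγ : 0 < γ) (hγT : γ ≤ T⁻¹ / 4) (hγ' : 0 < γ') (hγT' : γ' < T'⁻¹) :
    μ.real (L.approx γ ∩ L'.approx γ') ≤
      K₃ ^ 2 * 4 ^ ((d : ℝ) - s) * μ.real B *
        (((T * γ) ^ ((d : ℝ) - s) + (T / T') ^ ((d : ℝ) - s)) * (T' * γ') ^ ((d : ℝ) - s)) := by
  have hT' : 0 < T' := by linarith
  have he : 0 < (d : ℝ) - s := by linarith
  set e : ℝ := (d : ℝ) - s with hedef
  have hδ : 0 < γ + 2 * T'⁻¹ := by positivity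
  have hsplit : (T * (γ + 2 * T'⁻¹)) ^ e ≤ 4 ^ e * ((T * γ) ^ e + (T / T') ^ e) := by
    have h0 : 0 ≤ T * γ := by positivity
    have h1 : 0 ≤ T / T' := by positivity
    have h2 : T * (γ + 2 * T'⁻¹) = T * γ + 2 * (T / T') := by rw [div_eq_mul_inv]; ring
    have h3 := Real.rpow_nonneg h0 e
    have h4 := Real.rpow_nonneg h1 e
    rw [h2]
    rcases le_total (T * γ) (T / T') with h | h
    · calc _ ≤ (4 * (T / T')) ^ e := Real.rpow_le_rpow (by positivity) (by linarith) he.le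
        _ = 4 ^ e * (T / T') ^ e := Real.mul_rpow (by norm_num) h1
        _ ≤ _ := by gcongr; linarith
    · calc _ ≤ (4 * (T * γ)) ^ e := Real.rpow_le_rpow (by positivity) (by linarith) he.le
        _ = 4 ^ e * (T * γ) ^ e := Real.mul_rpow (by norm_num) h0
        _ ≤ _ := by gcongr; linarith
  calc μ.real (L.approx γ ∩ L'.approx γ') = μ.real (⋃ i, L.piece γ i ∩ L'.approx γ') := by
        rw [← Set.iUnion_inter]; rfl
    _ ≤ ∑ i, μ.real (L.piece γ i ∩ L'.approx γ') := measureReal_iUnion_fintype_le _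
    _ ≤ ∑ _i : Fin L.t, K₃ * (γ + 2 * T'⁻¹) ^ e * T ^ (-s) * (K₃ * (T' * γ') ^ e) :=
        Finset.sum_le_sum fun i _ =>
          L.measure_piece_inter_le L' hT hTT' hB hK₃ hv' hγ hγT hγ' hγT' i
    _ = L.t * (K₃ * (γ + 2 * T'⁻¹) ^ e * T ^ (-s) * (K₃ * (T' * γ') ^ e)) := by simp
    _ ≤ (μ.real B * T ^ d) * (K₃ * (γ + 2 * T'⁻¹) ^ e * T ^ (-s) * (K₃ * (T' * γ') ^ e)) :=
        mul_le_mul_of_nonneg_right (L.card_le hT hB hv) (by positivity)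
    _ = K₃ ^ 2 * μ.real B * (T * (γ + 2 * T'⁻¹)) ^ e * (T' * γ') ^ e := by
        rw [← scale_identity hT hδ]; ring
    _ ≤ K₃ ^ 2 * μ.real B * (4 ^ e * ((T * γ) ^ e + (T / T') ^ e)) * (T' * γ') ^ e := by
        gcongr
    _ = _ := by ring

end Level

/-- A regular system provides a level at every large scale in every ball of `U`. -/
theorem IsRegularSystem.exists_level {X : Type*} [MetricSpace X] [ProperSpace X]
    [MeasurableSpace X] {μ : Measure X} [IsFiniteMeasureOnCompacts μ]
    {ι' : Type*} {R : ι' → Set X} {N : ι' → ℝ} {s : ℝ} {d : ℕ} {U : Set X}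
    (h : IsRegularSystem μ R N s d U) :
    ∃ K₁ K₂ K₃ : ℝ, 0 < K₁ ∧ 0 < K₂ ∧ 0 < K₃ ∧
      ∃ lam : ℝ → ℝ, Filter.Tendsto lam Filter.atTop Filter.atTop ∧
        ∀ (z : X) (r : ℝ), 0 < r → Metric.closedBall z r ⊆ U → ∃ T₀ : ℝ, ∀ T : ℝ, T₀ ≤ T → 0 < T →
          Nonempty (Level μ R N s d K₁ K₂ K₃ lam (Metric.closedBall z r) T) := by
  obtain ⟨K₁, K₂, K₃, hK₁, hK₂, hK₃, lam, hlam, H⟩ := h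
  refine ⟨K₁, K₂, K₃, hK₁, hK₂, hK₃, lam, hlam, fun z r hr hU => ?_⟩
  obtain ⟨T₀, hT₀⟩ := H z r hr hU
  refine ⟨T₀, fun T hT hTpos => ?_⟩
  obtain ⟨t, idx, ctr, h1, h2, h3, h4, h5⟩ := hT₀ T hT
  refine ⟨⟨t, idx, ctr, h1, fun i => (h2 i).1, fun i => (h2 i).2, h3, h4, fun i γ h0 hγ => ?_,
    fun i γ h0 hγ => ?_⟩⟩
  · refine (ENNReal.ofReal_le_iff_le_toReal ?_).1 (h5 i γ h0 hγ).1
    exact measure_ne_top_of_subset Set.inter_subset_right measure_closedBall_lt_top.ne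
  · exact ENNReal.toReal_le_of_le_ofReal (by positivity) (h5 i γ h0 hγ).2

/-! ### From positive proportion to full measure -/

/-- In every ball of `U` the set of points with infinitely many good approximations contains a
measurable set filling a fixed proportion of the ball. -/
theorem exists_proportion
    (p : ℕ) [Fact p.Prime] (d : ℕ)
    [MeasurableSpace (Fin d → ℚ_[p])] [BorelSpace (Fin d → ℚ_[p])]
    (μ : Measure (Fin d → ℚ_[p])) [μ.IsAddHaarMeasure]
    (hμ : μ {x : Fin d → ℚ_[p] | ∀ i, ‖x i‖ ≤ 1} = 1)
    (U : Set (Fin d → ℚ_[p]))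
    {ι' : Type} (R : ι' → Set (Fin d → ℚ_[p])) (N : ι' → ℝ) (s : ℝ) (hsd : s < d)
    (hreg : IsRegularSystem μ R N s d U)
    (Ψ : ℝ → ℝ) (hΨpos : ∀ x : ℝ, 0 < x → 0 < Ψ x)
    (hΨdec : ∀ x y : ℝ, 0 < x → x ≤ y → Ψ y ≤ Ψ x)
    (hdiv : ¬ Summable fun k : ℕ =>
      ((k : ℝ) + 1) ^ ((d : ℝ) - s - 1) * Ψ ((k : ℝ) + 1) ^ ((d : ℝ) - s)) :
    ∃ κ : ℝ, 0 < κ ∧ ∀ (z : Fin d → ℚ_[p]) (r : ℝ), 0 < r → Metric.closedBall z r ⊆ U →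
      ∃ A : Set (Fin d → ℚ_[p]), MeasurableSet A ∧ A ⊆ Metric.closedBall z r ∧
        (∀ x ∈ A, {i : ι' | Metric.infDist x (R i) < Ψ (N i)}.Infinite) ∧
        κ * μ.real (Metric.closedBall z r) ≤ μ.real A := by
  obtain ⟨K₁, K₂, K₃, hK₁, hK₂, hK₃, lam, hlam, H⟩ := hreg.exists_level
  have he : 0 < (d : ℝ) - s := by linarith
  have hp2 : 2 ≤ p := (Fact.out : p.Prime).two_le
  -- the scales are the powers of `p ^ 2`, so that consecutive ones differ by a factor `≥ 4`
  have hQ4' : 4 ≤ p ^ 2 := by nlinarith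
  have hball : ∀ (k : ℕ) (x : Fin d → ℚ_[p]), ((((p ^ 2 : ℕ) : ℝ) ^ k) ^ d)⁻¹ ≤
      μ.real (Metric.closedBall x (((p ^ 2 : ℕ) : ℝ) ^ k)⁻¹) := by
    intro k x
    have := pow_neg_le_measureReal_closedBall p d μ hμ (2 * k) x
    rwa [pow_mul, ← Nat.cast_pow] at this
  have hns := not_summable_truncated (p ^ 2) (by omega) ((d : ℝ) - s) he Ψ hΨpos hΨdec hdiv
  have hQ4 : (4 : ℝ) ≤ ((p ^ 2 : ℕ) : ℝ) := by exact_mod_cast hQ4'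
  set Q : ℝ := ((p ^ 2 : ℕ) : ℝ) with hQ
  have hQ0 : 0 < Q := by linarith
  set γ : ℕ → ℝ := fun k => min (Ψ (Q ^ k)) ((Q ^ k)⁻¹ / 4) with hγ
  have hγpos : ∀ k, 0 < γ k := fun k => lt_min (hΨpos _ (by positivity)) (by positivity)
  have hγle : ∀ k, γ k ≤ (Q ^ k)⁻¹ / 4 := fun k => min_le_right _ _
  have hγlt : ∀ k, γ k < (Q ^ k)⁻¹ := fun k => (hγle k).trans_lt
    (by have : 0 < (Q ^ k)⁻¹ := by positivity
        linarith)
  set q : ℝ := Q⁻¹ ^ ((d : ℝ) - s) with hq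
  have hq0 : 0 ≤ q := by positivity
  have hq1 : q < 1 := Real.rpow_lt_one (by positivity) (inv_lt_one_of_one_lt₀ (by linarith)) he
  have h1q : 0 < (1 - q)⁻¹ := inv_pos.2 (by linarith)
  set C : ℝ := K₃ + K₃ ^ 2 * 4 ^ ((d : ℝ) - s) with hC
  have hC0 : 0 < C := by positivity
  refine ⟨(K₁ * K₂) ^ 2 / (C * (1 + 2 * (1 - q)⁻¹)), by positivity, fun z r hr hU => ?_⟩
  set B := Metric.closedBall z r with hBdef
  have hB : μ B ≠ ⊤ := measure_closedBall_lt_top.ne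
  have hm : 0 < μ.real B := ENNReal.toReal_pos (Metric.measure_closedBall_pos μ z hr).ne' hB
  obtain ⟨T₀, hT₀⟩ := H z r hr hU
  have hQlim : Filter.Tendsto (fun k : ℕ => Q ^ k) Filter.atTop Filter.atTop :=
    tendsto_pow_atTop_atTop_of_one_lt (by linarith)
  obtain ⟨k₀, hk₀⟩ := Filter.eventually_atTop.1
    ((hQlim.eventually_ge_atTop T₀).and ((hlam.comp hQlim).eventually_gt_atTop 0))
  have hLev : ∀ k, Nonempty (Level μ R N s d K₁ K₂ K₃ lam B (Q ^ (k + k₀))) := fun k =>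
    hT₀ _ (hk₀ (k + k₀) (by omega)).1 (by positivity)
  let L := fun k => (hLev k).some
  set E : ℕ → Set (Fin d → ℚ_[p]) := fun k => (L k).approx (γ (k + k₀)) with hE
  have hEm : ∀ k, MeasurableSet (E k) := fun k => (L k).measurableSet_approx _
  have hEB : ∀ k, E k ⊆ B := fun k => (L k).approx_subset (by positivity) _
  set a : ℕ → ℝ := fun k => (Q ^ (k + k₀) * γ (k + k₀)) ^ ((d : ℝ) - s) with ha
  have ha0 : ∀ k, 0 ≤ a k := fun k =>
    Real.rpow_nonneg (mul_nonneg (by positivity) (hγpos _).le) _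
  have hans : ¬ Summable a := fun h => hns
    ((summable_nat_add_iff (f := fun k => (Q ^ k * γ k) ^ ((d : ℝ) - s)) k₀).1 h)
  refine ⟨⋂ n : ℕ, ⋃ k ∈ Set.Ici n, E k, ?_, ?_, ?_, ?_⟩
  · exact MeasurableSet.iInter fun n =>
      MeasurableSet.biUnion (Set.to_countable _) fun k _ => hEm k
  · exact (Set.iInter_subset _ 0).trans (Set.iUnion₂_subset fun k _ => hEB k)
  · intro x hx hfin
    -- finitely many solutions would have bounded heights, whereas the levels have `N ≥ lam → ∞`
    obtain ⟨M, hM⟩ := (hfin.image N).bddAbove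
    obtain ⟨n, hn⟩ := Filter.eventually_atTop.1 ((hlam.comp hQlim).eventually_gt_atTop M)
    obtain ⟨k, hk, hxk⟩ := Set.mem_iUnion₂.1 (Set.mem_iInter.1 hx n)
    obtain ⟨i, hi, -⟩ := Set.mem_iUnion.1 hxk
    have hN1 := (L k).lam_le i
    have hN2 := (L k).le_T i
    have hlam0 : 0 < lam (Q ^ (k + k₀)) := (hk₀ (k + k₀) (by omega)).2
    have hlamM : M < lam (Q ^ (k + k₀)) := hn (k + k₀) (le_trans hk (by omega))
    obtain ⟨w, hw, hxw⟩ := Metric.mem_thickening_iff.1 hi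
    have hsol : (L k).idx i ∈ {i : ι' | Metric.infDist x (R i) < Ψ (N i)} := by
      refine (Metric.infDist_le_dist_of_mem hw).trans_lt (hxw.trans_le ?_)
      exact (min_le_left _ _).trans (hΨdec _ _ (by linarith) hN2)
    have := hM (Set.mem_image_of_mem N hsol)
    linarith
  · refine measure_limsup_lower_bound μ B hB E hEm hEB a ha0 hans (K₁ * K₂) C q (μ.real B)
      (by positivity) hC0 hq0 hq1 hm (fun k => ?_) (fun k l hkl => ?_)
    · exact (L k).le_measure_approx (by positivity) hB hK₂ (hγpos _) (hγlt _)
    · have h4 : (0 : ℝ) < 4 ^ ((d : ℝ) - s) := by positivity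
      have hal := ha0 l
      have hak := ha0 k
      rcases hkl.eq_or_lt with rfl | hlt
      · rw [Set.inter_self, Nat.sub_self, pow_zero]
        refine ((L k).measure_approx_le (by positivity) hB hK₃ (hball _)
          (hγpos _) (hγlt _)).trans ?_
        have h1 : K₃ ≤ C := by rw [hC]; linarith [mul_pos (pow_pos hK₃ 2) h4]
        have h2 : a k ≤ (a k + 1) * a k := by nlinarith
        calc K₃ * μ.real B * a k ≤ C * μ.real B * a k := by gcongr
          _ ≤ _ := by gcongr
      · have hTT' : 4 * Q ^ (k + k₀) ≤ Q ^ (l + k₀) := by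
          calc 4 * Q ^ (k + k₀) ≤ Q * Q ^ (k + k₀) := by gcongr
            _ = Q ^ (k + k₀ + 1) := by ring
            _ ≤ _ := pow_le_pow_right₀ (by linarith) (by omega)
        refine ((L k).measure_approx_inter_le (L l) (by positivity) hTT' hB hK₃ hsd (hball _)
          (hball _) (hγpos _) (hγle _) (hγpos _) (hγlt _)).trans ?_
        have h1 : K₃ ^ 2 * 4 ^ ((d : ℝ) - s) ≤ C := by rw [hC]; linarith
        have h2 : (Q ^ (k + k₀) / Q ^ (l + k₀)) ^ ((d : ℝ) - s) = q ^ (l - k) := by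
          have : Q ^ (k + k₀) / Q ^ (l + k₀) = Q⁻¹ ^ (l - k) := by
            rw [inv_pow, div_eq_iff (by positivity), show l + k₀ = (l - k) + (k + k₀) by omega,
              pow_add Q (l - k)]
            field_simp
          rw [this, hq, ← Real.rpow_natCast, ← Real.rpow_natCast, ← Real.rpow_mul (by positivity),
            ← Real.rpow_mul (by positivity), mul_comm]
        rw [h2]
        have hqk : 0 ≤ q ^ (l - k) := by positivity
        exact mul_le_mul_of_nonneg_right (mul_le_mul_of_nonneg_right h1 hm.le)
          (mul_nonneg (add_nonneg hak hqk) hal)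

/-- **Theorem 7.4 (Beresnevich–Bernik–Kleinbock–Margulis, `p`-adic version).**
Let `U ⊆ ℚ_p^d` be open and `(R, N, s)` a regular system in `U`.  If `Ψ̃ : ℝ₊ → ℝ₊` is
non-increasing and `∑_{k≥1} k^{d-s-1} Ψ̃(k)^{d-s}` diverges, then for almost every
`x ∈ U` the inequality `dist(x, R_i) < Ψ̃(N_i)` has infinitely many solutions `i`. -/
theorem regular_system_divergence
    (p : ℕ) [Fact p.Prime] (d : ℕ)
    [MeasurableSpace (Fin d → ℚ_[p])] [BorelSpace (Fin d → ℚ_[p])]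
    (μ : Measure (Fin d → ℚ_[p])) [μ.IsAddHaarMeasure]
    (hμ : μ {x : Fin d → ℚ_[p] | ∀ i, ‖x i‖ ≤ 1} = 1)
    (U : Set (Fin d → ℚ_[p])) (hU : IsOpen U)
    {ι' : Type} (R : ι' → Set (Fin d → ℚ_[p])) (N : ι' → ℝ) (s : ℝ)
    (hs0 : 0 ≤ s) (hsd : s < d)
    (hreg : IsRegularSystem μ R N s d U)
    (Ψ : ℝ → ℝ) (hΨpos : ∀ x : ℝ, 0 < x → 0 < Ψ x)
    (hΨdec : ∀ x y : ℝ, 0 < x → x ≤ y → Ψ y ≤ Ψ x)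
    (hdiv : ¬ Summable fun k : ℕ =>
      ((k : ℝ) + 1) ^ ((d : ℝ) - s - 1) * Ψ ((k : ℝ) + 1) ^ ((d : ℝ) - s)) :
    ∀ᵐ x ∂μ, x ∈ U → {i : ι' | Metric.infDist x (R i) < Ψ (N i)}.Infinite := by
  obtain ⟨κ, hκ, H⟩ := exists_proportion p d μ hμ U R N s hsd hreg Ψ hΨpos hΨdec hdiv
  have := isUnifLocDoublingMeasure_padic p d μ
  set S : Set (Fin d → ℚ_[p]) :=
    {x | x ∈ U ∧ ¬ {i : ι' | Metric.infDist x (R i) < Ψ (N i)}.Infinite} with hS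
  -- the exceptional set has no density point in `U`
  have hdens := IsUnifLocDoublingMeasure.ae_tendsto_measure_inter_div μ S 1
  have hnot : ∀ᵐ x ∂μ.restrict S, x ∉ S := by
    filter_upwards [hdens] with x hx hxS
    have hδ : Filter.Tendsto (fun n : ℕ => 1 / ((n : ℝ) + 1)) Filter.atTop
        (nhdsWithin 0 (Set.Ioi 0)) :=
      tendsto_nhdsWithin_iff.2 ⟨tendsto_one_div_add_atTop_nhds_zero_nat,
        Filter.Eventually.of_forall fun n => by simp; positivity⟩
    have hlim := hx (fun _ : ℕ => x) (fun n => 1 / ((n : ℝ) + 1)) hδ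
      (Filter.Eventually.of_forall fun n => Metric.mem_closedBall_self (by positivity))
    obtain ⟨r, hr, hrU⟩ := Metric.nhds_basis_closedBall.mem_iff.1 (hU.mem_nhds hxS.1)
    have hsmall : ∀ᶠ n : ℕ in Filter.atTop, 1 / ((n : ℝ) + 1) < r :=
      tendsto_one_div_add_atTop_nhds_zero_nat.eventually (gt_mem_nhds hr)
    have hle : ∀ᶠ n : ℕ in Filter.atTop,
        μ (S ∩ Metric.closedBall x (1 / ((n : ℝ) + 1))) /
          μ (Metric.closedBall x (1 / ((n : ℝ) + 1))) ≤ ENNReal.ofReal (1 - κ) := by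
      filter_upwards [hsmall] with n hn
      set ρ : ℝ := 1 / ((n : ℝ) + 1) with hρ
      have hρ0 : 0 < ρ := by positivity
      obtain ⟨A, hAm, hAB, hAinf, hAκ⟩ := H x ρ hρ0
        ((Metric.closedBall_subset_closedBall hn.le).trans hrU)
      have hBfin : μ (Metric.closedBall x ρ) ≠ ⊤ := measure_closedBall_lt_top.ne
      have hSA : S ∩ Metric.closedBall x ρ ⊆ Metric.closedBall x ρ \ A := fun y hy =>
        ⟨hy.2, fun hyA => hy.1.2 (hAinf y hyA)⟩
      have h1 : μ.real (S ∩ Metric.closedBall x ρ) ≤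
          (1 - κ) * μ.real (Metric.closedBall x ρ) := by
        have h2 := measureReal_mono hSA (measure_ne_top_of_subset Set.sdiff_subset hBfin)
        rw [measureReal_sdiff hAB hAm hBfin] at h2
        linarith
      refine ENNReal.div_le_of_le_mul ?_
      have hSfin : μ (S ∩ Metric.closedBall x ρ) ≠ ⊤ :=
        measure_ne_top_of_subset Set.inter_subset_right hBfin
      rw [← ENNReal.ofReal_toReal hSfin, ← ENNReal.ofReal_toReal hBfin,
        ← ENNReal.ofReal_mul' ENNReal.toReal_nonneg]
      exact ENNReal.ofReal_le_ofReal h1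
    have h1 : (1 : ENNReal) ≤ ENNReal.ofReal (1 - κ) := le_of_tendsto hlim hle
    rw [ENNReal.one_le_ofReal] at h1
    linarith
  have hS0 : μ S = 0 := by
    have h1 : μ.restrict S S = 0 := by
      simpa [ae_iff] using hnot
    rwa [Measure.restrict_apply_self] at h1
  rw [ae_iff]
  refine measure_mono_null (fun x hx => ?_) hS0
  simpa [hS] using hx
end

section
/- Let p be a prime and let d, l be positive integers. There exists C = C_{d,l} > 0, independent of the polynomial, such that every polynomial P ∈ ℚ_p[x₁,…,x_d] of total degree at most l is (C, 1/(dl))-good on ℚ_p^d. -/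
/-!
The proof combines Lagrange interpolation in one variable with Fubini.

*One variable.* Let `q` have degree at most `l`, let `B` be a ball of radius `r`, and let `S ⊆ B` be
a set where `|q|` is small compared with `|q(x₀)|` for some `x₀ ∈ B`. If `S` held `l + 1` points at
mutual distance at least `r / p ^ m`, then interpolating `q` at these points would bound `|q(x₀)|`
by `p ^ (m l) · max_S |q|`. Hence, for a suitable `m`, the set `S` is covered by `l` balls
of radius `r / p ^ m`, each of measure at most `p ^ (-m) μ(B)` (`sublevel_one_dim`).

*Several variables.* To avoid real exponents, the estimate is stated with `ε = τ ^ (d l)`: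
`μ {x ∈ B : |f x| < τ ^ (d l) |f x₀|} ≤ d l p τ μ(B)` (`sublevel_pi`). It is proved by
induction on `d` for functions that are polynomial of degree at most `l` in each variable
separately, a class stable under freezing a coordinate. Freeze the first coordinate at that of
`x₀`; by induction the slices `y` with `|f(x₀ 0, y)| < τ ^ (d l) |f x₀|` have small measure, and on
every other slice the one-variable estimate applies with the remaining factor `τ ^ l`.

A point `x₀` at which `|P|` exceeds half of its supremum then gives goodness for the product measure,
and uniqueness of Haar measure transfers it to `μ`.
-/

open MeasureTheory

/-- `g` is `(C, α)`-good on `V`: for every open ball `B ⊆ V` and every `ε > 0`,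
`μ {x ∈ B : g(x) < ε · sup_B g} ≤ C ε^α μ B`. -/
def IsGood {X : Type*} [PseudoMetricSpace X] [MeasurableSpace X]
    (μ : MeasureTheory.Measure X) (C α : ℝ) (g : X → ℝ) (V : Set X) : Prop :=
  ∀ (z : X) (r : ℝ), 0 < r → Metric.ball z r ⊆ V → ∀ ε : ℝ, 0 < ε →
    μ {x ∈ Metric.ball z r | g x < ε * ⨆ y ∈ Metric.ball z r, g y} ≤
      ENNReal.ofReal (C * ε ^ α) * μ (Metric.ball z r)

open MeasureTheory

/-! ### Interpolation at separated points -/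

open Polynomial in
/-- Lagrange interpolation bound: the `l + 1` nodes lie in an ultrametric ball of radius `r` and are
`s`-separated. -/
lemma exists_node_norm_eval_le {K : Type*} [NormedField K] [IsUltrametricDist K] {l : ℕ}
    {q : K[X]} (hq : q.natDegree ≤ l) {z : K} {r s : ℝ} (hs : 0 < s)
    (T : Finset K) (hT : T.card = l + 1) (hTB : ∀ x ∈ T, x ∈ Metric.ball z r)
    (hsep : ∀ x ∈ T, ∀ y ∈ T, x ≠ y → s ≤ dist x y) {y : K} (hy : y ∈ Metric.ball z r) :
    ∃ x ∈ T, ‖q.eval y‖ ≤ ‖q.eval x‖ * (r / s) ^ l := by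
  classical
  have hne : T.Nonempty := by rw [← Finset.card_pos]; omega
  have hdeg : q.degree < T.card := by
    rw [hT]
    exact lt_of_le_of_lt q.degree_le_natDegree (by exact_mod_cast Nat.lt_succ_of_le hq)
  have h := Lagrange.eq_interpolate (v := id) (s := T) (Set.injOn_id _) hdeg
  have h2 : q.eval y = ∑ i ∈ T, q.eval i * ∏ j ∈ T.erase i, ((i - j)⁻¹ * (y - j)) := by
    conv_lhs => rw [h]
    rw [Lagrange.interpolate_apply, eval_finsetSum]
    refine Finset.sum_congr rfl fun i _ => ?_
    rw [Lagrange.basis, eval_mul, eval_C, eval_prod]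
    simp [Lagrange.basisDivisor]
  obtain ⟨i, hi, hle⟩ := IsUltrametricDist.exists_norm_finsetSum_le T
    (fun i => q.eval i * ∏ j ∈ T.erase i, ((i - j)⁻¹ * (y - j)))
  have hi := hi hne
  refine ⟨i, hi, ?_⟩
  rw [h2]
  refine hle.trans ?_
  rw [norm_mul, norm_prod]
  refine mul_le_mul_of_nonneg_left ?_ (norm_nonneg _)
  have hcard : (T.erase i).card = l := by rw [Finset.card_erase_of_mem hi, hT]; rfl
  rw [← hcard, ← Finset.prod_const]
  refine Finset.prod_le_prod (fun _ _ => norm_nonneg _) fun j hj => ?_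
  have hj' := Finset.mem_erase.1 hj
  rw [norm_mul, norm_inv, ← dist_eq_norm, ← dist_eq_norm, mul_comm, ← div_eq_mul_inv]
  have h3 : s ≤ dist i j := hsep i hi j hj'.2 hj'.1.symm
  have h4 : dist y j ≤ r := by
    refine (IsUltrametricDist.dist_triangle_max y z j).trans (max_le hy.le ?_)
    rw [dist_comm]
    exact (hTB j hj'.2).le
  exact div_le_div₀ (dist_nonneg.trans h4) h4 hs h3

/-- A set without `k` points at mutual distance at least `s` is covered by fewer than `k` balls of
radius `s`. -/
lemma exists_cover_of_no_separated {X : Type*} [PseudoMetricSpace X] (S : Set X) {s : ℝ} (hs : 0 < s) (k : ℕ)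
    (h : ¬ ∃ T : Finset X, ↑T ⊆ S ∧ T.card = k ∧ ∀ x ∈ T, ∀ y ∈ T, x ≠ y → s ≤ dist x y) :
    ∃ T : Finset X, T.card < k ∧ S ⊆ ⋃ x ∈ T, Metric.ball x s := by
  classical
  induction k with
  | zero => exact absurd ⟨∅, by simp, rfl, by simp⟩ h
  | succ k ih =>
    by_cases h' : ∃ T : Finset X, ↑T ⊆ S ∧ T.card = k ∧
        ∀ x ∈ T, ∀ y ∈ T, x ≠ y → s ≤ dist x y
    · obtain ⟨T, hTS, hTk, hT⟩ := h'
      refine ⟨T, by omega, fun x hx => ?_⟩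
      by_contra hcon
      simp only [Set.mem_iUnion, Metric.mem_ball, not_exists, not_lt] at hcon
      have hxT : x ∉ T := fun hxT => by
        have := hcon x hxT
        rw [dist_self] at this
        linarith
      refine h ⟨insert x T, ?_, by rw [Finset.card_insert_of_notMem hxT, hTk], ?_⟩
      · rw [Finset.coe_insert]
        exact Set.insert_subset hx hTS
      · intro a ha b hb hab
        rcases Finset.mem_insert.1 ha with rfl | ha <;> rcases Finset.mem_insert.1 hb with rfl | hb
        · exact absurd rfl hab
        · exact hcon b hb
        · rw [dist_comm]
          exact hcon a (by assumption)
        · exact hT a ha b hb hab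
    · obtain ⟨T, h1, h2⟩ := ih h'
      exact ⟨T, by omega, h2⟩

/-! ### The one-variable estimate over ℚ_p -/

section OneVariable

variable {p : ℕ} [hp : Fact p.Prime] [MeasurableSpace ℚ_[p]] [BorelSpace ℚ_[p]]
  (ν : Measure ℚ_[p]) [ν.IsAddHaarMeasure]

/-- The ball of radius `r` contains `p` disjoint translates `i u + B(0, r / p)`, where
`r / p ≤ ‖u‖ < r`. -/
lemma mul_measure_ball_div_le {r : ℝ} (hr : 0 < r) :
    (p : ENNReal) * ν (Metric.ball 0 (r / p)) ≤ ν (Metric.ball 0 r) := by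
  have hp1 : (1 : ℝ) < p := by exact_mod_cast hp.out.one_lt
  have hp0 : (0 : ℝ) < p := by linarith
  obtain ⟨k, hk1, hk2⟩ := exists_mem_Ioc_zpow hr hp1
  obtain ⟨u, hu⟩ : ∃ u : ℚ_[p], ‖u‖ = (p : ℝ) ^ k :=
    ⟨(p : ℚ_[p]) ^ (-k), by rw [Padic.norm_p_zpow, neg_neg]⟩
  have hur : ‖u‖ < r := hu ▸ hk1
  have hur' : r / p ≤ ‖u‖ := by
    rw [div_le_iff₀ hp0, hu, ← zpow_add_one₀ hp0.ne']
    exact hk2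
  have hlt : ∀ i j : ℕ, i < j → j < p → r / p ≤ dist ((i : ℚ_[p]) * u) (j * u) := by
    intro i j hij hj
    rw [dist_comm, dist_eq_norm, ← sub_mul, ← Nat.cast_sub hij.le, norm_mul]
    have : ‖((j - i : ℕ) : ℚ_[p])‖ = 1 := by
      rw [Padic.norm_natCast_eq_one_iff]
      exact Nat.coprime_of_lt_prime (by omega) (by omega) hp.out
    rw [this, one_mul]
    exact hur'
  have hdisj : ((Finset.range p : Finset ℕ) : Set ℕ).PairwiseDisjoint
      (fun i : ℕ => Metric.ball ((i : ℚ_[p]) * u) (r / p)) := by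
    intro i hi j hj hij
    have hi := Finset.mem_range.1 hi
    have hj := Finset.mem_range.1 hj
    have hd : r / p ≤ dist ((i : ℚ_[p]) * u) (j * u) := by
      rcases lt_or_gt_of_ne hij with h | h
      · exact hlt i j h hj
      · rw [dist_comm]
        exact hlt j i h hi
    rcases IsUltrametricDist.ball_eq_or_disjoint ((i : ℚ_[p]) * u) (j * u) (r / p) with h | h
    · have h1 : (i : ℚ_[p]) * u ∈ Metric.ball ((j : ℚ_[p]) * u) (r / p) :=
        h ▸ Metric.mem_ball_self (by positivity)
      exact absurd h1 (not_lt.2 hd)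
    · exact h
  have hsub : (⋃ i ∈ Finset.range p, Metric.ball ((i : ℚ_[p]) * u) (r / p)) ⊆
      Metric.ball 0 r := by
    simp only [Set.iUnion_subset_iff]
    intro i _ x hx
    refine lt_of_le_of_lt (IsUltrametricDist.dist_triangle_max x ((i : ℚ_[p]) * u) 0)
      (max_lt (lt_of_lt_of_le hx (div_le_self hr.le hp1.le)) ?_)
    rw [dist_zero_right, norm_mul]
    refine lt_of_le_of_lt (mul_le_of_le_one_left (norm_nonneg _) ?_) hur
    exact_mod_cast Padic.norm_int_le_one (p := p) (i : ℤ)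
  calc (p : ENNReal) * ν (Metric.ball 0 (r / p))
      = ∑ i ∈ Finset.range p, ν (Metric.ball ((i : ℚ_[p]) * u) (r / p)) := by
        simp only [Measure.addHaar_ball_center ν _ (r / p), Finset.sum_const, Finset.card_range,
          nsmul_eq_mul]
    _ = ν (⋃ i ∈ Finset.range p, Metric.ball ((i : ℚ_[p]) * u) (r / p)) :=
        (measure_biUnion_finset hdisj fun _ _ => Metric.isOpen_ball.measurableSet).symm
    _ ≤ _ := measure_mono hsub

lemma pow_mul_measure_ball_le {r : ℝ} (hr : 0 < r) (m : ℕ) :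
    (p : ENNReal) ^ m * ν (Metric.ball 0 (r / p ^ m)) ≤ ν (Metric.ball 0 r) := by
  have hp0 : (0 : ℝ) < p := by exact_mod_cast hp.out.pos
  induction m with
  | zero => simp
  | succ m ih =>
    refine le_trans ?_ ih
    rw [pow_succ, mul_assoc, pow_succ, ← div_div]
    gcongr
    exact mul_measure_ball_div_le ν (by positivity)

/-- The one-variable estimate, with `ε = τ ^ l`. -/
lemma sublevel_one_dim {l : ℕ} (hl : 0 < l) {q : Polynomial ℚ_[p]} (hq : q.natDegree ≤ l)
    {z x₀ : ℚ_[p]} {r : ℝ} (hr : 0 < r) (hx₀ : x₀ ∈ Metric.ball z r) {τ : ℝ} (hτ : 0 < τ) :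
    ν {x ∈ Metric.ball z r | ‖q.eval x‖ < τ ^ l * ‖q.eval x₀‖} ≤
      ENNReal.ofReal (l * p * τ) * ν (Metric.ball z r) := by
  have hp1 : (1 : ℝ) < p := by exact_mod_cast hp.out.one_lt
  have hp0 : (0 : ℝ) < p := by linarith
  have hl1 : (1 : ℝ) ≤ l := by exact_mod_cast hl
  rcases le_or_gt 1 τ with h1 | h1
  · refine (measure_mono (Set.sep_subset _ _)).trans ?_
    refine le_mul_of_one_le_left zero_le ?_
    rw [ENNReal.one_le_ofReal]
    exact one_le_mul_of_one_le_of_one_le (one_le_mul_of_one_le_of_one_le hl1 hp1.le) h1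
  -- `m` is the scale with `p ^ (-m-1) < τ ≤ p ^ (-m)`.
  obtain ⟨m, hm1, hm2⟩ := exists_nat_pow_near ((one_le_inv₀ hτ).2 h1.le) hp1
  have hm1' : (p : ℝ) ^ m * τ ≤ 1 := by
    have := mul_le_mul_of_nonneg_right hm1 hτ.le
    rwa [inv_mul_cancel₀ hτ.ne'] at this
  have hm2' : 1 ≤ (p : ℝ) * τ * p ^ m := by
    have := mul_le_mul_of_nonneg_right hm2.le hτ.le
    rw [inv_mul_cancel₀ hτ.ne', pow_succ] at this
    linarith
  have hs : 0 < r / (p : ℝ) ^ m := by positivity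
  obtain ⟨T, hT, hcov⟩ := exists_cover_of_no_separated
    {x ∈ Metric.ball z r | ‖q.eval x‖ < τ ^ l * ‖q.eval x₀‖} hs (l + 1) (by
      rintro ⟨T, hTS, hT, hsep⟩
      obtain ⟨x, hx, hle⟩ := exists_node_norm_eval_le hq hs T hT (fun x hx => (hTS hx).1) hsep hx₀
      have h2 := (hTS hx).2
      have h3 : r / (r / (p : ℝ) ^ m) = p ^ m := by field_simp
      rw [h3] at hle
      have h4 : ((p : ℝ) ^ m) ^ l * τ ^ l ≤ 1 := by
        rw [← mul_pow]
        exact pow_le_one₀ (by positivity) hm1'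
      have h5 : ‖q.eval x‖ * ((p : ℝ) ^ m) ^ l < τ ^ l * ‖q.eval x₀‖ * ((p : ℝ) ^ m) ^ l :=
        mul_lt_mul_of_pos_right h2 (by positivity)
      have h6 := mul_le_mul_of_nonneg_right h4 (norm_nonneg (q.eval x₀))
      linarith)
  calc _ ≤ ν (⋃ x ∈ T, Metric.ball x (r / (p : ℝ) ^ m)) := measure_mono hcov
    _ ≤ ∑ x ∈ T, ν (Metric.ball x (r / (p : ℝ) ^ m)) := measure_biUnion_finset_le _ _
    _ = T.card * ν (Metric.ball 0 (r / (p : ℝ) ^ m)) := by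
        simp only [Measure.addHaar_ball_center ν _ (r / (p : ℝ) ^ m), Finset.sum_const,
          nsmul_eq_mul]
    _ ≤ l * ν (Metric.ball 0 (r / (p : ℝ) ^ m)) := by
        gcongr
        omega
    _ ≤ l * (ENNReal.ofReal ((p : ℝ) * τ * p ^ m) * ν (Metric.ball 0 (r / (p : ℝ) ^ m))) := by
        gcongr
        exact le_mul_of_one_le_left zero_le (ENNReal.one_le_ofReal.2 hm2')
    _ = ENNReal.ofReal (l * p * τ) *
          ((p : ENNReal) ^ m * ν (Metric.ball 0 (r / (p : ℝ) ^ m))) := by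
        rw [ENNReal.ofReal_mul (by positivity), mul_assoc (l : ℝ),
          ENNReal.ofReal_mul (p := (l : ℝ)) (by positivity), ENNReal.ofReal_natCast,
          ENNReal.ofReal_pow (by positivity), ENNReal.ofReal_natCast]
        ring
    _ ≤ _ := by
        rw [Measure.addHaar_ball_center ν z]
        gcongr
        exact pow_mul_measure_ball_le ν hr m

end OneVariable

/-! ### Induction on the number of variables -/

section SeveralVariables

/-- `f` is a polynomial function of degree at most `l` in each variable, the other ones being
fixed. -/
def IsSepPoly {K : Type*} [Field K] {d : ℕ} (l : ℕ) (f : (Fin d → K) → K) : Prop :=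
  ∀ (i : Fin d) (x : Fin d → K), ∃ q : Polynomial K, q.natDegree ≤ l ∧
    ∀ t, f (Function.update x i t) = q.eval t

lemma IsSepPoly.cons {K : Type*} [Field K] {d l : ℕ} {f : (Fin (d + 1) → K) → K}
    (hf : IsSepPoly l f) (a : K) : IsSepPoly l (fun y : Fin d → K => f (Fin.cons a y)) := by
  intro i x
  obtain ⟨q, hq, h⟩ := hf i.succ (Fin.cons a x)
  refine ⟨q, hq, fun t => ?_⟩
  rw [← h t]
  exact congrArg f (Fin.cons_update (α := fun _ => K) a x i t)

lemma isSepPoly_eval {K : Type*} [Field K] {d l : ℕ} {P : MvPolynomial (Fin d) K}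
    (hP : P.totalDegree ≤ l) : IsSepPoly l (fun x => MvPolynomial.eval x P) := by
  intro i x
  refine ⟨MvPolynomial.aeval (Function.update (fun j => Polynomial.C (x j)) i Polynomial.X) P,
    ?_, fun t => ?_⟩
  · have := MvPolynomial.aeval_natDegree_le (n := 1) P hP
      (Function.update (fun j => Polynomial.C (x j)) i Polynomial.X) (fun j => by
        rcases eq_or_ne j i with rfl | h
        · simp
        · simp [Function.update_of_ne h])
    simpa using this
  · rw [← Polynomial.coe_evalRingHom, MvPolynomial.aeval_def, MvPolynomial.hom_eval₂]
    change MvPolynomial.eval₂ (RingHom.id K) _ P = _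
    congr 1
    · ext a
      simp
    · funext j
      rcases eq_or_ne j i with rfl | h
      · simp
      · simp [Function.update_of_ne h]

variable {p : ℕ} [hp : Fact p.Prime] [MeasurableSpace ℚ_[p]] [BorelSpace ℚ_[p]]
  (ν : Measure ℚ_[p]) [ν.IsAddHaarMeasure]

/-- The several-variable estimate, with `ε = τ ^ (d l)`. For `d = 0` the set is empty. -/
lemma sublevel_pi {l : ℕ} (hl : 0 < l) {τ : ℝ} (hτ : 0 < τ) {r : ℝ} (hr : 0 < r) (d : ℕ)
    (f : (Fin d → ℚ_[p]) → ℚ_[p]) (hfc : Continuous f) (hf : IsSepPoly l f)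
    (z x₀ : Fin d → ℚ_[p]) (hx₀ : x₀ ∈ Metric.ball z r) :
    (Measure.pi fun _ => ν) {x ∈ Metric.ball z r | ‖f x‖ < τ ^ (d * l) * ‖f x₀‖} ≤
      ENNReal.ofReal (d * (l * p * τ)) * (Measure.pi fun _ => ν) (Metric.ball z r) := by
  induction d with
  | zero =>
    have : {x ∈ Metric.ball z r | ‖f x‖ < τ ^ (0 * l) * ‖f x₀‖} = ∅ := by
      ext x
      simp [Subsingleton.elim x x₀]
    rw [this]
    simp
  | succ d ih =>
    set c : ENNReal := ENNReal.ofReal (l * p * τ) with hc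
    set π : Measure (Fin d → ℚ_[p]) := Measure.pi fun _ => ν with hπ
    have hemp := measurePreserving_piFinSuccAbove (n := d) (α := fun _ => ℚ_[p]) (fun _ => ν) 0
    have hball : ∀ (a : ℚ_[p]) (y : Fin d → ℚ_[p]),
        (Fin.cons a y : Fin (d + 1) → ℚ_[p]) ∈ Metric.ball z r ↔
          a ∈ Metric.ball (z 0) r ∧ y ∈ Metric.ball (Fin.tail z) r := by
      intro a y
      rw [ball_pi _ hr, ball_pi _ hr]
      simp [Set.mem_pi, Fin.forall_fin_succ, Fin.tail]
    have hmeas : ∀ S : Set (Fin (d + 1) → ℚ_[p]), MeasurableSet S →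
        (Measure.pi fun _ => ν) S = ∫⁻ y, ν {a | (Fin.cons a y : Fin (d + 1) → ℚ_[p]) ∈ S} ∂π := by
      intro S hS
      have h1 := (hemp.symm).measure_preimage hS.nullMeasurableSet
      rw [← h1, Measure.prod_apply_symm]
      · refine lintegral_congr fun y => congrArg ν ?_
        ext a
        simp [MeasurableEquiv.piFinSuccAbove, Fin.consEquiv]
      · exact (MeasurableEquiv.measurable _) hS
    set x₁ : Fin d → ℚ_[p] := Fin.tail x₀ with hx₁
    have hx₀' : (Fin.cons (x₀ 0) x₁ : Fin (d + 1) → ℚ_[p]) = x₀ := Fin.cons_self_tail x₀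
    have hx₀b : x₀ 0 ∈ Metric.ball (z 0) r ∧ x₁ ∈ Metric.ball (Fin.tail z) r := by
      rw [← hball, hx₀']
      exact hx₀
    have hgc : Continuous (fun y : Fin d → ℚ_[p] => f (Fin.cons (x₀ 0) y)) :=
      hfc.comp (by fun_prop)
    have ih' := ih _ hgc (hf.cons (x₀ 0)) (Fin.tail z) x₁ hx₀b.2
    rw [hx₀'] at ih'
    set bad : Set (Fin d → ℚ_[p]) := {y ∈ Metric.ball (Fin.tail z) r |
      ‖f (Fin.cons (x₀ 0) y)‖ < τ ^ (d * l) * ‖f x₀‖} with hbad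
    have hbadm : MeasurableSet bad :=
      (Metric.isOpen_ball.inter (isOpen_lt hgc.norm continuous_const)).measurableSet
    have hSm : MeasurableSet
        {x ∈ Metric.ball z r | ‖f x‖ < τ ^ ((d + 1) * l) * ‖f x₀‖} :=
      (Metric.isOpen_ball.inter (isOpen_lt hfc.norm continuous_const)).measurableSet
    have hBm : MeasurableSet (Metric.ball (Fin.tail z) r) := Metric.isOpen_ball.measurableSet
    have hvol : (Measure.pi fun _ => ν) (Metric.ball z r) =
        ν (Metric.ball (z 0) r) * π (Metric.ball (Fin.tail z) r) := by
      rw [ball_pi _ hr, Measure.pi_pi, Fin.prod_univ_succ, ball_pi _ hr, hπ, Measure.pi_pi]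
      rfl
    rw [hmeas _ hSm, hvol]
    have hsec : ∀ y, ν {a | (Fin.cons a y : Fin (d + 1) → ℚ_[p]) ∈
          {x ∈ Metric.ball z r | ‖f x‖ < τ ^ ((d + 1) * l) * ‖f x₀‖}} ≤
        bad.indicator (fun _ => ν (Metric.ball (z 0) r)) y +
        (Metric.ball (Fin.tail z) r).indicator (fun _ => c * ν (Metric.ball (z 0) r)) y := by
      intro y
      by_cases hy : y ∈ Metric.ball (Fin.tail z) r
      · by_cases hyb : y ∈ bad
        · rw [Set.indicator_of_mem hyb]
          refine le_trans (measure_mono fun a ha => ?_) le_self_add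
          exact ((hball a y).1 ha.1).1
        · rw [Set.indicator_of_mem hy]
          refine le_trans ?_ le_add_self
          obtain ⟨q, hq, hqe⟩ := hf 0 (Fin.cons (x₀ 0) y)
          have hqe' : ∀ t, f (Fin.cons t y) = q.eval t := fun t => by
            rw [← hqe t, Fin.update_cons_zero]
          refine le_trans (measure_mono fun a ha => ?_) (sublevel_one_dim ν hl hq hr hx₀b.1 hτ)
          refine ⟨((hball a y).1 ha.1).1, ?_⟩
          have hge : τ ^ (d * l) * ‖f x₀‖ ≤ ‖f (Fin.cons (x₀ 0) y)‖ := by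
            by_contra hcon
            exact hyb ⟨hy, not_le.1 hcon⟩
          have h2 : ‖f (Fin.cons a y)‖ < τ ^ ((d + 1) * l) * ‖f x₀‖ := ha.2
          rw [← hqe', ← hqe']
          refine h2.trans_le ?_
          rw [Nat.succ_mul, pow_add, mul_comm (τ ^ (d * l)), mul_assoc]
          gcongr
      · have : {a | (Fin.cons a y : Fin (d + 1) → ℚ_[p]) ∈
            {x ∈ Metric.ball z r | ‖f x‖ < τ ^ ((d + 1) * l) * ‖f x₀‖}} = ∅ := by
          ext a
          simp only [Set.mem_ofPred_eq, Set.mem_empty_iff_false, iff_false]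
          exact fun ha => hy ((hball a y).1 ha.1).2
        rw [this]
        simp
    refine (lintegral_mono hsec).trans ?_
    rw [lintegral_add_left (measurable_const.indicator hbadm), lintegral_indicator_const hbadm,
      lintegral_indicator_const hBm]
    calc _ ≤ ν (Metric.ball (z 0) r) *
            (ENNReal.ofReal (d * (l * p * τ)) * π (Metric.ball (Fin.tail z) r)) +
          c * ν (Metric.ball (z 0) r) * π (Metric.ball (Fin.tail z) r) := by gcongr
      _ = (ENNReal.ofReal (d * (l * p * τ)) + c) *
            (ν (Metric.ball (z 0) r) * π (Metric.ball (Fin.tail z) r)) := by ring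
      _ = _ := by
        rw [hc, ← ENNReal.ofReal_add (by positivity) (by positivity)]
        congr 2
        push_cast
        ring

end SeveralVariables

/-! ### Passage to the supremum and to an arbitrary Haar measure -/

/-- **Lemma 4.3 (Kleinbock–Tomanov).**  For every prime `p` and positive integers `d, l`
there is `C = C_{d,l} > 0` such that every polynomial `P ∈ ℚ_p[x₁,…,x_d]` of total
degree at most `l` is `(C, 1/(dl))`-good on `ℚ_p^d`. -/
theorem polynomials_are_good
    (p : ℕ) [Fact p.Prime] (d l : ℕ) (hd : 0 < d) (hl : 0 < l)
    [MeasurableSpace (Fin d → ℚ_[p])] [BorelSpace (Fin d → ℚ_[p])]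
    (μ : Measure (Fin d → ℚ_[p])) [μ.IsAddHaarMeasure]
    (hμ : μ {x : Fin d → ℚ_[p] | ∀ i, ‖x i‖ ≤ 1} = 1) :
    ∃ C : ℝ, 0 < C ∧
      ∀ P : MvPolynomial (Fin d) ℚ_[p], P.totalDegree ≤ l →
        IsGood μ C (1 / ((d : ℝ) * l)) (fun x => ‖MvPolynomial.eval x P‖) Set.univ := by
  have hp0 : (0 : ℝ) < p := by exact_mod_cast (Fact.out : p.Prime).pos
  have hd0 : (0 : ℝ) < d := by exact_mod_cast hd
  have hl0 : (0 : ℝ) < l := by exact_mod_cast hl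
  let _ : MeasurableSpace ℚ_[p] := borel _
  have : BorelSpace ℚ_[p] := ⟨rfl⟩
  have hms : ‹MeasurableSpace (Fin d → ℚ_[p])› = MeasurableSpace.pi := by
    rw [BorelSpace.measurable_eq (α := Fin d → ℚ_[p])]
    exact (BorelSpace.measurable_eq (α := Fin d → ℚ_[p]) (self := Pi.borelSpace)).symm
  subst hms
  set α : ℝ := 1 / ((d : ℝ) * l) with hα
  have hα0 : 0 < α := by positivity
  refine ⟨d * (l * p * 2 ^ α), by positivity, fun P hP z r hr _ ε hε => ?_⟩
  set M : ℝ := ⨆ y ∈ Metric.ball z r, ‖MvPolynomial.eval y P‖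
  rcases le_or_gt M 0 with hM0 | hM0
  · have : {x ∈ Metric.ball z r | ‖MvPolynomial.eval x P‖ < ε * M} = ∅ := by
      ext x
      simp only [Set.mem_ofPred_eq, Set.mem_empty_iff_false, iff_false, not_and, not_lt]
      exact fun _ => (mul_nonpos_of_nonneg_of_nonpos hε.le hM0).trans (norm_nonneg _)
    rw [this]
    simp
  obtain ⟨x₀, hx₀⟩ := exists_lt_of_lt_ciSup (show M / 2 < M by linarith)
  -- The inner supremum is over a proposition; it is the junk value `0` off the ball.
  have hx₀b : x₀ ∈ Metric.ball z r := by
    by_contra hcon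
    simp only [hcon, Real.iSup_of_isEmpty] at hx₀
    linarith
  have : Nonempty (x₀ ∈ Metric.ball z r) := ⟨hx₀b⟩
  rw [ciSup_const] at hx₀
  have hmain := sublevel_pi (Measure.addHaar (G := ℚ_[p])) hl
    (τ := (2 * ε) ^ α) (by positivity) hr d _ (MvPolynomial.continuous_eval P)
    (isSepPoly_eval hP) z x₀ hx₀b
  have hpow : ((2 * ε) ^ α) ^ (d * l) = 2 * ε := by
    rw [← Real.rpow_natCast, ← Real.rpow_mul (by positivity), hα]
    push_cast
    rw [one_div_mul_cancel (by positivity), Real.rpow_one]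
  rw [hpow] at hmain
  have hμeq := Measure.isAddLeftInvariant_eq_smul μ
    (Measure.pi fun _ : Fin d => Measure.addHaar (G := ℚ_[p]))
  rw [hμeq, Measure.smul_apply, Measure.smul_apply, mul_smul_comm]
  gcongr
  have hsub : {x ∈ Metric.ball z r | ‖MvPolynomial.eval x P‖ < ε * M} ⊆
      {x ∈ Metric.ball z r |
        ‖MvPolynomial.eval x P‖ < 2 * ε * ‖MvPolynomial.eval x₀ P‖} := by
    refine fun x hx => ⟨hx.1, hx.2.trans ?_⟩
    have := mul_lt_mul_of_pos_left hx₀ hε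
    linarith
  refine (measure_mono hsub).trans (hmain.trans (le_of_eq ?_))
  rw [Real.mul_rpow (by norm_num) hε.le]
  congr 2
  ring
end

section
/- Let p be a prime, V₁,…,V_d nonempty open subsets of ℚ_p, k ∈ ℕ, and A₁,…,A_d, A'₁,…,A'_d positive real numbers. Let f ∈ C^k(V₁×⋯×V_d) (ℚ_p-valued) be such that A_i ≤ |Φ_i^k f|_p ≤ A'_i on ∇^{k+1}V_i × ∏_{j≠i} V_j for each i = 1,…,d. Then f is (C, α)-good on V₁×⋯×V_d, where C and α depend only on k, d, the A_i and the A'_i (and not on f). -/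
/-!
The proof reduces to one variable and bounds there how far apart points of a sublevel set can lie.

One variable (`measure_ball_lt_le`). Let `h` be a function on a ball of radius `r` with
`A ≤ |Φ^k h| ≤ A'`, let `t₀` be a point of the ball, `M = |h(t₀)|`, and suppose that the sublevel set
`{|h| < η M}` contains `k + 1` points at mutual distance at least `δ`. Two ultrametric estimates hold:
the difference quotient at these points gives `A ≤ η M / δ ^ k` (`norm_diffQuot_mul_le`), and
interpolating the value at `t₀` from `k` of them gives `M ≤ max (η M (r / δ) ^ k) (A' r ^ k)`
(`norm_le_max_diffQuot`). Whichever term attains the maximum, `(δ / r) ^ k ≤ η max(1, A' / A)`.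
So for slightly larger `δ` there are no such points, the sublevel set is covered by `k + 1` balls
of radius `δ`, and its measure is at most a constant times `η ^ (1 / (k + 1))` times that of the ball.
The exponent `1 / (k + 1)` instead of `1 / k` only serves to include `k = 0`.

Several variables (`pi_measure_ball_lt_le`). Choose `y` in the ball at which `|f|` exceeds half of
its supremum. If `|f(x)| < η ^ d |f(y)|`, then on the way from `y` to `x` through the points `hybrid`,
which changes one coordinate at a time, `|f|` drops by the factor `η` in some step. The points `x` for
which this happens in step `j` have slices in direction `j` bounded by the one-variable estimate, so
Fubini's theorem applies. With `η ^ d = 2 ε` this gives the claim, with exponent `1 / (d (k + 1))`.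
-/


open MeasureTheory

open MeasureTheory

/-- The `k`-th order difference quotient of a one-variable function (Schikhof). -/
noncomputable def diffQuot {K : Type*} [Field K] (f : K → K) : ℕ → (ℕ → K) → K
  | 0, x => f (x 0)
  | k + 1, x =>
      (diffQuot f k (fun j => if j = 0 then x 0 else x (j + 1)) -
        diffQuot f k (fun j => x (j + 1))) / (x 0 - x 1)

/-! ### Ultrametric estimates for difference quotients -/

lemma padic_norm_sub_le_max {p : ℕ} [Fact p.Prime] (x y : ℚ_[p]) : ‖x - y‖ ≤ max ‖x‖ ‖y‖ := by
  simpa [sub_eq_add_neg] using Padic.nonarchimedean x (-y)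

/-- A difference quotient of order `k` at `δ`-separated points where `‖f‖ ≤ a` has norm at most
`a / δ ^ k`; multiplied out to avoid division. -/
lemma norm_diffQuot_mul_le {p : ℕ} [Fact p.Prime] (f : ℚ_[p] → ℚ_[p]) {a δ : ℝ} (hδ : 0 < δ)
    (k : ℕ) (ts : ℕ → ℚ_[p]) (hf : ∀ m ≤ k, ‖f (ts m)‖ ≤ a)
    (hsep : ∀ m m', m ≤ k → m' ≤ k → m ≠ m' → δ ≤ ‖ts m - ts m'‖) :
    ‖diffQuot f k ts‖ * δ ^ k ≤ a := by
  induction k generalizing ts with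
  | zero => simpa [diffQuot] using hf 0 le_rfl
  | succ k ih =>
    have h1 := ih (fun j => if j = 0 then ts 0 else ts (j + 1))
      (by intro m hm; split_ifs; exacts [hf _ (by omega), hf _ (by omega)])
      (by
        intro m m' hm hm' hne
        split_ifs <;> first | omega | exact hsep _ _ (by omega) (by omega) (by omega))
    have h2 := ih (fun j => ts (j + 1)) (fun m hm => hf _ (by omega))
      (fun m m' hm hm' hne => hsep _ _ (by omega) (by omega) (by omega))
    have h01 := hsep 0 1 (by omega) (by omega) (by omega)
    rw [diffQuot, norm_div, pow_succ, ← mul_assoc]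
    set X := diffQuot f k (fun j => if j = 0 then ts 0 else ts (j + 1))
    set Y := diffQuot f k (fun j => ts (j + 1))
    have h3 : ‖X - Y‖ * δ ^ k ≤ a := by
      have : ‖X - Y‖ ≤ max ‖X‖ ‖Y‖ := padic_norm_sub_le_max X Y
      calc ‖X - Y‖ * δ ^ k ≤ max ‖X‖ ‖Y‖ * δ ^ k := by gcongr
        _ = max (‖X‖ * δ ^ k) (‖Y‖ * δ ^ k) := max_mul_of_nonneg _ _ (by positivity)
        _ ≤ a := max_le h1 h2
    have hpos : 0 < ‖ts 0 - ts 1‖ := hδ.trans_le h01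
    calc ‖X - Y‖ / ‖ts 0 - ts 1‖ * δ ^ k * δ
        = ‖X - Y‖ * δ ^ k * (δ / ‖ts 0 - ts 1‖) := by ring
      _ ≤ ‖X - Y‖ * δ ^ k * 1 := by
          gcongr; exact (div_le_one hpos).2 h01
      _ ≤ a := by simpa using h3

/-- The ultrametric interpolation estimate: the value of `f` at the base point `ts 0` is controlled
by its values (at most `a`) at `k` further `δ`-separated points within distance `r`, up to the
interpolation error `‖Φ^k f‖ r ^ k`. -/
lemma norm_le_max_diffQuot {p : ℕ} [Fact p.Prime] (f : ℚ_[p] → ℚ_[p]) {a δ r : ℝ} (hδ : 0 < δ)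
    (hδr : δ ≤ r) (k : ℕ) (ts : ℕ → ℚ_[p]) (ha : 0 ≤ a)
    (hf : ∀ m, 1 ≤ m → m ≤ k → ‖f (ts m)‖ ≤ a)
    (hsep : ∀ m m', 1 ≤ m → m ≤ k → 1 ≤ m' → m' ≤ k → m ≠ m' → δ ≤ ‖ts m - ts m'‖)
    (hne : ∀ m, 1 ≤ m → m ≤ k → ts 0 ≠ ts m)
    (hr : ∀ m, 1 ≤ m → m ≤ k → ‖ts 0 - ts m‖ ≤ r) :
    ‖f (ts 0)‖ ≤ max (a * (r / δ) ^ k) (‖diffQuot f k ts‖ * r ^ k) := by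
  have hr0 : 0 < r := hδ.trans_le hδr
  have hq : 1 ≤ r / δ := (one_le_div hδ).2 hδr
  induction k generalizing ts with
  | zero => simp [diffQuot]
  | succ k ih =>
    have h1 := ih (fun j => if j = 0 then ts 0 else ts (j + 1))
      (by intro m h hm; rw [if_neg (by omega)]; exact hf _ (by omega) (by omega))
      (by
        intro m m' h hm h' hm' hne
        rw [if_neg (by omega), if_neg (by omega)]
        exact hsep _ _ (by omega) (by omega) (by omega) (by omega) (by omega))
      (by
        intro m h hm
        rw [if_pos rfl, if_neg (by omega)]; exact hne _ (by omega) (by omega))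
      (by
        intro m h hm
        rw [if_pos rfl, if_neg (by omega)]; exact hr _ (by omega) (by omega))
    have h2 := norm_diffQuot_mul_le f hδ k (fun j => ts (j + 1))
      (fun m hm => hf _ (by omega) (by omega))
      (fun m m' hm hm' hne =>
        hsep _ _ (by omega) (by omega) (by omega) (by omega) (by omega))
    have hne1 := hne 1 le_rfl (by omega)
    have hr1 := hr 1 le_rfl (by omega)
    have hE : diffQuot f k (fun j => if j = 0 then ts 0 else ts (j + 1)) =
        diffQuot f (k + 1) ts * (ts 0 - ts 1) + diffQuot f k (fun j => ts (j + 1)) := by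
      rw [diffQuot, div_mul_cancel₀ _ (sub_ne_zero.2 hne1)]; ring
    rw [if_pos rfl, hE] at h1
    set Z := diffQuot f (k + 1) ts
    set Y := diffQuot f k (fun j => ts (j + 1))
    have h3 : ‖Z * (ts 0 - ts 1) + Y‖ ≤ max (‖Z‖ * r) ‖Y‖ := by
      refine (Padic.nonarchimedean _ _).trans (max_le_max ?_ le_rfl)
      rw [norm_mul]; gcongr
    refine h1.trans (max_le ?_ ?_)
    · refine le_max_of_le_left ?_
      gcongr
      omega
    · calc ‖Z * (ts 0 - ts 1) + Y‖ * r ^ k ≤ max (‖Z‖ * r) ‖Y‖ * r ^ k := by gcongr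
        _ = max (‖Z‖ * r * r ^ k) (‖Y‖ * r ^ k) := max_mul_of_nonneg _ _ (by positivity)
        _ ≤ _ := by
          rw [max_comm]
          refine max_le_max ?_ (le_of_eq (by ring))
          calc ‖Y‖ * r ^ k = ‖Y‖ * δ ^ k * (r / δ) ^ k := by
                rw [div_pow]; field_simp
            _ ≤ a * (r / δ) ^ k := by gcongr
            _ ≤ a * (r / δ) ^ (k + 1) := by
                gcongr
                omega

/-! ### Measures of balls and of sets without separated points -/

/-- A set either contains `n` points that are pairwise `δ`-separated or has measure at most that of
`n` balls of radius `δ`: a maximal separated subset yields a cover by such balls. -/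
lemma exists_separated_or_measure_le {p : ℕ} [Fact p.Prime] [MeasurableSpace ℚ_[p]]
    [BorelSpace ℚ_[p]] (ν : Measure ℚ_[p]) [ν.IsAddHaarMeasure] (S : Set ℚ_[p]) (δ : ℝ) (n : ℕ) :
    (∃ ts : ℕ → ℚ_[p], (∀ m < n, ts m ∈ S) ∧
      ∀ m m', m < n → m' < n → m ≠ m' → δ ≤ ‖ts m - ts m'‖) ∨
    ν S ≤ n * ν (Metric.ball 0 δ) := by
  induction n with
  | zero => left; exact ⟨fun _ => 0, by simp, by simp⟩
  | succ n ih =>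
    rcases ih with ⟨ts, h1, h2⟩ | h
    · by_cases hc : S ⊆ ⋃ m ∈ Finset.range n, Metric.ball (ts m) δ
      · right
        calc ν S ≤ ν (⋃ m ∈ Finset.range n, Metric.ball (ts m) δ) := measure_mono hc
          _ ≤ ∑ m ∈ Finset.range n, ν (Metric.ball (ts m) δ) := measure_biUnion_finset_le _ _
          _ = n * ν (Metric.ball 0 δ) := by
              simp [Measure.addHaar_ball_center]
          _ ≤ _ := by gcongr; omega
      · left
        obtain ⟨x, hxS, hx⟩ := Set.not_subset.1 hc
        simp only [Finset.mem_range, Set.mem_iUnion, Metric.mem_ball, not_exists, not_lt,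
          dist_eq_norm] at hx
        refine ⟨fun m => if m < n then ts m else x, fun m _ => ?_, fun m m' hm hm' hne => ?_⟩
        · dsimp only; split_ifs with h
          exacts [h1 m h, hxS]
        · dsimp only; split_ifs with h h' h'
          · exact h2 m m' h h' hne
          · rw [norm_sub_rev]; exact hx m h
          · exact hx m' h'
          · omega
    · right
      refine h.trans ?_
      gcongr; omega

/-- A ball of radius `ρ` in `ℚ_p` contains `p` disjoint translates of the ball of radius `ρ / p`. -/
lemma prime_mul_measure_ball_le {p : ℕ} [hp : Fact p.Prime] [MeasurableSpace ℚ_[p]]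
    [BorelSpace ℚ_[p]] (ν : Measure ℚ_[p]) [ν.IsAddHaarMeasure] {ρ : ℝ} (hρ : 0 < ρ) :
    (p : ENNReal) * ν (Metric.ball 0 (ρ * (p : ℝ)⁻¹)) ≤ ν (Metric.ball 0 ρ) := by
  have hp1 : (1 : ℝ) < p := by exact_mod_cast hp.out.one_lt
  have hp0 : (0 : ℝ) < p := by linarith
  obtain ⟨n, hn1, hn2⟩ := exists_mem_Ioc_zpow hρ hp1
  obtain ⟨a, ha⟩ : ∃ a : ℚ_[p], ‖a‖ = (p : ℝ) ^ n :=
    ⟨(p : ℚ_[p]) ^ (-n), by simp⟩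
  rw [← ha] at hn1
  have ha2 : ρ * (p : ℝ)⁻¹ ≤ ‖a‖ := by
    rw [zpow_add₀ hp0.ne', ← ha, zpow_one] at hn2
    rwa [← div_eq_mul_inv, div_le_iff₀ hp0]
  have hnorm : ∀ i : ℕ, ‖(i : ℚ_[p]) * a‖ ≤ ‖a‖ := by
    intro i
    rw [norm_mul]
    exact mul_le_of_le_one_left (norm_nonneg _) (by exact_mod_cast Padic.norm_int_le_one (i : ℤ))
  have hdisj : Set.PairwiseDisjoint (↑(Finset.range p))
      (fun i : ℕ => Metric.ball ((i : ℚ_[p]) * a) (ρ * (p : ℝ)⁻¹)) := by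
    intro i hi j hj hij
    rw [Function.onFun, Set.disjoint_left]
    intro x hx hx'
    simp only [Metric.mem_ball, dist_eq_norm] at hx hx'
    have h1 : ‖(i : ℚ_[p]) * a - j * a‖ < ρ * (p : ℝ)⁻¹ := by
      have : (i : ℚ_[p]) * a - j * a = (x - j * a) - (x - i * a) := by ring
      rw [this]
      exact (padic_norm_sub_le_max _ _).trans_lt (max_lt hx' hx)
    have h3 : ‖(((i : ℤ) - (j : ℤ) : ℤ) : ℚ_[p])‖ = 1 := by
      refine le_antisymm (Padic.norm_int_le_one _) (not_lt.1 fun h => ?_)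
      rw [Padic.norm_intCast_lt_one_iff] at h
      simp only [Finset.coe_range, Set.mem_Iio] at hi hj
      obtain ⟨c, hc⟩ := h
      have : c = 0 := by
        by_contra hc0
        have : (p : ℤ) ≤ |(i : ℤ) - j| := by
          rw [hc, abs_mul, Nat.abs_cast]
          exact le_mul_of_one_le_right (by positivity) (Int.one_le_abs hc0)
        rw [le_abs] at this
        omega
      subst this
      omega
    rw [← sub_mul, norm_mul] at h1
    push_cast at h3
    rw [h3, one_mul] at h1
    linarith
  calc (p : ENNReal) * ν (Metric.ball 0 (ρ * (p : ℝ)⁻¹))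
      = ∑ i ∈ Finset.range p, ν (Metric.ball ((i : ℚ_[p]) * a) (ρ * (p : ℝ)⁻¹)) := by
        simp [Measure.addHaar_ball_center]
    _ = ν (⋃ i ∈ Finset.range p, Metric.ball ((i : ℚ_[p]) * a) (ρ * (p : ℝ)⁻¹)) :=
        (measure_biUnion_finset hdisj fun i _ => Metric.isOpen_ball.measurableSet).symm
    _ ≤ ν (Metric.ball 0 ρ) := by
        refine measure_mono (Set.iUnion₂_subset fun i _ x hx => ?_)
        rw [Metric.mem_ball, dist_eq_norm] at hx ⊢
        have : x - 0 = (x - i * a) + i * a := by ring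
        rw [this]
        refine (Padic.nonarchimedean _ _).trans_lt (max_lt (hx.trans_le ?_) ?_)
        · exact mul_le_of_le_one_right hρ.le (inv_le_one_of_one_le₀ hp1.le)
        · exact (hnorm i).trans_lt hn1

/-- Shrinking the radius of a ball in `ℚ_p` by the factor `s ≤ 1` multiplies its measure by at most
`p s`. The factor `p` comes from rounding `s` to a power of `p`. -/
lemma measure_ball_mul_le {p : ℕ} [hp : Fact p.Prime] [MeasurableSpace ℚ_[p]]
    [BorelSpace ℚ_[p]] (ν : Measure ℚ_[p]) [ν.IsAddHaarMeasure] {r s : ℝ} (hr : 0 < r)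
    (hs : 0 < s) (hs1 : s ≤ 1) :
    ν (Metric.ball 0 (r * s)) ≤ ENNReal.ofReal (p * s) * ν (Metric.ball 0 r) := by
  have hp1 : (1 : ℝ) < p := by exact_mod_cast hp.out.one_lt
  have hp0 : (0 : ℝ) < p := by linarith
  obtain ⟨m, hm1, hm2⟩ := exists_nat_pow_near_of_lt_one hs hs1 (inv_pos.2 hp0)
    (inv_lt_one_of_one_lt₀ hp1)
  have key : ∀ m : ℕ, ν (Metric.ball 0 (r * (p : ℝ)⁻¹ ^ m)) ≤
      ENNReal.ofReal ((p : ℝ)⁻¹ ^ m) * ν (Metric.ball 0 r) := by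
    intro m
    induction m with
    | zero => simp
    | succ m ih =>
      have h := prime_mul_measure_ball_le ν (ρ := r * (p : ℝ)⁻¹ ^ m) (by positivity)
      have h2 : ENNReal.ofReal ((p : ℝ)⁻¹) * (p : ENNReal) = 1 := by
        rw [← ENNReal.ofReal_natCast, ← ENNReal.ofReal_mul (by positivity),
          inv_mul_cancel₀ hp0.ne', ENNReal.ofReal_one]
      calc ν (Metric.ball 0 (r * (p : ℝ)⁻¹ ^ (m + 1)))
          = ENNReal.ofReal ((p : ℝ)⁻¹) *
              ((p : ENNReal) * ν (Metric.ball 0 (r * (p : ℝ)⁻¹ ^ m * (p : ℝ)⁻¹))) := by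
            rw [← mul_assoc, h2, one_mul, pow_succ, mul_assoc]
        _ ≤ ENNReal.ofReal ((p : ℝ)⁻¹) *
              (ENNReal.ofReal ((p : ℝ)⁻¹ ^ m) * ν (Metric.ball 0 r)) := by
            exact mul_le_mul' le_rfl (h.trans ih)
        _ = _ := by
            rw [← mul_assoc, ← ENNReal.ofReal_mul (by positivity), pow_succ']
  calc ν (Metric.ball 0 (r * s)) ≤ ν (Metric.ball 0 (r * (p : ℝ)⁻¹ ^ m)) := by
        apply measure_mono; apply Metric.ball_subset_ball; gcongr
    _ ≤ _ := key m
    _ ≤ _ := by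
        gcongr
        rw [pow_succ] at hm1
        have := mul_lt_mul_of_pos_right hm1 hp0
        rw [mul_assoc, inv_mul_cancel₀ hp0.ne', mul_one] at this
        linarith

/-! ### The one-variable estimate -/

/-- The one-variable estimate, with the supremum over the ball replaced by the value at an arbitrary
point `t₀`. The number `c` is any upper bound for `1` and for the quotient of the two
bounds on the difference quotient. -/
lemma measure_ball_lt_le {p : ℕ} [hp : Fact p.Prime] [MeasurableSpace ℚ_[p]]
    [BorelSpace ℚ_[p]] (ν : Measure ℚ_[p]) [ν.IsAddHaarMeasure] (k : ℕ) {A A' c r η : ℝ}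
    (hA : 0 < A) (hr : 0 < r) (hη : 0 < η) (hc1 : 1 ≤ c) (hc : A' ≤ c * A)
    (h : ℚ_[p] → ℚ_[p]) (z t₀ : ℚ_[p]) (ht₀ : t₀ ∈ Metric.ball z r)
    (H : ∀ ts : ℕ → ℚ_[p], (∀ m, m ≤ k → ts m ∈ Metric.ball z r) →
      (∀ m m', m ≤ k → m' ≤ k → m ≠ m' → ts m ≠ ts m') →
      A ≤ ‖diffQuot h k ts‖ ∧ ‖diffQuot h k ts‖ ≤ A') :
    ν {t ∈ Metric.ball z r | ‖h t‖ < η * ‖h t₀‖} ≤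
      ENNReal.ofReal ((k + 1) * p * (2 * c) ^ (1 / (k + 1 : ℝ)) * η ^ (1 / (k + 1 : ℝ))) *
        ν (Metric.ball z r) := by
  have hp1 : (1 : ℝ) < p := by exact_mod_cast hp.out.one_lt
  -- The separation scale, relative to `r`; it satisfies `s ^ k ≥ s ^ (k + 1) > η * c`.
  set s : ℝ := (2 * c * η) ^ (1 / (k + 1 : ℝ)) with hs
  have hs0 : 0 < s := by positivity
  have hsk : s ^ (k + 1) = 2 * c * η := by
    rw [hs, ← Real.rpow_natCast, ← Real.rpow_mul (by positivity)]
    push_cast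
    rw [one_div_mul_cancel (by positivity), Real.rpow_one]
  have hconst : (k + 1) * p * (2 * c) ^ (1 / (k + 1 : ℝ)) * η ^ (1 / (k + 1 : ℝ)) =
      (k + 1) * (p * s) := by
    rw [hs, Real.mul_rpow (by positivity) hη.le]; ring
  rw [hconst]
  by_cases hs1 : 1 < s
  · refine (measure_mono (Set.sep_subset _ _)).trans ?_
    refine le_mul_of_one_le_left (by positivity) ?_
    rw [ENNReal.one_le_ofReal]
    have : 1 ≤ (p : ℝ) * s := one_le_mul_of_one_le_of_one_le hp1.le hs1.le
    have : (0 : ℝ) ≤ k := by positivity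
    nlinarith
  have hs1 : s ≤ 1 := not_lt.1 hs1
  have hskη : η * c < s ^ k := by
    have : s ^ (k + 1) ≤ s ^ k := pow_le_pow_of_le_one hs0.le hs1 (by omega)
    nlinarith [mul_pos hη (by linarith : 0 < c)]
  have hη1 : η ≤ 1 := by
    have : s ^ k ≤ 1 := pow_le_one₀ hs0.le hs1
    nlinarith
  have hδ : 0 < r * s := by positivity
  have hδr : r * s ≤ r := mul_le_of_le_one_right hr.le hs1
  rcases exists_separated_or_measure_le ν {t ∈ Metric.ball z r | ‖h t‖ < η * ‖h t₀‖} (r * s) (k + 1)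
    with ⟨ts, h1, h2⟩ | hle
  · exfalso
    have hne : ∀ m m', m < k + 1 → m' < k + 1 → m ≠ m' → ts m ≠ ts m' := by
      intro m m' hm hm' hmm heq
      have := h2 m m' hm hm' hmm
      rw [heq, sub_self, norm_zero] at this
      linarith
    have ht₀ne : ∀ m, m < k + 1 → t₀ ≠ ts m := by
      intro m hm heq
      have := (h1 m hm).2
      rw [← heq] at this
      nlinarith [norm_nonneg (h t₀)]
    have hM : 0 < ‖h t₀‖ := by
      have := (norm_nonneg _).trans_lt (h1 0 (by omega)).2
      exact pos_of_mul_pos_right this hη.le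
    have hlow := (H ts (fun m hm => (h1 m (by omega)).1)
      (fun m m' hm hm' => hne m m' (by omega) (by omega))).1
    have hlow2 := norm_diffQuot_mul_le h hδ k ts (fun m hm => (h1 m (by omega)).2.le)
      (fun m m' hm hm' => h2 m m' (by omega) (by omega))
    -- The point `t₀` is placed at index `0`, in front of `k` of the separated points.
    set us : ℕ → ℚ_[p] := fun m => if m = 0 then t₀ else ts m with hus
    have hus0 : us 0 = t₀ := by simp [hus]
    have hus1 : ∀ m, 1 ≤ m → us m = ts m := by
      intro m hm; simp only [hus]; rw [if_neg (by omega)]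
    have hupp := (H us
      (by
        intro m hm; simp only [hus]; split_ifs
        exacts [ht₀, (h1 m (by omega)).1])
      (by
        intro m m' hm hm' hmm; simp only [hus]; split_ifs
        · omega
        · exact ht₀ne _ (by omega)
        · exact (ht₀ne _ (by omega)).symm
        · exact hne _ _ (by omega) (by omega) hmm)).2
    have hmax := norm_le_max_diffQuot h hδ hδr k us (a := η * ‖h t₀‖) (by positivity)
      (by intro m hm hm'; rw [hus1 m hm]; exact (h1 m (by omega)).2.le)
      (by
        intro m m' hm hm2 hm' hm2' hmm; rw [hus1 m hm, hus1 m' hm']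
        exact h2 m m' (by omega) (by omega) hmm)
      (by intro m hm hm'; rw [hus1 m hm, hus0]; exact ht₀ne _ (by omega))
      (by
        intro m hm hm'; rw [hus1 m hm, hus0]
        have e : t₀ - ts m = (t₀ - z) - (ts m - z) := by ring
        rw [e]
        have hz1 := ht₀
        have hz2 := (h1 m (by omega)).1
        rw [Metric.mem_ball, dist_eq_norm] at hz1 hz2
        exact (padic_norm_sub_le_max _ _).trans (max_le hz1.le hz2.le))
    rw [hus0] at hmax
    have hrk : 0 < r ^ k := by positivity
    have hsk0 : 0 < s ^ k := by positivity
    rcases le_max_iff.1 hmax with hm | hm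
    · have e : η * ‖h t₀‖ * (r / (r * s)) ^ k = η * ‖h t₀‖ / s ^ k := by
        rw [div_mul_cancel_left₀ hr.ne', inv_pow]; rfl
      rw [e, le_div_iff₀ hsk0] at hm
      have : s ^ k ≤ η := by
        by_contra hcon
        nlinarith
      nlinarith
    · have h3 : ‖h t₀‖ ≤ A' * r ^ k := hm.trans (by gcongr)
      have h4 : A * (r * s) ^ k ≤ η * ‖h t₀‖ := le_trans (by gcongr) hlow2
      have h5 : A * (r * s) ^ k ≤ η * (c * A * r ^ k) :=
        h4.trans (by gcongr; exact h3.trans (by gcongr))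
      have h6 : s ^ k * (A * r ^ k) ≤ η * c * (A * r ^ k) := by
        rw [mul_pow] at h5; linarith
      have := le_of_mul_le_mul_right h6 (by positivity)
      linarith
  · refine hle.trans ?_
    rw [Measure.addHaar_ball_center ν z, ENNReal.ofReal_mul (by positivity), mul_assoc]
    have e : ENNReal.ofReal ((k : ℝ) + 1) = ((k + 1 : ℕ) : ENNReal) := by
      rw [← ENNReal.ofReal_natCast]; push_cast; rfl
    rw [e]
    gcongr
    exact measure_ball_mul_le ν hr hs0 hs1

/-! ### From one to several variables -/

/-- Fubini in the `j`-th coordinate: a bound on all slices in direction `j`, relative to the slices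
of `B`, gives the same bound for the product measure. -/
lemma pi_measure_le_of_slice {p : ℕ} [Fact p.Prime] [MeasurableSpace ℚ_[p]] [BorelSpace ℚ_[p]]
    (ν : Measure ℚ_[p]) [ν.IsAddHaarMeasure] {d : ℕ} (j : Fin d) {S B : Set (Fin d → ℚ_[p])}
    (hS : MeasurableSet S) (hB : MeasurableSet B) (κ : ENNReal)
    (h : ∀ x, ν {t | Function.update x j t ∈ S} ≤ κ * ν {t | Function.update x j t ∈ B}) :
    Measure.pi (fun _ : Fin d => ν) S ≤ κ * Measure.pi (fun _ : Fin d => ν) B := by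
  have hBm : Measurable (B.indicator (1 : (Fin d → ℚ_[p]) → ENNReal)) :=
    measurable_one.indicator hB
  have key := lintegral_le_of_lmarginal_le (μ := fun _ : Fin d => ν) {j}
    (f := S.indicator 1) (g := fun x => κ * B.indicator 1 x)
    (measurable_one.indicator hS) (hBm.const_mul κ) (by
      rw [lmarginal_singleton, lmarginal_singleton]
      intro x
      have e : ∀ T : Set (Fin d → ℚ_[p]), MeasurableSet T →
          ∫⁻ t, T.indicator 1 (Function.update x j t) ∂ν = ν {t | Function.update x j t ∈ T} := by
        intro T hT
        exact lintegral_indicator_one (μ := ν) (measurable_update x hT)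
      have hm : Measurable fun t => B.indicator (1 : (Fin d → ℚ_[p]) → ENNReal)
          (Function.update x j t) := hBm.comp (measurable_update x)
      dsimp only
      rw [lintegral_const_mul _ hm, e S hS, e B hB]
      exact h x)
  rwa [lintegral_const_mul _ hBm, lintegral_indicator_one hS, lintegral_indicator_one hB] at key

/-- The point agreeing with `x` in the first `n` coordinates and with `y` in the others. -/
def hybrid {K : Type*} {d : ℕ} (y : Fin d → K) (n : ℕ) (x : Fin d → K) : Fin d → K :=
  fun i => if (i : ℕ) < n then x i else y i

lemma hybrid_succ_update {K : Type*} {d : ℕ} (y x : Fin d → K) (j : Fin d) (t : K) :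
    hybrid y (j + 1) (Function.update x j t) = Function.update (hybrid y j x) j t := by
  ext i
  by_cases h : i = j
  · subst h; simp [hybrid]
  · have : (i : ℕ) ≠ j := fun e => h (Fin.ext e)
    simp only [hybrid, Function.update_of_ne h]
    split_ifs <;> first | rfl | omega

lemma hybrid_update {K : Type*} {d : ℕ} (y x : Fin d → K) (j : Fin d) (t : K) :
    hybrid y j (Function.update x j t) = hybrid y j x := by
  ext i
  by_cases h : i = j
  · subst h; simp [hybrid]
  · simp [hybrid, Function.update_of_ne h]

lemma update_hybrid_self {K : Type*} {d : ℕ} (y x : Fin d → K) (j : Fin d) :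
    Function.update (hybrid y j x) j (y j) = hybrid y j x := by
  rw [Function.update_eq_self_iff]; simp [hybrid]

/-- The several-variable estimate with the supremum over the ball replaced by the value at an
arbitrary point `y`. Passing from `y` to `x` one coordinate at a time, `‖f‖` must drop by the factor
`η` in at least one of the `d` steps, and each step is governed by the one-variable estimate. -/
lemma pi_measure_ball_lt_le {p : ℕ} [Fact p.Prime] [MeasurableSpace ℚ_[p]] [BorelSpace ℚ_[p]]
    (ν : Measure ℚ_[p]) [ν.IsAddHaarMeasure] (d k : ℕ) {A A' : Fin d → ℝ} {c r η : ℝ}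
    (hA : ∀ i, 0 < A i) (hr : 0 < r) (hη : 0 < η) (hc1 : 1 ≤ c) (hc : ∀ i, A' i ≤ c * A i)
    (f : (Fin d → ℚ_[p]) → ℚ_[p]) (z y : Fin d → ℚ_[p]) (hy : y ∈ Metric.ball z r)
    (hf : ContinuousOn f (Metric.ball z r))
    (H : ∀ (i : Fin d), ∀ x ∈ Metric.ball z r, ∀ ts : ℕ → ℚ_[p],
      (∀ m, m ≤ k → ts m ∈ Metric.ball (z i) r) →
      (∀ m m', m ≤ k → m' ≤ k → m ≠ m' → ts m ≠ ts m') →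
      A i ≤ ‖diffQuot (fun t => f (Function.update x i t)) k ts‖ ∧
        ‖diffQuot (fun t => f (Function.update x i t)) k ts‖ ≤ A' i) :
    Measure.pi (fun _ : Fin d => ν) {x ∈ Metric.ball z r | ‖f x‖ < η ^ d * ‖f y‖} ≤
      d * (ENNReal.ofReal
        ((k + 1) * p * (2 * c) ^ (1 / (k + 1 : ℝ)) * η ^ (1 / (k + 1 : ℝ))) *
        Measure.pi (fun _ : Fin d => ν) (Metric.ball z r)) := by
  set D := ENNReal.ofReal ((k + 1) * p * (2 * c) ^ (1 / (k + 1 : ℝ)) * η ^ (1 / (k + 1 : ℝ)))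
  have hmem : ∀ x : Fin d → ℚ_[p], x ∈ Metric.ball z r ↔ ∀ i, x i ∈ Metric.ball (z i) r := by
    intro x; rw [ball_pi _ hr]; simp
  have hhyb : ∀ n x, x ∈ Metric.ball z r → hybrid y n x ∈ Metric.ball z r := by
    intro n x hx
    rw [hmem] at *
    intro i; simp only [hybrid]; split_ifs
    exacts [hx i, hy i]
  have hcont : ∀ n, ContinuousOn (fun x => ‖f (hybrid y n x)‖) (Metric.ball z r) := by
    intro n
    refine (hf.comp (Continuous.continuousOn ?_) (hhyb n)).norm
    refine continuous_pi fun i => ?_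
    simp only [hybrid]
    split_ifs
    exacts [continuous_apply i, continuous_const]
  set S : Fin d → Set (Fin d → ℚ_[p]) := fun j =>
    {x ∈ Metric.ball z r | ‖f (hybrid y (j + 1) x)‖ < η * ‖f (hybrid y j x)‖} with hS
  have hSmeas : ∀ j, MeasurableSet (S j) := by
    intro j
    have h0 : ContinuousOn (fun x => η * ‖f (hybrid y j x)‖ - ‖f (hybrid y (j + 1) x)‖)
        (Metric.ball z r) := ((hcont j).const_smul η).sub (hcont (j + 1))
    have : S j = Metric.ball z r ∩
        (fun x => η * ‖f (hybrid y j x)‖ - ‖f (hybrid y (j + 1) x)‖) ⁻¹' Set.Ioi 0 := by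
      ext x; simp [hS]
    rw [this]
    exact (h0.isOpen_inter_preimage Metric.isOpen_ball isOpen_Ioi).measurableSet
  have hcover : {x ∈ Metric.ball z r | ‖f x‖ < η ^ d * ‖f y‖} ⊆ ⋃ j, S j := by
    rintro x ⟨hxB, hx⟩
    by_contra hcon
    simp only [Set.mem_iUnion, hS, Set.mem_ofPred_eq, not_exists, not_and, not_lt] at hcon
    have hstep : ∀ n ≤ d, η ^ n * ‖f y‖ ≤ ‖f (hybrid y n x)‖ := by
      intro n
      induction n with
      | zero =>
        intro _
        have : hybrid y 0 x = y := by ext i; simp [hybrid]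
        simp [this]
      | succ n ih =>
        intro hn
        calc η ^ (n + 1) * ‖f y‖ = η * (η ^ n * ‖f y‖) := by ring
          _ ≤ η * ‖f (hybrid y n x)‖ := by gcongr; exact ih (by omega)
          _ ≤ _ := hcon ⟨n, hn⟩ hxB
    have hd : hybrid y d x = x := by ext i; simp [hybrid]
    have := hstep d le_rfl
    rw [hd] at this
    linarith
  calc Measure.pi (fun _ : Fin d => ν) {x ∈ Metric.ball z r | ‖f x‖ < η ^ d * ‖f y‖}
      ≤ Measure.pi (fun _ : Fin d => ν) (⋃ j, S j) := measure_mono hcover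
    _ ≤ ∑ j, Measure.pi (fun _ : Fin d => ν) (S j) := measure_iUnion_fintype_le _ _
    _ ≤ ∑ _j : Fin d, D * Measure.pi (fun _ : Fin d => ν) (Metric.ball z r) := by
        refine Finset.sum_le_sum fun j _ => ?_
        refine pi_measure_le_of_slice ν j (hSmeas j) Metric.isOpen_ball.measurableSet D fun x => ?_
        by_cases hx : ∀ i, i ≠ j → x i ∈ Metric.ball (z i) r
        · have hw : hybrid y j x ∈ Metric.ball z r := by
            rw [hmem] at *
            intro i; simp only [hybrid]; split_ifs with h
            exacts [hx i (fun e => by subst e; omega), hy i]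
          have hB : {t | Function.update x j t ∈ Metric.ball z r} = Metric.ball (z j) r := by
            ext t
            simp only [Set.mem_ofPred_eq]
            rw [hmem]
            constructor
            · intro h; simpa using h j
            · intro h i
              by_cases e : i = j
              · subst e; simpa using h
              · rw [Function.update_of_ne e]; exact hx i e
          have hslice : {t | Function.update x j t ∈ S j} ⊆
              {t ∈ Metric.ball (z j) r | ‖f (Function.update (hybrid y j x) j t)‖ <
                η * ‖f (Function.update (hybrid y j x) j (y j))‖} := by
            rintro t ⟨ht1, ht2⟩
            rw [hybrid_succ_update, hybrid_update] at ht2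
            rw [update_hybrid_self y x j]
            exact ⟨hB.subset ht1, ht2⟩
          rw [hB]
          exact (measure_mono hslice).trans
            (measure_ball_lt_le ν k (hA j) hr hη hc1 (hc j)
              (fun t => f (Function.update (hybrid y j x) j t)) (z j) (y j) ((hmem y).1 hy j)
              (fun ts h1 h2 => H j _ hw ts h1 h2))
        -- If another coordinate of `x` lies outside the ball, the slice is empty.
        · push Not at hx
          obtain ⟨i, hij, hi⟩ := hx
          have : {t | Function.update x j t ∈ S j} = ∅ := by
            ext t
            simp only [Set.mem_ofPred_eq, Set.mem_empty_iff_false, iff_false]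
            rintro ⟨h1, -⟩
            have := (hmem _).1 h1 i
            rw [Function.update_of_ne hij] at this
            exact hi this
          rw [this]; simp
    _ = _ := by simp

/-- **Theorem 4.4.**  Let `V₁, …, V_d` be nonempty open subsets of `ℚ_p`, `k ∈ ℕ`, and
`A_i, A'_i > 0`.  There are `C, α > 0`, depending only on `k`, `d`, the `A_i` and the
`A'_i` (not on `f`), such that every `C^k` function `f : V₁×⋯×V_d → ℚ_p` with
`A_i ≤ |Φ_i^k f|_p ≤ A'_i` on `∇^{k+1}V_i × ∏_{j≠i} V_j` for each `i` is `(C, α)`-good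
on `V₁×⋯×V_d`. -/
theorem good_from_difference_quotient_bounds
    (p : ℕ) [Fact p.Prime] (d k : ℕ) (hd : 0 < d)
    [MeasurableSpace (Fin d → ℚ_[p])] [BorelSpace (Fin d → ℚ_[p])]
    (μ : Measure (Fin d → ℚ_[p])) [μ.IsAddHaarMeasure]
    (hμ : μ {x : Fin d → ℚ_[p] | ∀ i, ‖x i‖ ≤ 1} = 1)
    (A A' : Fin d → ℝ) (hA : ∀ i, 0 < A i) (hA' : ∀ i, 0 < A' i) :
    ∃ C α : ℝ, 0 < C ∧ 0 < α ∧
      ∀ V : Fin d → Set ℚ_[p], (∀ i, IsOpen (V i)) → (∀ i, (V i).Nonempty) →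
        ∀ f : (Fin d → ℚ_[p]) → ℚ_[p], ContinuousOn f (Set.univ.pi V) →
          (∀ (i : Fin d), ∀ x ∈ Set.univ.pi V, ∀ ts : ℕ → ℚ_[p],
            (∀ m, m ≤ k → ts m ∈ V i) →
            (∀ m m', m ≤ k → m' ≤ k → m ≠ m' → ts m ≠ ts m') →
            A i ≤ ‖diffQuot (fun t => f (Function.update x i t)) k ts‖ ∧
              ‖diffQuot (fun t => f (Function.update x i t)) k ts‖ ≤ A' i) →
          IsGood μ C α (fun x => ‖f x‖) (Set.univ.pi V) := by
  let mK : MeasurableSpace ℚ_[p] := borel ℚ_[p]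
  have : BorelSpace ℚ_[p] := ⟨rfl⟩
  -- The given Borel σ-algebra is the product σ-algebra.
  rename_i m₁ m₂ m₃
  have hm : m₁ = MeasurableSpace.pi := by
    rw [m₂.measurable_eq]
    exact (Pi.borelSpace (X := fun _ : Fin d => ℚ_[p])).measurable_eq.symm
  subst hm
  have hpi : μ = Measure.addHaarScalarFactor μ (Measure.pi fun _ : Fin d => Measure.addHaar) •
      Measure.pi fun _ : Fin d => (Measure.addHaar : Measure ℚ_[p]) :=
    Measure.isAddLeftInvariant_eq_smul _ _
  have hd0 : (0 : ℝ) < d := by exact_mod_cast hd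
  have hp0 : (0 : ℝ) < p := by exact_mod_cast (Fact.out : p.Prime).pos
  set c : ℝ := 1 + ∑ i, A' i / A i with hc
  have hsum : ∀ i, A' i / A i ≤ ∑ i, A' i / A i := fun i =>
    Finset.single_le_sum (f := fun i => A' i / A i)
      (fun j _ => (div_pos (hA' j) (hA j)).le) (Finset.mem_univ i)
  have hc1 : 1 ≤ c := by
    have : 0 ≤ ∑ i, A' i / A i := Finset.sum_nonneg fun j _ => (div_pos (hA' j) (hA j)).le
    linarith
  have hcA : ∀ i, A' i ≤ c * A i := by
    intro i
    rw [← div_le_iff₀ (hA i)]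
    linarith [hsum i]
  set α : ℝ := 1 / (d : ℝ) * (1 / (k + 1 : ℝ)) with hα
  refine ⟨d * ((k + 1) * p * (2 * c) ^ (1 / (k + 1 : ℝ))) * 2 ^ α, α, by positivity,
    by positivity, ?_⟩
  intro V hVo hVne f hf H z r hr hBV ε hε
  have hBsub : ∀ i, Metric.ball (z i) r ⊆ V i := by
    rw [ball_pi _ hr] at hBV
    intro i t ht
    have := hBV (a := Function.update z i t) (by
      intro j _
      by_cases e : j = i
      · subst e; simpa using ht
      · simpa [Function.update_of_ne e] using hr) i trivial
    simpa using this
  set M := ⨆ y ∈ Metric.ball z r, ‖f y‖ with hM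
  by_cases hM0 : M ≤ 0
  · have : {x ∈ Metric.ball z r | ‖f x‖ < ε * M} = ∅ := by
      ext x
      simp only [Set.mem_ofPred_eq, Set.mem_empty_iff_false, iff_false, not_and, not_lt]
      intro _
      exact (mul_nonpos_of_nonneg_of_nonpos hε.le hM0).trans (norm_nonneg _)
    rw [this]; simp
  push Not at hM0
  -- A point at which `‖f‖` is at least half the supremum; it exists also if the family is
  -- unbounded, since then the supremum would take the junk value `0`.
  obtain ⟨y, hy, hyM⟩ : ∃ y ∈ Metric.ball z r, M < 2 * ‖f y‖ := by
    by_contra! hcon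
    have : M ≤ M / 2 := by
      conv_lhs => rw [hM]
      refine Real.iSup_le (fun y => Real.iSup_le (fun hy => ?_) (by positivity)) (by positivity)
      linarith [hcon y hy]
    linarith
  set η : ℝ := (2 * ε) ^ (1 / (d : ℝ)) with hη
  have hη0 : 0 < η := by positivity
  have hηd : η ^ d = 2 * ε := by
    rw [hη, ← Real.rpow_natCast, ← Real.rpow_mul (by positivity),
      one_div_mul_cancel hd0.ne', Real.rpow_one]
  have hsubset : {x ∈ Metric.ball z r | ‖f x‖ < ε * M} ⊆
      {x ∈ Metric.ball z r | ‖f x‖ < η ^ d * ‖f y‖} := by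
    rintro x ⟨h1, h2⟩
    refine ⟨h1, h2.trans ?_⟩
    rw [hηd]
    nlinarith
  have key := pi_measure_ball_lt_le (Measure.addHaar : Measure ℚ_[p]) d k hA hr hη0 hc1 hcA f z y
    hy (hf.mono hBV) (fun i x hx ts h1 h2 => H i x (hBV hx) ts (fun m hm => hBsub i (h1 m hm)) h2)
  have hcon : (d : ENNReal) * ENNReal.ofReal
      ((k + 1) * p * (2 * c) ^ (1 / (k + 1 : ℝ)) * η ^ (1 / (k + 1 : ℝ))) =
      ENNReal.ofReal (d * ((k + 1) * p * (2 * c) ^ (1 / (k + 1 : ℝ))) * 2 ^ α * ε ^ α) := by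
    rw [← ENNReal.ofReal_natCast, ← ENNReal.ofReal_mul (by positivity), hη,
      ← Real.rpow_mul (by positivity), ← hα, Real.mul_rpow (by positivity) hε.le]
    congr 1; ring
  rw [← mul_assoc, hcon] at key
  rw [hpi, Measure.smul_apply, Measure.smul_apply, ENNReal.smul_def, ENNReal.smul_def,
    smul_eq_mul, smul_eq_mul, mul_left_comm]
  gcongr
  exact (measure_mono hsubset).trans key
end

section
/- Let p be a prime and let f₁,…,f_n be analytic functions from a neighborhood U of x₀ ∈ ℚ_p^m to ℚ_p such that 1, f₁,…,f_n are linearly independent over ℚ_p on any neighborhood of x₀. Then there exist a neighborhood V ⊆ U of x₀ and constants C, α > 0 such that every ℚ_p-linear combination c₀ + c₁f₁ + ⋯ + c_nf_n (c₀,…,c_n ∈ ℚ_p) is (C, α)-good on V. -/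
/-!
The idea is that, on every sufficiently small ball, a combination `g = ∑ cᵢ Fᵢ` of the functions
`1, f₁, …, f_n` is, after rescaling the ball to the unit ball, a polynomial of bounded degree up to
a relatively small error, and polynomials of bounded degree are uniformly good by compactness.

*Reduction to polynomials.* Linear independence bounds the order of vanishing at `x₀` of all nonzero
combinations by some `k` (`exists_order_bound`): the combinations vanishing to order `k` form a
decreasing sequence of subspaces of a finite-dimensional space, with trivial intersection. Hence the
Taylor coefficients of order at most `k` of `∑ cᵢ Fᵢ`, at any centre `z` near `x₀`, have size at least
a constant times `‖c‖`, while the remainder is `O(‖c‖ ‖u‖ ^ (k + 1))`, uniformly in `z`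
(`exists_uniform_taylor`). Rescaling a ball of radius `r` multiplies the coefficients by at least
`r ^ k` and the remainder by `r ^ (k + 1)`, so the remainder becomes negligible
(`exists_rescaled_approx`).

*Polynomials.* By compactness, a polynomial of degree at most `k` on the unit ball with largest
coefficient of size `1` is bounded below at some point of every sub-ball of a given radius
(`exists_le_norm_polyEval`), and on the whole of at least one sub-ball of suitable radius
(`exists_closedBall_le_norm_polyEval`).

*Decay.* By the two facts above, every small ball `D` splits into sub-balls of equal radius, on one
of which `‖g‖ ≥ η sup_D ‖g‖` throughout, while `‖g‖` reaches `η sup_D ‖g‖` on each of the others.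
Iterating, `‖g‖ < η ^ j sup_D ‖g‖` holds on a subset of `D` of relative measure at most `θ ^ j`, with
`θ < 1` independent of `D` and `c` (`measure_lt_pow_mul_le`). This gives `α = log θ / log η` and
`C = θ⁻¹` (`isGood_of_decay`). Every open ball inside a closed ball around `x₀` is a closed ball with
radius a power of `p`, so it suffices to treat the latter.
-/

open MeasureTheory

open MeasureTheory

/-! ### Decay of sublevel sets under subdivision of balls -/

/-- Geometric decay of sublevel sets, by induction on the level `j`. In a ball `D` of level `N`
the balls of level `N + s` partition `D`. On one of them `g ≥ η * sup g` throughout (`hone`), so it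
contributes nothing and what is left has relative measure at most `θ`. On each of the others `g`
still reaches `η * sup g` somewhere (`hmany`), so the induction hypothesis applies to it. The number
`t` stands for any lower bound of `sup g`. -/
theorem measure_lt_pow_mul_le {E : Type*} [PseudoMetricSpace E] [IsUltrametricDist E]
    [TopologicalSpace.SeparableSpace E] [MeasurableSpace E] [BorelSpace E] (μ : Measure E)
    (R : ℕ → ℝ) (hR : ∀ N, 0 < R N) (hRa : Antitone R) (s N₁ : ℕ) (η : ℝ) (hη0 : 0 ≤ η)
    (hη1 : η ≤ 1) (g : E → ℝ) (V : Set E) (θ : ENNReal)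
    (hθ : ∀ z N, ∀ w ∈ Metric.closedBall z (R N),
      μ (Metric.closedBall z (R N) \ Metric.closedBall w (R (N + s))) ≤
        θ * μ (Metric.closedBall z (R N)))
    (hmany : ∀ z N, N₁ ≤ N → Metric.closedBall z (R N) ⊆ V →
      ∀ w ∈ Metric.closedBall z (R N), ∀ x ∈ Metric.closedBall z (R N),
        ∃ y ∈ Metric.closedBall w (R (N + s)), η * g x ≤ g y)
    (hone : ∀ z N, N₁ ≤ N → Metric.closedBall z (R N) ⊆ V →
      ∃ w ∈ Metric.closedBall z (R N), ∀ y ∈ Metric.closedBall w (R (N + s)),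
        ∀ x ∈ Metric.closedBall z (R N), η * g x ≤ g y) :
    ∀ (j : ℕ) (z : E) (N : ℕ) (t : ℝ), N₁ ≤ N → Metric.closedBall z (R N) ⊆ V → 0 ≤ t →
      (∃ x ∈ Metric.closedBall z (R N), t ≤ g x) →
      μ {y ∈ Metric.closedBall z (R N) | g y < η ^ j * t} ≤
        θ ^ j * μ (Metric.closedBall z (R N)) := by
  intro j
  induction j with
  | zero =>
    intro z N t _ _ _ _
    simpa using measure_mono (fun y hy => hy.1)
  | succ j ih =>
    intro z N t hN hV ht hx
    obtain ⟨x, hx, htx⟩ := hx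
    obtain ⟨w₀, hw₀, hgood⟩ := hone z N hN hV
    set D := Metric.closedBall z (R N) with hD
    set D₀ := Metric.closedBall w₀ (R (N + s)) with hD₀
    set A := {y ∈ D | g y < η ^ (j + 1) * t} with hA
    have hsub : ∀ w ∈ D, Metric.closedBall w (R (N + s)) ⊆ D := by
      intro w hw
      rw [hD, IsUltrametricDist.closedBall_eq_of_mem hw]
      exact Metric.closedBall_subset_closedBall (hRa (Nat.le_add_right _ _))
    -- the sub-balls of `D` other than `D₀`
    set T : Set (Set E) := (fun w => Metric.closedBall w (R (N + s))) '' (D \ D₀) with hT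
    have hTd : T.PairwiseDisjoint id := by
      rintro _ ⟨w, -, rfl⟩ _ ⟨w', -, rfl⟩ hne
      exact (IsUltrametricDist.closedBall_eq_or_disjoint _ _ _).resolve_left hne
    have hTc : T.Countable := by
      refine hTd.countable_of_isOpen ?_ ?_
      · rintro _ ⟨w, -, rfl⟩
        exact IsUltrametricDist.isOpen_closedBall _ (hR _).ne'
      · rintro _ ⟨w, -, rfl⟩
        exact ⟨w, Metric.mem_closedBall_self (hR _).le⟩
    have hTm : ∀ B ∈ T, MeasurableSet B := by
      rintro _ ⟨w, -, rfl⟩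
      exact Metric.isClosed_closedBall.measurableSet
    have hTD : ⋃₀ T ⊆ D \ D₀ := by
      rintro y ⟨_, ⟨w, hw, rfl⟩, hy⟩
      refine ⟨hsub w hw.1 hy, fun hy0 => hw.2 ?_⟩
      have h1 := IsUltrametricDist.closedBall_eq_of_mem hy
      have h2 := IsUltrametricDist.closedBall_eq_of_mem hy0
      rw [hD₀, h2, ← h1]
      exact Metric.mem_closedBall_self (hR _).le
    have hAT : A ⊆ ⋃ B ∈ T, A ∩ B := by
      intro y hy
      have hy0 : y ∉ D₀ := by
        intro hy0
        have h1 := hgood y hy0 x hx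
        have h2 : η ^ (j + 1) * t ≤ η * t := by
          have : η ^ (j + 1) ≤ η := pow_le_of_le_one hη0 hη1 (Nat.succ_ne_zero _)
          gcongr
        have h3 : η * t ≤ η * g x := by gcongr
        linarith [hy.2]
      simp only [Set.mem_iUnion]
      exact ⟨_, ⟨y, ⟨hy.1, hy0⟩, rfl⟩, hy, Metric.mem_closedBall_self (hR _).le⟩
    calc μ A ≤ μ (⋃ B ∈ T, A ∩ B) := measure_mono hAT
      _ ≤ ∑' B : T, μ (A ∩ B) := measure_biUnion_le _ hTc _
      _ ≤ ∑' B : T, θ ^ j * μ (B : Set E) := by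
          refine ENNReal.tsum_le_tsum ?_
          rintro ⟨_, w, hw, rfl⟩
          have hy := hmany z N hN hV w hw.1 x hx
          obtain ⟨y, hy, hgy⟩ := hy
          refine le_trans (measure_mono ?_) (ih w (N + s) (η * t) (hN.trans (Nat.le_add_right _ _))
            ((hsub w hw.1).trans hV) (by positivity)
            ⟨y, hy, le_trans (by gcongr) hgy⟩)
          rintro v ⟨hv, hv'⟩
          refine ⟨hv', ?_⟩
          have := hv.2
          rwa [pow_succ, mul_assoc] at this
      _ = θ ^ j * μ (⋃₀ T) := by
          rw [ENNReal.tsum_mul_left, measure_sUnion hTc hTd hTm]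
      _ ≤ θ ^ j * (θ * μ D) := by
          gcongr
          exact (measure_mono hTD).trans (hθ z N w₀ hw₀)
      _ = θ ^ (j + 1) * μ D := by rw [pow_succ, mul_assoc]

/-- Removing a ball of level `N + s` from a ball of level `N` leaves a proportion at most `θ < 1`,
uniformly in `N`: up to translation and scaling, a fixed finite number of balls of level `s` covers
the unit ball. -/
theorem exists_measure_diff_le {p : ℕ} [Fact p.Prime] {m : ℕ}
    [MeasurableSpace (Fin m → ℚ_[p])] [BorelSpace (Fin m → ℚ_[p])]
    (μ : Measure (Fin m → ℚ_[p])) [μ.IsAddHaarMeasure] (s : ℕ) :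
    ∃ θ : ℝ, 0 < θ ∧ θ < 1 ∧ ∀ (z : Fin m → ℚ_[p]) (N : ℕ),
      ∀ w ∈ Metric.closedBall z (((p : ℝ) ^ N)⁻¹),
      μ (Metric.closedBall z (((p : ℝ) ^ N)⁻¹) \ Metric.closedBall w (((p : ℝ) ^ (N + s))⁻¹)) ≤
        ENNReal.ofReal θ * μ (Metric.closedBall z (((p : ℝ) ^ N)⁻¹)) := by
  have hp : (1 : ℝ) < p := by exact_mod_cast (Fact.out : p.Prime).one_lt
  have hp0 : (p : ℚ_[p]) ≠ 0 := by exact_mod_cast (Fact.out : p.Prime).ne_zero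
  have hpn : ∀ N : ℕ, ‖(p : ℚ_[p]) ^ N‖ = ((p : ℝ) ^ N)⁻¹ := by
    intro N; rw [norm_pow, Padic.norm_p, inv_pow]
  obtain ⟨t, -, htf, htc⟩ := (isCompact_closedBall (0 : Fin m → ℚ_[p]) 1).finite_cover_balls
    (e := ((p : ℝ) ^ s)⁻¹) (by positivity)
  obtain ⟨t, rfl⟩ := htf.exists_finset_coe
  have hcov : ∀ (z w : Fin m → ℚ_[p]) (N : ℕ), μ (Metric.closedBall z (((p : ℝ) ^ N)⁻¹)) ≤
      (t.card + 2 : ℕ) * μ (Metric.closedBall w (((p : ℝ) ^ (N + s))⁻¹)) := by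
    intro z w N
    have hc : Metric.closedBall z (((p : ℝ) ^ N)⁻¹) ⊆ ⋃ v ∈ t,
        Metric.closedBall (z + (p : ℚ_[p]) ^ N • v) (((p : ℝ) ^ (N + s))⁻¹) := by
      intro x hx
      have hx1 : ((p : ℚ_[p]) ^ N)⁻¹ • (x - z) ∈ Metric.closedBall (0 : Fin m → ℚ_[p]) 1 := by
        rw [mem_closedBall_zero_iff, norm_smul, norm_inv, hpn, inv_inv]
        rw [mem_closedBall_iff_norm] at hx
        calc (p : ℝ) ^ N * ‖x - z‖ ≤ (p : ℝ) ^ N * ((p : ℝ) ^ N)⁻¹ := by gcongr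
          _ = 1 := mul_inv_cancel₀ (by positivity)
      have := htc hx1
      simp only [Set.mem_iUnion] at this ⊢
      obtain ⟨v, hv, hxv⟩ := this
      refine ⟨v, hv, ?_⟩
      rw [mem_ball_iff_norm] at hxv
      have : x - (z + (p : ℚ_[p]) ^ N • v) =
          (p : ℚ_[p]) ^ N • (((p : ℚ_[p]) ^ N)⁻¹ • (x - z) - v) := by
        rw [smul_sub, smul_inv_smul₀ (pow_ne_zero _ hp0)]; abel
      rw [mem_closedBall_iff_norm, this, norm_smul, hpn, pow_add, mul_inv]
      gcongr
    have htr : ∀ a : Fin m → ℚ_[p], μ (Metric.closedBall a (((p : ℝ) ^ (N + s))⁻¹)) =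
        μ (Metric.closedBall w (((p : ℝ) ^ (N + s))⁻¹)) := by
      intro a
      rw [← measure_preimage_add μ (a - w) (Metric.closedBall a _)]
      congr 1
      ext x
      simp only [Set.mem_preimage, mem_closedBall_iff_norm]
      congr! 2
      abel
    calc _ ≤ μ (⋃ v ∈ t,
        Metric.closedBall (z + (p : ℚ_[p]) ^ N • v) (((p : ℝ) ^ (N + s))⁻¹)) := measure_mono hc
      _ ≤ ∑ v ∈ t, μ (Metric.closedBall (z + (p : ℚ_[p]) ^ N • v) (((p : ℝ) ^ (N + s))⁻¹)) :=
        measure_biUnion_finset_le _ _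
      _ = t.card * μ (Metric.closedBall w (((p : ℝ) ^ (N + s))⁻¹)) := by
        simp only [htr, Finset.sum_const, nsmul_eq_mul]
      _ ≤ _ := by gcongr; omega
  have hK : (2 : ℝ) ≤ (t.card + 2 : ℕ) := by push_cast; linarith [(Nat.cast_nonneg t.card : (0:ℝ) ≤ _)]
  set K : ℕ := t.card + 2 with hKdef
  have hK1 : ((K : ℝ))⁻¹ ≤ 2⁻¹ := by gcongr
  have hK0 : 0 < (K : ℝ)⁻¹ := by positivity
  refine ⟨1 - (K : ℝ)⁻¹, by linarith, by linarith, ?_⟩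
  intro z N w hw
  have hsub : Metric.closedBall w (((p : ℝ) ^ (N + s))⁻¹) ⊆
      Metric.closedBall z (((p : ℝ) ^ N)⁻¹) := by
    rw [IsUltrametricDist.closedBall_eq_of_mem hw]
    refine Metric.closedBall_subset_closedBall ?_
    gcongr
    · exact hp.le
    · omega
  have hfin : ∀ (w : Fin m → ℚ_[p]) r, μ (Metric.closedBall w r) ≠ ⊤ := fun w r =>
    (isCompact_closedBall w r).measure_lt_top.ne
  rw [measure_sdiff hsub Metric.isClosed_closedBall.nullMeasurableSet (hfin _ _),
    ENNReal.ofReal_sub _ hK0.le, ENNReal.sub_mul (fun _ _ => hfin _ _), ENNReal.ofReal_one, one_mul,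
    ENNReal.ofReal_inv_of_pos (by positivity), ENNReal.ofReal_natCast]
  refine tsub_le_tsub_left ?_ _
  rw [mul_comm, ← div_eq_mul_inv]
  exact ENNReal.div_le_of_le_mul' (hcov z w N)

/-! ### From geometric decay to a power law -/

/-- An open ball inside a closed ball of radius `p ^ (-N₁)` equals a closed ball of radius `p ^ (-N)`
with `N ≥ N₁`. The radius `r` itself may exceed `p ^ (-N₁)`, in which case `N = N₁`. -/
theorem exists_ball_eq_closedBall {p : ℕ} [Fact p.Prime] {m : ℕ} (x₀ z : Fin m → ℚ_[p]) (N₁ : ℕ)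
    (r : ℝ) (hr : 0 < r)
    (h : Metric.ball z r ⊆ Metric.closedBall x₀ (((p : ℝ) ^ N₁)⁻¹)) :
    ∃ N, N₁ ≤ N ∧ Metric.ball z r = Metric.closedBall z (((p : ℝ) ^ N)⁻¹) := by
  have hp : (1 : ℝ) < p := by exact_mod_cast (Fact.out : p.Prime).one_lt
  rcases lt_or_ge (((p : ℝ) ^ N₁)⁻¹) r with hlt | hge
  · refine ⟨N₁, le_rfl, Set.Subset.antisymm ?_ (Metric.closedBall_subset_ball hlt)⟩
    rwa [← IsUltrametricDist.closedBall_eq_of_mem (h (Metric.mem_ball_self hr))]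
  · obtain ⟨n, hn1, hn2⟩ := exists_nat_pow_near_of_lt_one hr
      (hge.trans (inv_le_one_of_one_le₀ (one_le_pow₀ hp.le))) (inv_pos.2 (zero_lt_one.trans hp))
      (inv_lt_one_of_one_lt₀ hp)
    rw [← inv_pow] at hge
    have hlt := (pow_lt_pow_iff_right_of_lt_one₀ (inv_pos.2 (zero_lt_one.trans hp))
      (inv_lt_one_of_one_lt₀ hp)).1 (hn1.trans_le hge)
    refine ⟨n + 1, hlt.le, Set.Subset.antisymm ?_ (Metric.closedBall_subset_ball ?_)⟩
    · intro x hx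
      rw [mem_ball_iff_norm] at hx
      rw [mem_closedBall_iff_norm, pi_norm_le_iff_of_nonneg (by positivity)]
      intro i
      have h1 : ‖(x - z) i‖ < (p : ℝ) ^ ((-(n + 1 : ℕ) : ℤ) + 1) := by
        refine (norm_le_pi_norm (x - z) i).trans_lt ((hx.trans_le hn2).trans_eq ?_)
        rw [inv_pow, ← zpow_natCast, ← zpow_neg]
        congr 1
        push_cast; ring
      have h2 := (Padic.norm_le_pow_iff_norm_lt_pow_add_one ((x - z) i) _).2 h1
      rwa [zpow_neg, zpow_natCast] at h2
    · rwa [← inv_pow]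

/-- Passage from geometric decay along the scale `η ^ j` to a power law: if the sublevel sets at
heights `η ^ j * max g` have relative measure at most `θ ^ j`, then `α = log θ / log η` works. -/
theorem isGood_of_decay {p : ℕ} [Fact p.Prime] {m : ℕ}
    [MeasurableSpace (Fin m → ℚ_[p])] (μ : Measure (Fin m → ℚ_[p])) (x₀ : Fin m → ℚ_[p]) (N₁ : ℕ)
    (η θ α : ℝ) (hη0 : 0 < η) (hη1 : η < 1) (hθ0 : 0 < θ) (hθ1 : θ < 1)
    (hα : η ^ α = θ) (hα0 : 0 < α) (g : (Fin m → ℚ_[p]) → ℝ) (hg0 : ∀ x, 0 ≤ g x)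
    (hgc : ContinuousOn g (Metric.closedBall x₀ (((p : ℝ) ^ N₁)⁻¹)))
    (hdecay : ∀ (j : ℕ) (z : Fin m → ℚ_[p]) (N : ℕ) (t : ℝ), N₁ ≤ N →
      Metric.closedBall z (((p : ℝ) ^ N)⁻¹) ⊆ Metric.closedBall x₀ (((p : ℝ) ^ N₁)⁻¹) → 0 ≤ t →
      (∃ x ∈ Metric.closedBall z (((p : ℝ) ^ N)⁻¹), t ≤ g x) →
      μ {y ∈ Metric.closedBall z (((p : ℝ) ^ N)⁻¹) | g y < η ^ j * t} ≤
        ENNReal.ofReal θ ^ j * μ (Metric.closedBall z (((p : ℝ) ^ N)⁻¹))) :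
    IsGood μ θ⁻¹ α g (Metric.closedBall x₀ (((p : ℝ) ^ N₁)⁻¹)) := by
  intro z r hr hV ε hε
  obtain ⟨N, hN, hB⟩ := exists_ball_eq_closedBall x₀ z N₁ r hr hV
  rw [hB] at hV ⊢
  have hp : (0 : ℝ) < p := by exact_mod_cast (Fact.out : p.Prime).pos
  set D := Metric.closedBall z (((p : ℝ) ^ N)⁻¹) with hD
  rcases le_or_gt 1 ε with h1 | h1
  · calc _ ≤ μ D := measure_mono (fun x hx => hx.1)
      _ = 1 * μ D := (one_mul _).symm
      _ ≤ _ := by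
        gcongr
        rw [ENNReal.one_le_ofReal]
        have h2 : 1 ≤ θ⁻¹ := (one_le_inv₀ hθ0).2 hθ1.le
        have h3 : 1 ≤ ε ^ α := Real.one_le_rpow h1 hα0.le
        nlinarith
  obtain ⟨xm, hxm, hmax⟩ := (isCompact_closedBall z (((p : ℝ) ^ N)⁻¹)).exists_isMaxOn
    ⟨z, Metric.mem_closedBall_self (by positivity)⟩ (hgc.mono hV)
  have hsup : ⨆ y ∈ D, g y ≤ g xm :=
    Real.iSup_le (fun y => Real.iSup_le (fun hy => hmax hy) (hg0 _)) (hg0 _)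
  obtain ⟨j, hj1, hj2⟩ := exists_nat_pow_near_of_lt_one hε h1.le hη0 hη1
  calc μ {x ∈ D | g x < ε * ⨆ y ∈ D, g y} ≤ μ {y ∈ D | g y < η ^ j * g xm} := by
        refine measure_mono fun x hx => ⟨hx.1, hx.2.trans_le ?_⟩
        have := hg0 xm
        calc ε * ⨆ y ∈ D, g y ≤ ε * g xm := by gcongr
          _ ≤ _ := by gcongr
    _ ≤ ENNReal.ofReal θ ^ j * μ D := hdecay j z N _ hN hV (hg0 _) ⟨xm, hxm, le_rfl⟩
    _ ≤ _ := by
      rw [← ENNReal.ofReal_pow hθ0.le]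
      gcongr
      have h2 : θ ^ (j + 1) ≤ ε ^ α := by
        rw [← hα, ← Real.rpow_mul_natCast hη0.le, mul_comm, Real.rpow_natCast_mul hη0.le]
        exact Real.rpow_le_rpow (by positivity) hj1.le hα0.le
      rw [pow_succ] at h2
      rw [inv_mul_eq_div, le_div_iff₀ hθ0]
      exact h2

/-! ### Polynomials of bounded degree -/

/-- Multi-indices in `m` variables of total degree at most `k`, with each exponent encoded in
`Fin (k + 1)` so that the type is visibly finite. -/
abbrev MIdx (m k : ℕ) : Type := {α : Fin m → Fin (k + 1) // ∑ i, (α i : ℕ) ≤ k}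

/-- The monomial `u ^ α`. -/
noncomputable def mon {p : ℕ} [Fact p.Prime] {m k : ℕ} (α : MIdx m k) (u : Fin m → ℚ_[p]) : ℚ_[p] :=
  ∏ i, u i ^ (α.1 i : ℕ)

/-- The polynomial function `u ↦ ∑ a_α u ^ α` of degree at most `k`. -/
noncomputable def polyEval {p : ℕ} [Fact p.Prime] {m k : ℕ} (a : MIdx m k → ℚ_[p]) (u : Fin m → ℚ_[p]) :
    ℚ_[p] :=
  ∑ α, a α * mon α u

section Poly
variable {p : ℕ} [Fact p.Prime] {m k : ℕ}

theorem continuous_mon (α : MIdx m k) : Continuous (mon (p := p) α) := by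
  unfold mon; fun_prop

theorem continuous_polyEval :
    Continuous (fun q : (MIdx m k → ℚ_[p]) × (Fin m → ℚ_[p]) => polyEval q.1 q.2) := by
  unfold polyEval mon; fun_prop

theorem norm_mon_le (α : MIdx m k) (u : Fin m → ℚ_[p]) (hu : ‖u‖ ≤ 1) : ‖mon α u‖ ≤ 1 := by
  unfold mon
  rw [norm_prod]
  refine Finset.prod_le_one (fun _ _ => norm_nonneg _) fun i _ => ?_
  rw [norm_pow]
  exact pow_le_one₀ (norm_nonneg _) ((norm_le_pi_norm u i).trans hu)

theorem norm_polyEval_le (a : MIdx m k → ℚ_[p]) (u : Fin m → ℚ_[p]) (hu : ‖u‖ ≤ 1) :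
    ‖polyEval a u‖ ≤ Fintype.card (MIdx m k) * ‖a‖ := by
  unfold polyEval
  refine (norm_sum_le _ _).trans ((Finset.sum_le_card_nsmul _ _ ‖a‖ fun α _ => ?_).trans_eq ?_)
  · rw [norm_mul]
    exact (mul_le_of_le_one_right (norm_nonneg _) (norm_mon_le α u hu)).trans (norm_le_pi_norm a α)
  · rw [nsmul_eq_mul, Finset.card_univ]

/-- A polynomial vanishing on a ball is zero, because a ball is a product of infinite sets. -/
theorem eq_zero_of_polyEval_eq_zero (a : MIdx m k → ℚ_[p]) (w : Fin m → ℚ_[p]) (ρ : ℝ)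
    (hρ : 0 < ρ) (h : ∀ u ∈ Metric.closedBall w ρ, polyEval a u = 0) : a = 0 := by
  classical
  let e : MIdx m k → (Fin m →₀ ℕ) := fun α => Finsupp.equivFunOnFinite.symm fun i => (α.1 i : ℕ)
  have he : Function.Injective e := by
    intro α β hαβ
    apply Subtype.ext
    funext i
    have := DFunLike.congr_fun hαβ i
    exact Fin.ext this
  let P : MvPolynomial (Fin m) ℚ_[p] := ∑ α, MvPolynomial.monomial (e α) (a α)
  have hP : P = 0 := by
    refine MvPolynomial.funext_set (fun i => Metric.closedBall (w i) ρ)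
      (fun i => infinite_of_mem_nhds (w i) (Metric.closedBall_mem_nhds _ hρ)) fun x hx => ?_
    rw [map_zero, ← h x ?_]
    · simp only [P, polyEval, mon, map_sum, MvPolynomial.eval_monomial]
      refine Finset.sum_congr rfl fun α _ => ?_
      rw [Finsupp.prod_fintype _ _ (fun i => pow_zero _)]
      rfl
    · rw [closedBall_pi _ hρ.le]; exact hx
  funext α
  have := congrArg (MvPolynomial.coeff (e α)) hP
  simpa [P, MvPolynomial.coeff_sum, MvPolynomial.coeff_monomial, he.eq_iff] using this

/-- A polynomial of bounded degree is not small on any ball of fixed radius inside the unit ball,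
relative to its largest coefficient. This is compactness of the unit sphere of coefficient vectors
together with the fact that a nonzero polynomial does not vanish on a ball. -/
theorem exists_le_norm_polyEval (m k : ℕ) (ρ : ℝ) (hρ : 0 < ρ) :
    ∃ κ : ℝ, 0 < κ ∧ ∀ (a : MIdx m k → ℚ_[p]) (w : Fin m → ℚ_[p]), ‖w‖ ≤ 1 →
      ∃ u ∈ Metric.closedBall w ρ, κ * ‖a‖ ≤ ‖polyEval a u‖ := by
  have key : ∃ κ : ℝ, 0 < κ ∧ ∀ q ∈ (Metric.sphere (0 : MIdx m k → ℚ_[p]) 1) ×ˢ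
      (Metric.closedBall (0 : Fin m → ℚ_[p]) 1),
      ∃ u ∈ Metric.closedBall q.2 ρ, κ ≤ ‖polyEval q.1 u‖ := by
    refine ((isCompact_sphere _ _).prod (isCompact_closedBall _ _)).induction_on
      (p := fun S => ∃ κ : ℝ, 0 < κ ∧ ∀ q ∈ S,
        ∃ u ∈ Metric.closedBall q.2 ρ, κ ≤ ‖polyEval q.1 u‖) ?_ ?_ ?_ ?_
    · exact ⟨1, one_pos, by simp⟩
    · rintro S T hST ⟨κ, hκ, h⟩
      exact ⟨κ, hκ, fun q hq => h q (hST hq)⟩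
    · rintro S T ⟨κ, hκ, h⟩ ⟨κ', hκ', h'⟩
      refine ⟨min κ κ', lt_min hκ hκ', ?_⟩
      rintro q (hq | hq)
      · obtain ⟨u, hu, h1⟩ := h q hq
        exact ⟨u, hu, (min_le_left _ _).trans h1⟩
      · obtain ⟨u, hu, h1⟩ := h' q hq
        exact ⟨u, hu, (min_le_right _ _).trans h1⟩
    · rintro ⟨a, w⟩ ⟨ha, -⟩
      have ha0 : a ≠ 0 := by
        rintro rfl
        simp at ha
      obtain ⟨u, hu, hne⟩ : ∃ u ∈ Metric.closedBall w ρ, polyEval a u ≠ 0 := by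
        by_contra! hcon
        exact ha0 (eq_zero_of_polyEval_eq_zero a w ρ hρ hcon)
      have hc : Continuous fun a : MIdx m k → ℚ_[p] => ‖polyEval a u‖ :=
        (continuous_polyEval.comp (by fun_prop : Continuous fun a => (a, u))).norm
      have h1 : ∀ᶠ a' in nhds a, ‖polyEval a u‖ / 2 < ‖polyEval a' u‖ :=
        hc.continuousAt.eventually_const_lt (half_lt_self (norm_pos_iff.2 hne))
      have h3 : ∀ᶠ w' in nhds w, w' ∈ Metric.closedBall w ρ := Metric.closedBall_mem_nhds w hρ
      have h2 : ∀ᶠ q : (MIdx m k → ℚ_[p]) × (Fin m → ℚ_[p]) in nhds (a, w),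
          ‖polyEval a u‖ / 2 < ‖polyEval q.1 u‖ ∧ q.2 ∈ Metric.closedBall w ρ :=
        (h1.prod_inl_nhds w).and (h3.prod_inr_nhds a)
      refine ⟨_, mem_nhdsWithin_of_mem_nhds h2, ‖polyEval a u‖ / 2,
        half_pos (norm_pos_iff.2 hne), ?_⟩
      rintro ⟨a', w'⟩ ⟨hq1, hq2⟩
      refine ⟨u, ?_, hq1.le⟩
      rwa [← IsUltrametricDist.closedBall_eq_of_mem hq2]
  obtain ⟨κ, hκ, h⟩ := key
  refine ⟨κ, hκ, fun a w hw => ?_⟩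
  rcases eq_or_ne a 0 with rfl | ha
  · exact ⟨w, Metric.mem_closedBall_self hρ.le, by simp⟩
  -- some coefficient has absolute value `‖a‖`, so it can be used to normalise `a`
  obtain ⟨α, hα⟩ : ∃ α, ‖a α‖ = ‖a‖ := by
    have : Nonempty (MIdx m k) := by
      by_contra hem
      rw [not_nonempty_iff] at hem
      exact ha (Subsingleton.elim _ _)
    obtain ⟨α, hα⟩ := Finite.exists_max fun α => ‖a α‖
    exact ⟨α, le_antisymm (norm_le_pi_norm a α) ((pi_norm_le_iff_of_nonneg (norm_nonneg _)).2 hα)⟩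
  have hn : 0 < ‖a α‖ := hα ▸ norm_pos_iff.2 ha
  obtain ⟨u, hu, hle⟩ := h ((a α)⁻¹ • a, w) ⟨by
    simp only [mem_sphere_zero_iff_norm, norm_smul, norm_inv, ← hα]
    exact inv_mul_cancel₀ hn.ne', by simpa using hw⟩
  refine ⟨u, hu, ?_⟩
  have hs : polyEval ((a α)⁻¹ • a) u = (a α)⁻¹ * polyEval a u := by
    simp only [polyEval, Finset.mul_sum, Pi.smul_apply, smul_eq_mul, mul_assoc]
  simp only [hs, norm_mul, norm_inv] at hle
  rw [← hα]
  rw [inv_mul_eq_div, le_div_iff₀ hn] at hle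
  exact hle

/-- Around a point where a polynomial is comparable to its largest coefficient it stays so on a
ball whose radius depends on the degree only. -/
theorem exists_closedBall_le_norm_polyEval (p : ℕ) [Fact p.Prime] (m k : ℕ) :
    ∃ (s : ℕ) (κ : ℝ), 0 < κ ∧ ∀ a : MIdx m k → ℚ_[p], ∃ v₀ : Fin m → ℚ_[p], ‖v₀‖ ≤ 1 ∧
      ∀ v ∈ Metric.closedBall v₀ (((p : ℝ) ^ s)⁻¹), κ * ‖a‖ ≤ ‖polyEval a v‖ := by
  have hp : (1 : ℝ) < p := by exact_mod_cast (Fact.out : p.Prime).one_lt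
  obtain ⟨κ, hκ, h⟩ := exists_le_norm_polyEval (p := p) m k 1 one_pos
  have huc : UniformContinuousOn
      (fun v => (fun α => mon α v : MIdx m k → ℚ_[p])) (Metric.closedBall 0 1) :=
    (isCompact_closedBall _ _).uniformContinuousOn_of_continuous
      (continuous_pi fun α => continuous_mon α).continuousOn
  obtain ⟨δ, hδ, huc⟩ := Metric.uniformContinuousOn_iff.1 huc
    (κ / (2 * (Fintype.card (MIdx m k) + 1))) (by positivity)
  obtain ⟨s, hs⟩ := exists_pow_lt_of_lt_one hδ (inv_lt_one_of_one_lt₀ hp)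
  rw [inv_pow] at hs
  refine ⟨s, κ / 2, half_pos hκ, fun a => ?_⟩
  obtain ⟨v₀, hv₀, hle⟩ := h a 0 (by simp)
  rw [mem_closedBall_zero_iff] at hv₀
  refine ⟨v₀, hv₀, fun v hv => ?_⟩
  have hv1 : v ∈ Metric.closedBall (0 : Fin m → ℚ_[p]) 1 := by
    have h0 : (0 : Fin m → ℚ_[p]) ∈ Metric.closedBall v₀ 1 := by simpa using hv₀
    rw [← IsUltrametricDist.closedBall_eq_of_mem h0]
    refine Metric.closedBall_subset_closedBall ?_ hv
    exact inv_le_one_of_one_le₀ (one_le_pow₀ hp.le)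
  have hd := huc v hv1 v₀ (by simpa using hv₀) ((Metric.mem_closedBall.1 hv).trans_lt hs)
  have hdiff : ‖polyEval a v - polyEval a v₀‖ ≤ κ / 2 * ‖a‖ := by
    unfold polyEval
    rw [← Finset.sum_sub_distrib]
    refine (norm_sum_le _ _).trans ((Finset.sum_le_card_nsmul _ _
      (‖a‖ * (κ / (2 * (Fintype.card (MIdx m k) + 1)))) fun α _ => ?_).trans ?_)
    · rw [← mul_sub, norm_mul]
      gcongr
      · exact norm_le_pi_norm a α
      · rw [← dist_eq_norm]
        exact (dist_le_pi_dist (fun α => mon α v) (fun α => mon α v₀) α).trans hd.le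
    · rw [nsmul_eq_mul, Finset.card_univ]
      have hc : (0 : ℝ) ≤ Fintype.card (MIdx m k) := Nat.cast_nonneg _
      have : (Fintype.card (MIdx m k) : ℝ) * (‖a‖ * (κ / (2 * (Fintype.card (MIdx m k) + 1)))) =
        (Fintype.card (MIdx m k) / (Fintype.card (MIdx m k) + 1)) * (κ / 2 * ‖a‖) := by
        field_simp
      rw [this]
      refine mul_le_of_le_one_left (by positivity) ?_
      rw [div_le_one (by positivity)]
      linarith
  have := norm_sub_norm_le (polyEval a v₀) (polyEval a v)
  rw [norm_sub_rev] at this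
  linarith

theorem polyEval_smul (a : MIdx m k → ℚ_[p]) (t : ℚ_[p]) (v : Fin m → ℚ_[p]) :
    polyEval a (t • v) = polyEval (fun α => t ^ (∑ i, (α.1 i : ℕ)) * a α) v := by
  unfold polyEval mon
  refine Finset.sum_congr rfl fun α _ => ?_
  simp only [Pi.smul_apply, smul_eq_mul, mul_pow, Finset.prod_mul_distrib,
    Finset.prod_pow_eq_pow_sum]
  ring

/-- The substitution `u = t • v` shrinks the coefficient norm by at most `‖t‖ ^ k`. -/
theorem pow_mul_norm_le_norm_scaled (a : MIdx m k → ℚ_[p]) (t : ℚ_[p]) (ht : ‖t‖ ≤ 1) :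
    ‖t‖ ^ k * ‖a‖ ≤ ‖fun α : MIdx m k => t ^ (∑ i, (α.1 i : ℕ)) * a α‖ := by
  rcases isEmpty_or_nonempty (MIdx m k) with hem | hne
  · rw [Subsingleton.elim a 0]; simp
  · obtain ⟨α, hα⟩ := Finite.exists_max fun α => ‖a α‖
    calc ‖t‖ ^ k * ‖a‖ ≤ ‖t‖ ^ (∑ i, (α.1 i : ℕ)) * ‖a α‖ := by
          refine mul_le_mul (pow_le_pow_of_le_one (norm_nonneg _) ht α.2)
            ((pi_norm_le_iff_of_nonneg (norm_nonneg _)).2 hα) (norm_nonneg _) (by positivity)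
      _ = ‖t ^ (∑ i, (α.1 i : ℕ)) * a α‖ := by rw [norm_mul, norm_pow]
      _ ≤ _ := norm_le_pi_norm (fun α : MIdx m k => t ^ (∑ i, (α.1 i : ℕ)) * a α) α

end Poly

/-! ### Uniform Taylor expansion -/

section Taylor
open scoped NNReal ENNReal

/-- The Taylor remainder of an analytic function is bounded uniformly as the centre varies. -/
theorem exists_uniform_remainder {𝕜 E F : Type*} [NontriviallyNormedField 𝕜]
    [NormedAddCommGroup E] [NormedSpace 𝕜 E] [NormedAddCommGroup F] [NormedSpace 𝕜 F]
    [CompleteSpace F] {f : E → F} {P : FormalMultilinearSeries 𝕜 E F} {x₀ : E} {R : ℝ≥0∞}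
    (hf : HasFPowerSeriesOnBall f P x₀ R) (n : ℕ) :
    ∃ M ρ : ℝ, 0 ≤ M ∧ 0 < ρ ∧ ∀ y u : E, ‖y‖ ≤ ρ → ‖u‖ ≤ ρ →
      ‖f (x₀ + y + u) - ∑ j : Fin n, P.changeOrigin y j (fun _ => u)‖ ≤ M * ‖u‖ ^ n := by
  obtain ⟨ρ, hρ0, hρ⟩ : ∃ ρ : ℝ≥0, 0 < ρ ∧ (ρ + ρ : ℝ≥0∞) < R := by
    obtain ⟨ρ, h1, h2⟩ := ENNReal.lt_iff_exists_nnreal_btwn.1 (ENNReal.half_pos hf.r_pos.ne')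
    refine ⟨ρ, by exact_mod_cast h1, ?_⟩
    calc (ρ + ρ : ℝ≥0∞) < R / 2 + R / 2 := ENNReal.add_lt_add h2 h2
      _ = R := ENNReal.add_halves R
  have hsum := NNReal.summable_sigma.1 (P.changeOriginSeries_summable_aux₁ (hρ.trans_le hf.r_le))
  set A : ℕ → ℝ≥0 := fun j => ∑' s : Σ l : ℕ, { s : Finset (Fin (j + l)) // s.card = l },
    ‖P (j + s.1)‖₊ * ρ ^ s.1 * ρ ^ j with hA
  have hAs : Summable A := hsum.2
  have hρR : (ρ : ℝ≥0∞) < P.radius := (le_add_right le_rfl).trans_lt (hρ.trans_le hf.r_le)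
  have hq : ∀ y : E, ‖y‖ ≤ ρ → ∀ j, ‖P.changeOrigin y j‖ * (ρ : ℝ) ^ j ≤ A j := by
    intro y hy j
    have hy' : ‖y‖₊ ≤ ρ := hy
    have h1 : ‖P.changeOrigin y j‖₊ * ρ ^ j ≤ A j := by
      rw [hA]
      simp only [NNReal.tsum_mul_right]
      gcongr
      refine (P.nnnorm_changeOrigin_le j
        (lt_of_le_of_lt (by exact_mod_cast hy') hρR)).trans ?_
      refine Summable.tsum_le_tsum (fun s => by gcongr) ?_ (P.changeOriginSeries_summable_aux₂ hρR j)
      exact P.changeOriginSeries_summable_aux₂ (lt_of_le_of_lt (by exact_mod_cast hy') hρR) j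
    exact_mod_cast h1
  have hA2 : Summable fun j => (A (j + n) : ℝ) := by
    exact (summable_nat_add_iff n).2 (NNReal.summable_coe.2 hAs)
  refine ⟨(∑' j, (A (j + n) : ℝ)) * ((ρ : ℝ) ^ n)⁻¹, ρ, by positivity, by exact_mod_cast hρ0, ?_⟩
  intro y u hy hu
  have hye : ‖y‖ₑ ≤ ρ := by
    rw [enorm_le_coe]; exact hy
  have hue : ‖u‖ₑ ≤ ρ := by
    rw [enorm_le_coe]; exact hu
  have hyR : ‖y‖ₑ < R := hye.trans_lt ((le_add_right le_rfl).trans_lt hρ)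
  have hS := (hf.changeOrigin (y := y) hyR).hasSum (y := u) (by
    rw [mem_eball_zero_iff, lt_tsub_iff_right]
    exact (add_le_add hue hye).trans_lt hρ)
  have hS2 := (hasSum_nat_add_iff' n).2 hS
  rw [Finset.sum_range] at hS2
  have hB := (hA2.hasSum.mul_right ((ρ : ℝ) ^ n)⁻¹).mul_right (‖u‖ ^ n)
  refine hS2.norm_le_of_bounded hB fun j => ?_
  have hρ' : (0 : ℝ) < ρ := by exact_mod_cast hρ0
  calc ‖P.changeOrigin y (j + n) fun _ => u‖
      ≤ ‖P.changeOrigin y (j + n)‖ * ‖u‖ ^ (j + n) := by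
        simpa using (P.changeOrigin y (j + n)).le_opNorm (fun _ => u)
    _ = ‖P.changeOrigin y (j + n)‖ * (‖u‖ ^ j * ‖u‖ ^ n) := by rw [pow_add]
    _ ≤ ‖P.changeOrigin y (j + n)‖ * ((ρ : ℝ) ^ j * ‖u‖ ^ n) := by gcongr
    _ = ‖P.changeOrigin y (j + n)‖ * (ρ : ℝ) ^ (j + n) * ((ρ : ℝ) ^ n)⁻¹ * ‖u‖ ^ n := by
        rw [pow_add]; field_simp
    _ ≤ _ := by gcongr; exact hq y hy _

variable {p : ℕ} [Fact p.Prime] {m : ℕ}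

/-- The exponent vector of the monomial `∏ l, u (σ l)`. -/
def idx {m k : ℕ} (j : Fin (k + 1)) (σ : Fin j → Fin m) : MIdx m k :=
  ⟨fun i => ⟨(Finset.univ.filter fun l => σ l = i).card,
      Nat.lt_succ_of_le (((Finset.card_le_univ _).trans_eq (Fintype.card_fin _)).trans
        (Nat.le_of_lt_succ j.2))⟩, by
    have := Finset.card_eq_sum_card_fiberwise (s := Finset.univ) (t := Finset.univ) (f := σ)
      (fun _ _ => Finset.mem_coe.2 (Finset.mem_univ _))
    rw [Finset.card_univ, Fintype.card_fin] at this
    exact this.symm.le.trans (Nat.le_of_lt_succ j.2)⟩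

theorem mon_idx {k : ℕ} (j : Fin (k + 1)) (σ : Fin j → Fin m) (u : Fin m → ℚ_[p]) :
    mon (idx j σ) u = ∏ l, u (σ l) := by
  unfold mon idx
  rw [← Finset.prod_fiberwise' Finset.univ σ u]
  simp only [Finset.prod_const]

/-- A sum of homogeneous terms `q j (u, …, u)`, `j ≤ k`, expanded in the standard basis. -/
theorem sum_apply_eq_polyEval (k : ℕ) (q : (j : Fin (k + 1)) →
      ContinuousMultilinearMap ℚ_[p] (fun _ : Fin j => (Fin m → ℚ_[p])) ℚ_[p])
    (u : Fin m → ℚ_[p]) :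
    ∑ j, q j (fun _ => u) = polyEval (fun α => ∑ j : Fin (k + 1), ∑ σ : Fin j → Fin m,
      if idx j σ = α then q j (fun l => Pi.single (σ l) 1) else 0) u := by
  unfold polyEval
  simp only [Finset.sum_mul]
  rw [Finset.sum_comm]
  refine Finset.sum_congr rfl fun j _ => ?_
  rw [Finset.sum_comm]
  have hu : u = ∑ i, u i • (Pi.single i (1 : ℚ_[p]) : Fin m → ℚ_[p]) := by
    funext i
    simp [Finset.sum_apply, Pi.single_apply]
  conv_lhs => rw [hu]
  rw [ContinuousMultilinearMap.map_sum]
  refine Finset.sum_congr rfl fun σ _ => ?_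
  rw [ContinuousMultilinearMap.map_smul_univ]
  simp only [ite_mul, zero_mul, Finset.sum_ite_eq, Finset.mem_univ, if_true, mon_idx, smul_eq_mul]
  ring

/-- Taylor expansion to order `k` in coordinates, at all centres `z` near `x₀` simultaneously: the
coefficients depend continuously on `z` at `x₀`, and the remainder is uniform in `z`. -/
theorem exists_taylor {f : (Fin m → ℚ_[p]) → ℚ_[p]} {x₀ : Fin m → ℚ_[p]}
    (hf : AnalyticAt ℚ_[p] f x₀) (k : ℕ) :
    ∃ (b : (Fin m → ℚ_[p]) → MIdx m k → ℚ_[p]) (M ρ : ℝ), 0 ≤ M ∧ 0 < ρ ∧ ContinuousAt b x₀ ∧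
      ∀ z u : Fin m → ℚ_[p], ‖z - x₀‖ ≤ ρ → ‖u‖ ≤ ρ →
        ‖f (z + u) - polyEval (b z) u‖ ≤ M * ‖u‖ ^ (k + 1) := by
  obtain ⟨P, R, hP⟩ := hf
  obtain ⟨M, ρ, hM, hρ, h⟩ := exists_uniform_remainder hP (k + 1)
  refine ⟨fun z α => ∑ j : Fin (k + 1), ∑ σ : Fin j → Fin m,
      if idx j σ = α then P.changeOrigin (z - x₀) j (fun l => Pi.single (σ l) 1) else 0,
    M, ρ, hM, hρ, ?_, ?_⟩
  · refine continuousAt_pi.2 fun α => ?_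
    refine tendsto_finsetSum _ fun j _ => tendsto_finsetSum _ fun σ _ => ?_
    split_ifs
    · have h1 : ContinuousAt (fun y => P.changeOrigin y j) (x₀ - x₀) := by
        rw [sub_self]
        exact (P.analyticAt_changeOrigin (hP.r_pos.trans_le hP.r_le) j).continuousAt
      have h2 : ContinuousAt (fun z => P.changeOrigin (z - x₀) j) x₀ :=
        ContinuousAt.comp (f := fun z => z - x₀) h1 (by fun_prop)
      exact ((ContinuousMultilinearMap.apply ℚ_[p] (fun _ : Fin j => (Fin m → ℚ_[p])) ℚ_[p]
        (fun l => Pi.single (σ l) 1)).continuous.continuousAt).comp h2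
    · exact tendsto_const_nhds
  · intro z u hz hu
    have := h (z - x₀) u hz hu
    rw [add_sub_cancel] at this
    rwa [sum_apply_eq_polyEval k (fun j => P.changeOrigin (z - x₀) j) u] at this

/-- An analytic function vanishing to infinite order at a point vanishes near it. -/
theorem eventually_eq_zero_of_isBigO {f : (Fin m → ℚ_[p]) → ℚ_[p]} {x₀ : Fin m → ℚ_[p]}
    (hf : AnalyticAt ℚ_[p] f x₀)
    (h : ∀ k : ℕ, (fun u => f (x₀ + u)) =O[nhds 0] fun u => ‖u‖ ^ (k + 1)) :
    ∀ᶠ x in nhds x₀, f x = 0 := by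
  obtain ⟨P, hP⟩ := hf
  have hzero : ∀ n, ∀ u, P n (fun _ => u) = 0 := by
    intro n
    induction n using Nat.strong_induction_on with
    | _ n ih =>
      have h1 := hP.isBigO_sub_partialSum_pow (n + 1)
      have h2 := (h n).sub h1
      refine Asymptotics.IsBigO.continuousMultilinearMap_apply_eq_zero (h2.congr_left fun u => ?_)
      rw [sub_sub_cancel, FormalMultilinearSeries.partialSum, Finset.sum_range_succ,
        Finset.sum_eq_zero (fun j hj => ih j (Finset.mem_range.1 hj) u), zero_add]
  have := hP.eventually_hasSum_sub
  filter_upwards [this] with x hx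
  simp only [hzero] at hx
  exact hx.unique hasSum_zero

end Taylor

/-! ### Linear combinations of a family of analytic functions -/

section Family
variable {p : ℕ} [Fact p.Prime] {m : ℕ} {ι : Type*} [Fintype ι]

/-- For linearly independent analytic functions, the order of vanishing at `x₀` of nonzero linear
combinations is bounded: the spaces of combinations vanishing to order `k` form a decreasing
sequence of subspaces of a finite-dimensional space with trivial intersection. -/
theorem exists_order_bound (F : ι → (Fin m → ℚ_[p]) → ℚ_[p]) (x₀ : Fin m → ℚ_[p])
    (hF : ∀ i, AnalyticAt ℚ_[p] (F i) x₀)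
    (hind : ∀ c : ι → ℚ_[p], (∀ᶠ x in nhds x₀, ∑ i, c i * F i x = 0) → c = 0) :
    ∃ k : ℕ, ∀ c : ι → ℚ_[p],
      ((fun u => ∑ i, c i * F i (x₀ + u)) =O[nhds 0] fun u => ‖u‖ ^ (k + 1)) → c = 0 := by
  let W : ℕ → Submodule ℚ_[p] (ι → ℚ_[p]) := fun k =>
    { carrier := {c | (fun u => ∑ i, c i * F i (x₀ + u)) =O[nhds 0] fun u => ‖u‖ ^ (k + 1)}
      zero_mem' := by
        simpa using Asymptotics.isBigO_zero _ _
      add_mem' := by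
        intro c d hc hd
        refine (Asymptotics.IsBigO.add hc hd).congr_left fun u => ?_
        simp [add_mul, Finset.sum_add_distrib]
      smul_mem' := by
        intro t c hc
        refine (Asymptotics.IsBigO.const_mul_left hc t).congr_left fun u => ?_
        simp [Finset.mul_sum, mul_assoc] }
  have hW : Antitone W := by
    intro k l hkl c hc
    refine Asymptotics.IsBigO.trans (show _ =O[nhds 0] fun u => ‖u‖ ^ (l + 1) from hc) ?_
    refine Asymptotics.IsBigO.of_bound 1 ?_
    filter_upwards [Metric.closedBall_mem_nhds (0 : Fin m → ℚ_[p]) one_pos] with u hu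
    rw [mem_closedBall_zero_iff] at hu
    rw [one_mul, norm_pow, norm_pow, norm_norm]
    exact pow_le_pow_of_le_one (norm_nonneg _) hu (by omega)
  obtain ⟨k, hk⟩ := IsArtinian.monotone_stabilizes
    (⟨fun k => OrderDual.toDual (W k), fun _ _ h => hW h⟩ :
      ℕ →o (Submodule ℚ_[p] (ι → ℚ_[p]))ᵒᵈ)
  refine ⟨k, fun c hc => hind c ?_⟩
  have hcl : ∀ l, c ∈ W l := by
    intro l
    rcases le_total k l with hkl | hkl
    · have : W k = W l := OrderDual.toDual.injective (hk l hkl)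
      rw [← this]; exact hc
    · exact hW hkl hc
  refine eventually_eq_zero_of_isBigO ?_ fun l => hcl l
  exact Finset.analyticAt_fun_sum _ fun i _ => analyticAt_const.mul (hF i)

theorem polyEval_sum_smul {k : ℕ} (c : ι → ℚ_[p]) (b : ι → MIdx m k → ℚ_[p])
    (u : Fin m → ℚ_[p]) :
    polyEval (∑ i, c i • b i) u = ∑ i, c i * polyEval (b i) u := by
  unfold polyEval
  simp only [Finset.sum_apply, Pi.smul_apply, smul_eq_mul, Finset.sum_mul, Finset.mul_sum]
  rw [Finset.sum_comm]
  simp only [mul_assoc]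

/-- Near `x₀` every combination `∑ cᵢ Fᵢ` is a polynomial of degree at most `k`, one of whose
coefficients is at least of the order of `‖c‖`, up to a remainder of order `k + 1`. All constants
are independent of `c` and of the centre `z`. -/
theorem exists_uniform_taylor (F : ι → (Fin m → ℚ_[p]) → ℚ_[p]) (x₀ : Fin m → ℚ_[p])
    (hF : ∀ i, AnalyticAt ℚ_[p] (F i) x₀)
    (hind : ∀ c : ι → ℚ_[p], (∀ᶠ x in nhds x₀, ∑ i, c i * F i x = 0) → c = 0) :
    ∃ (k : ℕ) (δ M ρ : ℝ) (a : (Fin m → ℚ_[p]) → (ι → ℚ_[p]) → MIdx m k → ℚ_[p]),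
      0 < δ ∧ 0 ≤ M ∧ 0 < ρ ∧ ∀ z, ‖z - x₀‖ ≤ ρ → ∀ c, δ * ‖c‖ ≤ ‖a z c‖ ∧
        ∀ u, ‖u‖ ≤ ρ →
          ‖∑ i, c i * F i (z + u) - polyEval (a z c) u‖ ≤ M * ‖c‖ * ‖u‖ ^ (k + 1) := by
  obtain ⟨k, hk⟩ := exists_order_bound F x₀ hF hind
  choose b M ρ hM hρ hb hT using fun i => exists_taylor (hF i) k
  obtain ⟨ρ₀, hρ₀, hρ₀le⟩ : ∃ ρ₀ : ℝ, 0 < ρ₀ ∧ ∀ i, ρ₀ ≤ ρ i := by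
    rcases isEmpty_or_nonempty ι with h | h
    · exact ⟨1, one_pos, fun i => h.elim i⟩
    · obtain ⟨i, hi⟩ := Finite.exists_min ρ
      exact ⟨ρ i, hρ i, hi⟩
  have hrem : ∀ z u : Fin m → ℚ_[p], ‖z - x₀‖ ≤ ρ₀ → ‖u‖ ≤ ρ₀ → ∀ c : ι → ℚ_[p],
      ‖∑ i, c i * F i (z + u) - polyEval (∑ i, c i • b i z) u‖ ≤
        (∑ i, M i) * ‖c‖ * ‖u‖ ^ (k + 1) := by
    intro z u hz hu c
    rw [polyEval_sum_smul, ← Finset.sum_sub_distrib, Finset.sum_mul, Finset.sum_mul]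
    refine norm_sum_le_of_le _ fun i _ => ?_
    rw [← mul_sub, norm_mul]
    calc ‖c i‖ * ‖F i (z + u) - polyEval (b i z) u‖ ≤ ‖c‖ * (M i * ‖u‖ ^ (k + 1)) := by
          gcongr
          · exact norm_le_pi_norm c i
          · exact hT i z u (hz.trans (hρ₀le i)) (hu.trans (hρ₀le i))
      _ = _ := by ring
  let L : (ι → ℚ_[p]) →ₗ[ℚ_[p]] (MIdx m k → ℚ_[p]) :=
    ∑ i, (LinearMap.proj i).smulRight (b i x₀)
  have hL : ∀ c, L c = ∑ i, c i • b i x₀ := by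
    intro c; simp [L]
  have hker : LinearMap.ker L = ⊥ := by
    refine LinearMap.ker_eq_bot'.2 fun c hc => hk c ?_
    refine Asymptotics.IsBigO.of_bound ((∑ i, M i) * ‖c‖) ?_
    filter_upwards [Metric.closedBall_mem_nhds (0 : Fin m → ℚ_[p]) hρ₀] with u hu
    rw [mem_closedBall_zero_iff] at hu
    have := hrem x₀ u (by simpa using hρ₀.le) hu c
    rw [← hL, hc] at this
    simpa [polyEval] using this
  obtain ⟨K, hK0', hLle⟩ : ∃ K : ℝ, 0 < K ∧ ∀ c, ‖c‖ ≤ K * ‖L c‖ := by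
    obtain ⟨K, hK0, hK⟩ := L.exists_antilipschitzWith hker
    exact ⟨K, by exact_mod_cast hK0, fun c => hK.le_mul_norm (map_zero L) c⟩
  set e : ℝ := (2 * K * (Fintype.card ι + 1))⁻¹ with he
  have he0 : 0 < e := by positivity
  have hev : ∀ᶠ z in nhds x₀, ∀ i, ‖b i z - b i x₀‖ < e := by
    refine Filter.eventually_all.2 fun i => ?_
    have := (hb i).eventually (Metric.ball_mem_nhds _ he0)
    simpa only [Metric.mem_ball, dist_eq_norm] using this
  obtain ⟨ρ₁, hρ₁, hball⟩ := Metric.nhds_basis_closedBall.eventually_iff.1 hev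
  refine ⟨k, (2 * K)⁻¹, ∑ i, M i, min ρ₀ ρ₁, fun z c => ∑ i, c i • b i z, by positivity,
    Finset.sum_nonneg fun i _ => hM i, lt_min hρ₀ hρ₁, fun z hz c => ⟨?_, fun u hu =>
      hrem z u (hz.trans (min_le_left _ _)) (hu.trans (min_le_left _ _)) c⟩⟩
  have hzb := hball (mem_closedBall_iff_norm.2 (hz.trans (min_le_right _ _)))
  have hdiff : ‖L c - ∑ i, c i • b i z‖ ≤ (2 * K)⁻¹ * ‖c‖ := by
    rw [hL, ← Finset.sum_sub_distrib]
    refine (norm_sum_le _ _).trans ((Finset.sum_le_card_nsmul _ _ (‖c‖ * e) fun i _ => ?_).trans ?_)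
    · rw [← smul_sub, norm_smul, norm_sub_rev]
      gcongr
      · exact norm_le_pi_norm c i
      · exact (hzb i).le
    · rw [nsmul_eq_mul, Finset.card_univ, he]
      have : (Fintype.card ι : ℝ) * (‖c‖ * (2 * K * (Fintype.card ι + 1))⁻¹) =
          (Fintype.card ι / (Fintype.card ι + 1)) * ((2 * K)⁻¹ * ‖c‖) := by
        field_simp
      rw [this]
      refine mul_le_of_le_one_left (by positivity) ?_
      rw [div_le_one (by positivity)]
      linarith
  have h1 := norm_sub_norm_le (L c) (∑ i, c i • b i z)
  have h2 : K⁻¹ * ‖c‖ ≤ ‖L c‖ := by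
    rw [inv_mul_le_iff₀ hK0']; exact hLle c
  have h3 : K⁻¹ * ‖c‖ = (2 * K)⁻¹ * ‖c‖ + (2 * K)⁻¹ * ‖c‖ := by field_simp; ring
  linarith

/-- After rescaling a small ball to the unit ball, every combination `∑ cᵢ Fᵢ` is a polynomial of
degree at most `k` up to an error which is arbitrarily small relative to its coefficients: the
coefficients shrink at most like `r ^ k`, the remainder like `r ^ (k + 1)`. -/
theorem exists_rescaled_approx (F : ι → (Fin m → ℚ_[p]) → ℚ_[p]) (x₀ : Fin m → ℚ_[p])
    (hF : ∀ i, AnalyticAt ℚ_[p] (F i) x₀)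
    (hind : ∀ c : ι → ℚ_[p], (∀ᶠ x in nhds x₀, ∑ i, c i * F i x = 0) → c = 0) :
    ∃ k : ℕ, ∀ τ : ℝ, 0 < τ → ∃ N₀ : ℕ, ∀ N, N₀ ≤ N → ∀ z, ‖z - x₀‖ ≤ ((p : ℝ) ^ N₀)⁻¹ →
      ∀ c : ι → ℚ_[p], ∃ a : MIdx m k → ℚ_[p], ∀ v, ‖v‖ ≤ 1 →
        ‖∑ i, c i * F i (z + (p : ℚ_[p]) ^ N • v) - polyEval a v‖ ≤ τ * ‖a‖ := by
  have hp : (1 : ℝ) < p := by exact_mod_cast (Fact.out : p.Prime).one_lt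
  obtain ⟨k, δ, M, ρ, a, hδ, hM, hρ, h⟩ := exists_uniform_taylor F x₀ hF hind
  refine ⟨k, fun τ hτ => ?_⟩
  obtain ⟨N₀, hN₀⟩ := exists_pow_lt_of_lt_one
    (lt_min hρ (by positivity : 0 < τ * δ / (M + 1))) (inv_lt_one_of_one_lt₀ hp)
  rw [inv_pow] at hN₀
  refine ⟨N₀, fun N hN z hz c => ?_⟩
  set t : ℚ_[p] := (p : ℚ_[p]) ^ N with ht
  have htn : ‖t‖ = ((p : ℝ) ^ N)⁻¹ := by rw [ht, norm_pow, Padic.norm_p, inv_pow]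
  have htN : ‖t‖ ≤ ((p : ℝ) ^ N₀)⁻¹ := by
    rw [htn]; gcongr; exact hp.le
  have ht1 : ‖t‖ ≤ 1 := by
    rw [htn]; exact inv_le_one_of_one_le₀ (one_le_pow₀ hp.le)
  have htτ : M * ‖t‖ ≤ τ * δ := by
    have h1 : ‖t‖ ≤ τ * δ / (M + 1) := htN.trans (hN₀.le.trans (min_le_right _ _))
    rw [le_div_iff₀ (by positivity)] at h1
    nlinarith [norm_nonneg t]
  obtain ⟨hlow, hrem⟩ := h z (hz.trans (hN₀.le.trans (min_le_left _ _))) c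
  refine ⟨fun α => t ^ (∑ i, (α.1 i : ℕ)) * a z c α, fun v hv => ?_⟩
  have htv : ‖t • v‖ ≤ ‖t‖ := by
    rw [norm_smul]; exact mul_le_of_le_one_right (norm_nonneg _) hv
  rw [← polyEval_smul]
  calc _ ≤ M * ‖c‖ * ‖t • v‖ ^ (k + 1) :=
        hrem _ (htv.trans (htN.trans (hN₀.le.trans (min_le_left _ _))))
    _ ≤ M * ‖c‖ * ‖t‖ ^ (k + 1) := by gcongr
    _ = (M * ‖t‖) * (‖t‖ ^ k * ‖c‖) := by ring
    _ ≤ (τ * δ) * (‖t‖ ^ k * ‖c‖) := by gcongr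
    _ = τ * (‖t‖ ^ k * (δ * ‖c‖)) := by ring
    _ ≤ τ * (‖t‖ ^ k * ‖a z c‖) := by gcongr
    _ ≤ _ := by gcongr; exact pow_mul_norm_le_norm_scaled _ _ ht1

/-- The main estimate for a family `F` with no nontrivial linear relation near `x₀`; the constant
function, if wanted, is a member of the family. On a ball rescaled to the unit ball the combination
is within `κ / 2 * ‖a‖` of a polynomial with coefficients `a`, so it inherits the lower bounds of
`exists_le_norm_polyEval` and `exists_closedBall_le_norm_polyEval` with `κ / 2` in place of `κ`,
and `measure_lt_pow_mul_le` applies. -/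
theorem exists_isGood [MeasurableSpace (Fin m → ℚ_[p])] [BorelSpace (Fin m → ℚ_[p])]
    (μ : Measure (Fin m → ℚ_[p])) [μ.IsAddHaarMeasure] (U : Set (Fin m → ℚ_[p])) (hU : IsOpen U)
    (F : ι → (Fin m → ℚ_[p]) → ℚ_[p]) (x₀ : Fin m → ℚ_[p]) (hx₀ : x₀ ∈ U)
    (hF : ∀ i, AnalyticOnNhd ℚ_[p] (F i) U)
    (hind : ∀ c : ι → ℚ_[p], (∀ᶠ x in nhds x₀, ∑ i, c i * F i x = 0) → c = 0) :
    ∃ (V : Set (Fin m → ℚ_[p])) (C α : ℝ),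
      V ⊆ U ∧ IsOpen V ∧ x₀ ∈ V ∧ 0 < C ∧ 0 < α ∧
      ∀ c : ι → ℚ_[p], IsGood μ C α (fun x => ‖∑ i, c i * F i x‖) V := by
  have hp : (1 : ℝ) < p := by exact_mod_cast (Fact.out : p.Prime).one_lt
  have hp0 : (p : ℚ_[p]) ≠ 0 := by exact_mod_cast (Fact.out : p.Prime).ne_zero
  obtain ⟨k, happ⟩ := exists_rescaled_approx F x₀ (fun i => hF i x₀ hx₀) hind
  obtain ⟨s, κ₁, hκ₁, hone⟩ := exists_closedBall_le_norm_polyEval p m k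
  have hs1 : ((p : ℝ) ^ s)⁻¹ ≤ 1 := inv_le_one_of_one_le₀ (one_le_pow₀ hp.le)
  obtain ⟨κ₂, hκ₂, hmany⟩ := exists_le_norm_polyEval (p := p) m k (((p : ℝ) ^ s)⁻¹) (by positivity)
  set κ := min κ₁ κ₂ with hκdef
  have hκ : 0 < κ := lt_min hκ₁ hκ₂
  obtain ⟨N₀, happ⟩ := happ (κ / 2) (half_pos hκ)
  obtain ⟨θ, hθ0, hθ1, hθ⟩ := exists_measure_diff_le μ s
  -- `B * ‖a‖` bounds the rescaled function from above and `κ / 2 * ‖a‖` bounds it from below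
  set B : ℝ := Fintype.card (MIdx m k) + κ / 2 with hB
  have hB0 : 0 < B := by positivity
  set η : ℝ := min (κ / 2 / B) (1 / 2) with hη
  have hη0 : 0 < η := by positivity
  have hη1 : η < 1 := (min_le_right _ _).trans_lt (by norm_num)
  have hηB : η * B ≤ κ / 2 := (le_div_iff₀ hB0).1 (min_le_left _ _)
  obtain ⟨r, hr, hrU⟩ := Metric.nhds_basis_closedBall.mem_iff.1 (hU.mem_nhds hx₀)
  obtain ⟨N', hN'⟩ := exists_pow_lt_of_lt_one hr (inv_lt_one_of_one_lt₀ hp)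
  rw [inv_pow] at hN'
  set N₁ := max N₀ N' with hN₁
  have hmono : ∀ {a b : ℕ}, a ≤ b → ((p : ℝ) ^ b)⁻¹ ≤ ((p : ℝ) ^ a)⁻¹ := by
    intro a b hab
    gcongr
    exact hp.le
  set V := Metric.closedBall x₀ (((p : ℝ) ^ N₁)⁻¹) with hV
  have hVU : V ⊆ U := (Metric.closedBall_subset_closedBall
    ((hmono (le_max_right _ _)).trans hN'.le)).trans hrU
  have hα : η ^ (Real.log θ / Real.log η) = θ := by
    rw [Real.rpow_def_of_pos hη0, mul_div_cancel₀ _ (Real.log_neg hη0 hη1).ne, Real.exp_log hθ0]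
  have hα0 : 0 < Real.log θ / Real.log η :=
    div_pos_of_neg_of_neg (Real.log_neg hθ0 hθ1) (Real.log_neg hη0 hη1)
  refine ⟨V, θ⁻¹, Real.log θ / Real.log η, hVU,
    IsUltrametricDist.isOpen_closedBall _ (by positivity),
    Metric.mem_closedBall_self (by positivity), by positivity, hα0, fun c => ?_⟩
  refine isGood_of_decay μ x₀ N₁ η θ _ hη0 hη1 hθ0 hθ1 hα hα0 _ (fun _ => norm_nonneg _) ?_ ?_
  · refine ContinuousOn.norm (continuousOn_finsetSum _ fun i _ => continuousOn_const.mul ?_)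
    exact (hF i).continuousOn.mono hVU
  have hpn : ∀ N : ℕ, ‖(p : ℚ_[p]) ^ N‖ = ((p : ℝ) ^ N)⁻¹ := by
    intro N; rw [norm_pow, Padic.norm_p, inv_pow]
  -- the two descriptions of a ball of radius `p ^ (-(N + l))` in the rescaled coordinate
  have hscale : ∀ (N l : ℕ) (z v v' : Fin m → ℚ_[p]),
      z + (p : ℚ_[p]) ^ N • v ∈ Metric.closedBall (z + (p : ℚ_[p]) ^ N • v')
        (((p : ℝ) ^ (N + l))⁻¹) ↔ v ∈ Metric.closedBall v' (((p : ℝ) ^ l)⁻¹) := by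
    intro N l z v v'
    rw [mem_closedBall_iff_norm, mem_closedBall_iff_norm, add_sub_add_left_eq_sub, ← smul_sub,
      norm_smul, hpn, pow_add, mul_inv]
    exact mul_le_mul_iff_right₀ (by positivity)
  have hsurj : ∀ (N : ℕ) (z x : Fin m → ℚ_[p]), ∃ v, x = z + (p : ℚ_[p]) ^ N • v := by
    intro N z x
    exact ⟨((p : ℚ_[p]) ^ N)⁻¹ • (x - z), by
      rw [smul_inv_smul₀ (pow_ne_zero _ hp0), add_sub_cancel]⟩
  have hunit : ∀ (N : ℕ) (z v : Fin m → ℚ_[p]),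
      z + (p : ℚ_[p]) ^ N • v ∈ Metric.closedBall z (((p : ℝ) ^ N)⁻¹) ↔ ‖v‖ ≤ 1 := by
    intro N z v
    have := hscale N 0 z v 0
    rw [smul_zero, add_zero, add_zero, pow_zero, inv_one, mem_closedBall_zero_iff] at this
    exact this
  have hsub : ∀ v u : Fin m → ℚ_[p], ‖v‖ ≤ 1 → u ∈ Metric.closedBall v (((p : ℝ) ^ s)⁻¹) →
      ‖u‖ ≤ 1 := by
    intro v u hv hu
    have h0 : (0 : Fin m → ℚ_[p]) ∈ Metric.closedBall v 1 := by simpa using hv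
    have := Metric.closedBall_subset_closedBall hs1 hu
    rw [IsUltrametricDist.closedBall_eq_of_mem h0] at this
    simpa using this
  have hcoef : ∀ z N, N₁ ≤ N → Metric.closedBall z (((p : ℝ) ^ N)⁻¹) ⊆ V →
      ∃ a : MIdx m k → ℚ_[p],
        (∀ v, ‖v‖ ≤ 1 → η * ‖∑ i, c i * F i (z + (p : ℚ_[p]) ^ N • v)‖ ≤ κ / 2 * ‖a‖) ∧
        ∀ v, ‖v‖ ≤ 1 → κ * ‖a‖ ≤ ‖polyEval a v‖ →
          κ / 2 * ‖a‖ ≤ ‖∑ i, c i * F i (z + (p : ℚ_[p]) ^ N • v)‖ := by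
    intro z N hN hz
    have hzV := mem_closedBall_iff_norm.1 (hz (Metric.mem_closedBall_self (by positivity)))
    obtain ⟨a, ha⟩ := happ N ((le_max_left _ _).trans hN) z
      (hzV.trans (hmono (le_max_left _ _))) c
    refine ⟨a, fun v hv => ?_, fun v hv hle => ?_⟩
    · have h1 := norm_polyEval_le a v hv
      have h2 := norm_le_norm_add_norm_sub' (∑ i, c i * F i (z + (p : ℚ_[p]) ^ N • v))
        (polyEval a v)
      calc _ ≤ η * (B * ‖a‖) := by
            gcongr
            rw [hB, add_mul]
            linarith [ha v hv]
        _ = (η * B) * ‖a‖ := by ring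
        _ ≤ _ := by gcongr
    · have h2 := norm_le_norm_add_norm_sub (∑ i, c i * F i (z + (p : ℚ_[p]) ^ N • v))
        (polyEval a v)
      linarith [ha v hv]
  refine measure_lt_pow_mul_le μ (fun N => ((p : ℝ) ^ N)⁻¹) (fun N => by positivity)
    (fun _ _ h => hmono h) s N₁ η hη0.le hη1.le _ V (ENNReal.ofReal θ) hθ ?_ ?_
  · intro z N hN hz w hw x hx
    obtain ⟨a, hup, hlow⟩ := hcoef z N hN hz
    obtain ⟨w, rfl⟩ := hsurj N z w
    obtain ⟨x, rfl⟩ := hsurj N z x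
    rw [hunit] at hw hx
    obtain ⟨u, hu, hle⟩ := hmany a w hw
    refine ⟨z + (p : ℚ_[p]) ^ N • u, (hscale N s z u w).2 hu,
      (hup x hx).trans (hlow u (hsub w u hw hu) (le_trans ?_ hle))⟩
    gcongr
    exact min_le_right _ _
  · intro z N hN hz
    obtain ⟨a, hup, hlow⟩ := hcoef z N hN hz
    obtain ⟨v₀, hv₀, hle⟩ := hone a
    refine ⟨z + (p : ℚ_[p]) ^ N • v₀, (hunit N z v₀).2 hv₀, fun y hy x hx => ?_⟩
    obtain ⟨y, rfl⟩ := hsurj N z y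
    obtain ⟨x, rfl⟩ := hsurj N z x
    rw [hunit] at hx
    have hy' := (hscale N s z y v₀).1 hy
    refine (hup x hx).trans (hlow y (hsub v₀ y hv₀ hy') (le_trans ?_ (hle y hy')))
    gcongr
    exact min_le_left _ _

end Family

/-- **Corollary 4.6 (i).**  Let `f₁, …, f_n` be analytic functions from a neighbourhood
`U` of `x₀ ∈ ℚ_p^m` to `ℚ_p` such that `1, f₁, …, f_n` are linearly independent on every
neighbourhood of `x₀`.  Then there are a neighbourhood `V ⊆ U` of `x₀` and `C, α > 0`
such that every linear combination `c₀ + ∑ cᵢ fᵢ` is `(C, α)`-good on `V`. -/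
theorem linear_combinations_good
    (p : ℕ) [Fact p.Prime] (m n : ℕ)
    [MeasurableSpace (Fin m → ℚ_[p])] [BorelSpace (Fin m → ℚ_[p])]
    (μ : Measure (Fin m → ℚ_[p])) [μ.IsAddHaarMeasure]
    (hμ : μ {x : Fin m → ℚ_[p] | ∀ i, ‖x i‖ ≤ 1} = 1)
    (U : Set (Fin m → ℚ_[p])) (hU : IsOpen U)
    (x₀ : Fin m → ℚ_[p]) (hx₀ : x₀ ∈ U)
    (f : Fin n → (Fin m → ℚ_[p]) → ℚ_[p])
    (hfa : ∀ i, AnalyticOnNhd ℚ_[p] (f i) U)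
    (hnd : ∀ W ∈ nhds x₀, ∀ (c₀ : ℚ_[p]) (c : Fin n → ℚ_[p]),
      (∀ x ∈ W, c₀ + ∑ i, c i * f i x = 0) → c₀ = 0 ∧ ∀ i, c i = 0) :
    ∃ (V : Set (Fin m → ℚ_[p])) (C α : ℝ),
      V ⊆ U ∧ IsOpen V ∧ x₀ ∈ V ∧ 0 < C ∧ 0 < α ∧
      ∀ (c₀ : ℚ_[p]) (c : Fin n → ℚ_[p]),
        IsGood μ C α (fun x => ‖c₀ + ∑ i, c i * f i x‖) V := by
  -- the constant function `1` is the member of the family indexed by `none`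
  let F : Option (Fin n) → (Fin m → ℚ_[p]) → ℚ_[p] := fun o x => o.elim 1 fun i => f i x
  obtain ⟨V, C, α, hVU, hVo, hxV, hC, hα, hgood⟩ := exists_isGood μ U hU F x₀ hx₀
    (by
      rintro (_ | i)
      · exact analyticOnNhd_const
      · exact hfa i)
    (by
      intro c hc
      obtain ⟨h0, h1⟩ := hnd _ hc (c none) (fun i => c (some i)) (by
        intro x hx
        simpa [F, Fintype.sum_option] using hx)
      funext o
      rcases o with _ | i
      · exact h0
      · exact h1 i)
  refine ⟨V, C, α, hVU, hVo, hxV, hC, hα, fun c₀ c => ?_⟩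
  have := hgood fun o => o.elim c₀ c
  simpa [F, Fintype.sum_option] using this
end

section
/- Let p be a prime, U ⊆ ℚ_p^d open, and f : U → ℚ_p^n a map with ‖f(x)‖ ≤ 1 for all x ∈ U. There exists a constant C > 0, depending only on n and p, such that for every δ ∈ (0,1), every x ∈ U, and every sufficiently large Q, there exists (q,q₀) ∈ ℤ^n×ℤ \ {0} with |q·f(x)+q₀|_p < Cδ²Q^{-n-1}, |q_i|_∞ < δ^{-1}Q for i = 0,1,…,n, and |q_i|_p < δ for i = 2,…,n. -/
/-!
The proof is the pigeonhole principle. Let `t` be the least exponent with `p ^ (-t) < δ`, so that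
`p ^ t ≤ p / δ`. Consider integer vectors whose entries lie in `[0, δ⁻¹ Q)`, those indexed by `i ≠ 0`
in the vector `q` being moreover multiples of `p ^ t`. Their number is some
`N ≥ (Q / δ) ^ 2 * (Q / p) ^ (n - 1)`. As `‖f x‖ ≤ 1`, the form `q ↦ q · f(x) + q₀` takes
values in `ℤ_[p]`; reducing it modulo `p ^ k`, where `p ^ k < N ≤ p ^ (k + 1)`, two vectors collide.
Their difference is a nonzero solution: its value has norm at most
`p ^ (-k) ≤ p / N ≤ p ^ n * δ ^ 2 / Q ^ (n + 1)`. Hence `C = p ^ (n + 1)` works, for all `Q ≥ 1`.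
-/

/-- Pigeonhole for a `p`-adic linear form: if a box of nonnegative integer vectors
`(w i * a i)ᵢ, b` with `a i < m i` and `b < m'` has more than `p ^ k` points, the difference of two
of them makes the form `z ↦ z.1 · y + z.2` divisible by `p ^ k`. -/
lemma exists_small_form (p : ℕ) [Fact p.Prime] {n : ℕ} (y : Fin n → ℤ_[p]) (w m : Fin n → ℕ)
    (m' k : ℕ) (hk : p ^ k < (∏ i, m i) * m') :
    ∃ (a : Fin n → ℤ) (b : ℤ), (a ≠ 0 ∨ b ≠ 0) ∧
      ‖(∑ i, (((w i : ℤ) * a i : ℤ) : ℤ_[p]) * y i) + (b : ℤ_[p])‖ ≤ (p : ℝ) ^ (-k : ℤ) ∧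
      (∀ i, |a i| < m i) ∧ |b| < m' := by
  classical
  have : NeZero (p ^ k) := ⟨pow_ne_zero _ (Fact.out : p.Prime).ne_zero⟩
  let F : ((i : Fin n) → Fin (m i)) × Fin m' → ℤ_[p] := fun z =>
    (∑ i, ((w i : ℤ_[p]) * ((z.1 i : ℕ) : ℤ_[p])) * y i) + ((z.2 : ℕ) : ℤ_[p])
  obtain ⟨u, v, huv, h⟩ := Fintype.exists_ne_map_eq_of_card_lt
    (fun z => PadicInt.toZModPow (p := p) k (F z)) (by simpa [ZMod.card] using hk)
  refine ⟨fun i => ((u.1 i : ℕ) : ℤ) - ((v.1 i : ℕ) : ℤ), ((u.2 : ℕ) : ℤ) - ((v.2 : ℕ) : ℤ),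
    ?_, ?_, ?_, ?_⟩
  · by_contra! hc
    apply huv
    refine Prod.ext (funext fun i => Fin.ext ?_) (Fin.ext ?_)
    · have := congrFun hc.1 i
      simp only [Pi.zero_apply] at this
      omega
    · have := hc.2
      omega
  · rw [PadicInt.norm_le_pow_iff_mem_span_pow, ← PadicInt.ker_toZModPow, RingHom.mem_ker]
    have e : (∑ i, (((w i : ℤ) * (((u.1 i : ℕ) : ℤ) - ((v.1 i : ℕ) : ℤ)) : ℤ) : ℤ_[p]) * y i)
        + ((((u.2 : ℕ) : ℤ) - ((v.2 : ℕ) : ℤ) : ℤ) : ℤ_[p]) = F u - F v := by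
      simp only [F]
      push_cast
      rw [add_sub_add_comm, ← Finset.sum_sub_distrib]
      congr 1
      exact Finset.sum_congr rfl fun i _ => by ring
    rw [e, map_sub, sub_eq_zero]
    exact h
  · intro i
    have h1 := (u.1 i).2
    have h2 := (v.1 i).2
    dsimp only
    rw [abs_lt]
    constructor <;> omega
  · have h1 := u.2.2
    have h2 := v.2.2
    rw [abs_lt]
    constructor <;> omega

/-- An integer below `⌈X⌉₊` in absolute value is strictly below `X`. -/
lemma abs_cast_lt_of_lt_ceil {a : ℤ} {X : ℝ} (h : |a| < (⌈X⌉₊ : ℤ)) : |(a : ℝ)| < X := by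
  have h1 : a.natAbs < ⌈X⌉₊ := by
    rw [Int.abs_eq_natAbs] at h
    exact_mod_cast h
  have h2 := Nat.lt_ceil.1 h1
  rwa [Nat.cast_natAbs, Int.cast_abs] at h2


/-- **Dirichlet-principle step in the proof of Theorem 1.5.**  Let `f : U → ℚ_p^n` be a
map on an open `U ⊆ ℚ_p^d` with `‖f(x)‖ ≤ 1` on `U`.  There is a constant `C > 0`,
depending only on `n` and `p`, such that for every `δ ∈ (0,1)`, every `x ∈ U` and every
sufficiently large `Q`, the system `|q·f(x)+q₀|_p < Cδ²Q^{-n-1}`, `|q_i|_∞ < δ⁻¹Q`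
(`i = 0, 1, …, n`), `|q_i|_p < δ` (`i = 2, …, n`) has a nonzero integer solution
`(q, q₀) ∈ ℤⁿ×ℤ`. -/
theorem dirichlet_system_solvable
    (p : ℕ) [Fact p.Prime] (d n : ℕ) (hn : 0 < n) :
    ∃ C : ℝ, 0 < C ∧
      ∀ (U : Set (Fin d → ℚ_[p])) (f : (Fin d → ℚ_[p]) → (Fin n → ℚ_[p])),
        IsOpen U → (∀ x ∈ U, ∀ i, ‖f x i‖ ≤ 1) →
        ∀ δ : ℝ, 0 < δ → δ < 1 → ∀ x ∈ U, ∃ Q₀ : ℝ, ∀ Q : ℝ, Q₀ ≤ Q →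
          ∃ q : (Fin n → ℤ) × ℤ, q ≠ 0 ∧
            ‖(∑ i, (q.1 i : ℚ_[p]) * f x i) + (q.2 : ℚ_[p])‖ < C * δ ^ 2 / Q ^ (n + 1) ∧
            (∀ i, |(q.1 i : ℝ)| < δ⁻¹ * Q) ∧ |(q.2 : ℝ)| < δ⁻¹ * Q ∧
            ∀ i : Fin n, i ≠ ⟨0, hn⟩ → ‖(q.1 i : ℚ_[p])‖ < δ := by
  have hp : p.Prime := Fact.out
  have hp0 : (0 : ℝ) < p := by exact_mod_cast hp.pos
  have hp1 : (1 : ℝ) < p := by exact_mod_cast hp.one_lt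
  refine ⟨(p : ℝ) ^ (n + 1), by positivity, ?_⟩
  intro U f _ hf δ hδ hδ1 x hx
  refine ⟨1, fun Q hQ => ?_⟩
  have hQ0 : 0 < Q := by linarith
  obtain ⟨s, hs1, hs2⟩ := exists_nat_pow_near ((one_le_inv₀ hδ).2 hδ1.le) hp1
  obtain ⟨n, rfl⟩ : ∃ r, n = r + 1 := ⟨n - 1, by omega⟩
  let w : Fin (n + 1) → ℕ := fun i => if i = 0 then 1 else p ^ (s + 1)
  have hw : ∀ i, 0 < w i := fun i => by
    simp only [w]; split_ifs
    · exact one_pos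
    · exact pow_pos hp.pos _
  let m : Fin (n + 1) → ℕ := fun i => ⌈δ⁻¹ * Q / w i⌉₊
  let N : ℕ := (∏ i, m i) * ⌈δ⁻¹ * Q⌉₊
  have hX1 : 1 < δ⁻¹ * Q := by
    have := (one_lt_inv₀ hδ).2 hδ1
    nlinarith
  have hN : (δ⁻¹ * Q) ^ 2 * (Q / p) ^ n ≤ N := by
    have h0 : δ⁻¹ * Q ≤ (m 0 : ℝ) := by
      have := Nat.le_ceil (δ⁻¹ * Q / w 0)
      simpa [m, w] using this
    have h1 : ∀ i : Fin n, Q / p ≤ (m i.succ : ℝ) := fun i => by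
      refine le_trans ?_ (Nat.le_ceil _)
      simp only [w, Fin.succ_ne_zero, if_false, Nat.cast_pow]
      rw [div_le_div_iff₀ hp0 (by positivity), pow_succ]
      have := mul_le_mul_of_nonneg_right hs1 (by positivity : 0 ≤ Q * p)
      nlinarith
    have h2 : (Q / p) ^ n ≤ ∏ i : Fin n, (m i.succ : ℝ) := by
      calc (Q / p) ^ n = ∏ _i : Fin n, Q / (p : ℝ) := by
            rw [Finset.prod_const, Finset.card_univ, Fintype.card_fin]
        _ ≤ _ := Finset.prod_le_prod (fun _ _ => by positivity) fun i _ => h1 i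
    have h3 := Nat.le_ceil (δ⁻¹ * Q)
    have hpos : 0 ≤ δ⁻¹ * Q := by positivity
    simp only [N, Nat.cast_mul, Nat.cast_prod]
    rw [Fin.prod_univ_succ]
    calc (δ⁻¹ * Q) ^ 2 * (Q / p) ^ n = (δ⁻¹ * Q) * (Q / p) ^ n * (δ⁻¹ * Q) := by ring
      _ ≤ _ := mul_le_mul (mul_le_mul h0 h2 (by positivity) (Nat.cast_nonneg _)) h3 hpos
          (mul_nonneg (Nat.cast_nonneg _) (Finset.prod_nonneg fun _ _ => Nat.cast_nonneg _))
  have hN2 : 2 ≤ N := by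
    have hpi : 0 < ∏ i, m i := Finset.prod_pos fun i _ =>
      Nat.ceil_pos.2 (div_pos (by linarith) (by exact_mod_cast hw i))
    have hc : 1 < ⌈δ⁻¹ * Q⌉₊ := Nat.lt_ceil.2 (by exact_mod_cast hX1)
    exact hc.trans_le (Nat.le_mul_of_pos_left _ hpi)
  -- `p ^ k < N ≤ p ^ (k + 1)`
  obtain ⟨k, hk1, hk2⟩ : ∃ k, p ^ k < N ∧ N ≤ p ^ (k + 1) := by
    refine ⟨Nat.log p (N - 1), ?_, ?_⟩
    · have := Nat.pow_log_le_self p (x := N - 1) (by omega)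
      omega
    · have := Nat.lt_pow_succ_log_self hp.one_lt (N - 1)
      simp only [Nat.succ_eq_add_one] at this
      omega
  obtain ⟨a, b, hab, hsm, ha, hb⟩ :=
    exists_small_form p (fun i => (⟨f x i, hf x hx i⟩ : ℤ_[p])) w m _ k hk1
  refine ⟨(fun i => (w i : ℤ) * a i, b), ?_, ?_, ?_, ?_, ?_⟩
  · intro h
    rw [Prod.ext_iff] at h
    rcases hab with h' | h'
    · apply h'
      funext i
      have := congrFun h.1 i
      simpa [(hw i).ne'] using this
    · exact h' h.2
  · have e : ‖(∑ i, (((w i : ℤ) * a i : ℤ) : ℚ_[p]) * f x i) + (b : ℚ_[p])‖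
        ≤ (p : ℝ) ^ (-k : ℤ) := by
      convert hsm using 1
      rw [PadicInt.norm_def]
      congr 1
      push_cast [PadicInt.coe_sum]
      rfl
    refine e.trans_lt ?_
    rw [zpow_neg, zpow_natCast, inv_lt_iff_one_lt_mul₀ (by positivity), div_mul_eq_mul_div,
      one_lt_div (by positivity)]
    have hk2' : (N : ℝ) ≤ (p : ℝ) ^ (k + 1) := by exact_mod_cast hk2
    have h4 := hN.trans hk2'
    have h5 : Q ^ (n + 1 + 1) ≤ (p : ℝ) ^ (k + 1) * (δ ^ 2 * (p : ℝ) ^ n) := by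
      calc Q ^ (n + 1 + 1) = (δ⁻¹ * Q) ^ 2 * (Q / p) ^ n * (δ ^ 2 * (p : ℝ) ^ n) := by
            rw [div_pow]
            field_simp
            ring
        _ ≤ _ := by gcongr
    calc Q ^ (n + 1 + 1) ≤ (p : ℝ) ^ (k + 1) * (δ ^ 2 * (p : ℝ) ^ n) := h5
      _ < (p : ℝ) ^ (k + 1) * (δ ^ 2 * (p : ℝ) ^ n) * p := lt_mul_of_one_lt_right (by positivity) hp1
      _ = _ := by ring
  · intro i
    have h1 := abs_cast_lt_of_lt_ceil (ha i)
    have hwi : (0 : ℝ) < w i := by exact_mod_cast hw i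
    rw [lt_div_iff₀ hwi] at h1
    push_cast
    rw [abs_mul, abs_of_pos hwi, mul_comm]
    exact h1
  · exact abs_cast_lt_of_lt_ceil hb
  · intro i hi
    have hwi : w i = p ^ (s + 1) := if_neg hi
    simp only [hwi]
    push_cast
    rw [norm_mul, norm_pow, Padic.norm_p, inv_pow]
    calc ((p : ℝ) ^ (s + 1))⁻¹ * ‖(a i : ℚ_[p])‖ ≤ ((p : ℝ) ^ (s + 1))⁻¹ * 1 := by
          gcongr
          exact Padic.norm_int_le_one _
      _ < δ := by
          rw [mul_one]
          exact inv_lt_of_inv_lt₀ hδ hs2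
end
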